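/- arXiv:1607.06573 — 12 statements merged into one kernel-verified Lean document; each statement's English description precedes it below -/
import Mathlib

section
/- Let m ≥ 14 be an integer with m ≡ 2 (mod 12). Then P_m is not almost universal; that is, the set of natural numbers n for which there exist no integers x, y, z with p_m(x) + p_m(y) + p_m(z) = n is infinite. -/
/-- The `x`-th generalized `m`-gonal number, `p_m(x) = ((m-2)x² - (m-4)x)/2`
(the division is exact). -/
def pm (m x : ℤ) : ℤ := ((m - 2) * x ^ 2 - (m - 4) * x) / 2

lemma aux_prime_dvd (q : ℕ) (hq : q.Prime) (h2 : q % 3 = 2) (a b : ℤ)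
    (h : (q : ℤ) ∣ a ^ 2 + a * b + b ^ 2) : (q : ℤ) ∣ a ∧ (q : ℤ) ∣ b := by
  have : Fact q.Prime := ⟨hq⟩
  have hqi : Prime (q : ℤ) := Nat.prime_iff_prime_int.mp hq
  have hb : (q : ℤ) ∣ b := by
    by_contra hb
    have hb0 : (b : ZMod q) ≠ 0 := by
      intro h0
      exact hb ((ZMod.intCast_zmod_eq_zero_iff_dvd b q).mp h0)
    have h0 : (a : ZMod q) ^ 2 + a * b + (b : ZMod q) ^ 2 = 0 := by
      have := (ZMod.intCast_zmod_eq_zero_iff_dvd _ q).mpr h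
      push_cast at this
      exact this
    set c : ZMod q := (a : ZMod q) / b with hc
    have hc1 : c ^ 2 + c + 1 = 0 := by
      rw [hc]; field_simp; linear_combination h0
    have hc3 : c ^ 3 = 1 := by linear_combination (c - 1) * hc1
    have hne : c ≠ 1 := by
      intro h1
      rw [h1] at hc1
      have h3 : ((3 : ℕ) : ZMod q) = 0 := by push_cast; linear_combination hc1
      have h4 := (ZMod.natCast_eq_zero_iff 3 q).mp h3
      have h5 := (Nat.prime_dvd_prime_iff_eq hq Nat.prime_three).mp h4
      omega
    have hord : orderOf c = 3 := by
      have : Fact (Nat.Prime 3) := ⟨Nat.prime_three⟩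
      exact orderOf_eq_prime hc3 hne
    have hc0 : c ≠ 0 := by
      intro h0
      rw [h0] at hc3
      simp at hc3
    have h6 : c ^ (q - 1) = 1 := ZMod.pow_card_sub_one_eq_one hc0
    have h7 := orderOf_dvd_of_pow_eq_one h6
    rw [hord] at h7
    omega
  refine ⟨?_, hb⟩
  have : (q : ℤ) ∣ a ^ 2 := by
    have h1 : a ^ 2 = (a ^ 2 + a * b + b ^ 2) - b * (a + b) := by ring
    rw [h1]
    exact dvd_sub h (Dvd.dvd.mul_right hb _)
  exact hqi.dvd_of_dvd_pow this

lemma aux_exists_prime (u : ℕ) (hu : u % 3 = 2) : ∃ q : ℕ, q.Prime ∧ q % 3 = 2 ∧ q ∣ u := by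
  induction u using Nat.strong_induction_on with
  | _ u ih =>
    have hu1 : u ≠ 1 := by omega
    obtain ⟨q, hq, w, rfl⟩ := Nat.exists_prime_and_dvd hu1
    by_cases h2 : q % 3 = 2
    · exact ⟨q, hq, h2, Dvd.intro _ rfl⟩
    · have hw : w % 3 = 2 := by
        rw [Nat.mul_mod] at hu
        have h1 : q % 3 = 0 ∨ q % 3 = 1 := by omega
        rcases h1 with h1 | h1 <;> rw [h1] at hu <;> omega
      have hlt : w < q * w := by
        have := hq.two_le
        nlinarith [show 0 < w by omega]
      obtain ⟨r, hr, hr2, hrw⟩ := ih w hlt hw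
      exact ⟨r, hr, hr2, Dvd.dvd.mul_left hrw _⟩

lemma aux_norm (u : ℕ) : ∀ (v a b : ℤ), IsCoprime (u : ℤ) v →
    (u : ℤ) * v = a ^ 2 + a * b + b ^ 2 → u % 3 ≠ 2 := by
  induction u using Nat.strong_induction_on with
  | _ u ih =>
    intro v a b hco h hu
    obtain ⟨q, hq, hq2, w, rfl⟩ := aux_exists_prime u hu
    push_cast at hco h
    have hq0 : (q : ℤ) ≠ 0 := by exact_mod_cast hq.ne_zero
    obtain ⟨⟨a', rfl⟩, ⟨b', rfl⟩⟩ := aux_prime_dvd q hq hq2 a b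
      (by rw [← h, mul_assoc]; exact Dvd.intro _ rfl)
    have h1 : (w : ℤ) * v = q * (a' ^ 2 + a' * b' + b' ^ 2) := by
      apply mul_left_cancel₀ hq0
      linear_combination h
    have hqv : IsCoprime (q : ℤ) v := hco.of_mul_left_left
    have h2 : (q : ℤ) ∣ w := hqv.dvd_of_dvd_mul_right (by rw [h1]; exact Dvd.intro _ rfl)
    obtain ⟨w', rfl⟩ := Int.natCast_dvd_natCast.mp h2
    push_cast at hco h1
    have h3 : (w' : ℤ) * v = a' ^ 2 + a' * b' + b' ^ 2 := by
      apply mul_left_cancel₀ hq0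
      linear_combination h1
    have hw : w' % 3 = 2 := by
      rw [← mul_assoc, Nat.mul_mod, Nat.mul_mod q q, hq2] at hu
      omega
    have hlt : w' < q * (q * w') := by
      have := hq.two_le
      have : 0 < w' := by omega
      nlinarith [Nat.mul_le_mul ‹2 ≤ q› ‹2 ≤ q›]
    exact ih w' hlt v a' b' hco.of_mul_left_right.of_mul_left_right h3 hw

lemma aux_norm_int (u v a b : ℤ) (hu : 0 < u) (hco : IsCoprime u v)
    (h : u * v = a ^ 2 + a * b + b ^ 2) : u % 3 ≠ 2 := by
  lift u to ℕ using hu.le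
  have := aux_norm u v a b hco h
  omega

lemma aux_pm (k x : ℤ) : pm (12 * k + 2) x = 6 * k * x ^ 2 - (6 * k - 1) * x := by
  unfold pm
  rw [show (12 * k + 2 - 2) * x ^ 2 - (12 * k + 2 - 4) * x
    = 2 * (6 * k * x ^ 2 - (6 * k - 1) * x) by ring]
  exact Int.mul_ediv_cancel_left _ (by norm_num)

lemma aux_main (k t x y z : ℤ) (p : ℕ) (hk : 1 ≤ k) (hp : p.Prime)
    (hpt : (p : ℤ) = 6 * k - 1 + 4 * k * t)
    (ht : t % 3 ≠ 0) (hkt : k % 3 ≠ 0 → (k * t) % 3 = 2)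
    (h : 6 * k * x ^ 2 - (6 * k - 1) * x + (6 * k * y ^ 2 - (6 * k - 1) * y)
      + (6 * k * z ^ 2 - (6 * k - 1) * z) = t * (6 * k - 1 + 2 * k * t)) : False := by
  have hpi : Prime (p : ℤ) := Nat.prime_iff_prime_int.mp hp
  have hp0 : (0 : ℤ) < p := by exact_mod_cast hp.pos
  obtain ⟨s, hs⟩ : ∃ s, s = x + y + z := ⟨_, rfl⟩
  obtain ⟨N, hN⟩ : ∃ N, N = (x - y) ^ 2 + (x - y) * (y - z) + (y - z) ^ 2 := ⟨_, rfl⟩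
  -- `A = p + T = 4 k (t + s)`, `B' = (p - T) / 2`
  obtain ⟨B, hB⟩ : ∃ B, B = 6 * k - 1 + 2 * k * (t - s) := ⟨_, rfl⟩
  have hsum : 4 * k * (t + s) + 2 * B = 2 * p := by rw [hB, hpt]; ring
  have hprod0 : (4 * k) * ((t + s) * B) = (4 * k) * (4 * k * N) := by
    rw [hB, hN, hs]
    linear_combination (-4 * k) * h
  have hprod : (t + s) * B = 4 * k * N := mul_left_cancel₀ (by omega) hprod0
  have hN0 : 0 ≤ N := by rw [hN]; nlinarith [sq_nonneg (x - y + (y - z)), sq_nonneg (x - y), sq_nonneg (y - z)]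
  have hBodd : B ≠ 0 := by
    intro h0
    have : 2 * (3 * k + k * (t - s)) = 1 := by rw [h0] at hB; linear_combination -hB
    omega
  have hNpos : 0 < N := by
    rcases hN0.lt_or_eq with h0 | h0
    · exact h0
    · exfalso
      have h1 : (x - y) ^ 2 = 0 := by
        nlinarith [sq_nonneg (x - y + (y - z)), sq_nonneg (x - y), sq_nonneg (y - z)]
      have h2 : (y - z) ^ 2 = 0 := by
        nlinarith [sq_nonneg (x - y + (y - z)), sq_nonneg (x - y), sq_nonneg (y - z)]
      have h1 := pow_eq_zero_iff (two_ne_zero) |>.mp h1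
      have h2 := pow_eq_zero_iff (two_ne_zero) |>.mp h2
      rw [← h0, mul_zero] at hprod
      rcases mul_eq_zero.mp hprod with h3 | h3
      · omega
      · exact hBodd h3
  have hpos : 0 < (t + s) * B := by rw [hprod]; positivity
  have hBpos : 0 < B := by
    rcases pos_and_pos_or_neg_and_neg_of_mul_pos hpos with h1 | h1
    · exact h1.2
    · nlinarith [mul_neg_of_pos_of_neg (show 0 < 4 * k by omega) h1.1]
  have hApos : 0 < t + s := (pos_iff_pos_of_mul_pos hpos).mpr hBpos
  have hBlt : B < p := by nlinarith [mul_pos (show 0 < 4 * k by omega) hApos]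
  have hcoP : IsCoprime B (p : ℤ) := by
    refine ((hpi.coprime_iff_not_dvd).mpr fun hd => ?_).symm
    have := Int.le_of_dvd hBpos hd
    omega
  have hco2 : IsCoprime B 2 := ⟨-1, 3 * k + k * (t - s), by rw [hB]; ring⟩
  have hcoA : IsCoprime B (4 * k * (t + s)) := by
    have h1 : IsCoprime B (2 * p + B * (-2)) :=
      IsCoprime.add_mul_left_right (hco2.mul_right hcoP) _
    rwa [show 2 * (p : ℤ) + B * (-2) = 4 * k * (t + s) by linear_combination -hsum] at h1
  have hcok : IsCoprime B (4 * k) := hcoA.of_mul_right_left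
  obtain ⟨C, hC⟩ : 4 * k ∣ t + s :=
    hcok.symm.dvd_of_dvd_mul_right (by rw [hprod]; exact Dvd.intro _ rfl)
  have hCpos : 0 < C := by
    rw [hC] at hApos
    exact (pos_iff_pos_of_mul_pos hApos).mp (by omega)
  have hBC : B * C = N := by
    apply mul_left_cancel₀ (show (4 * k) ≠ 0 by omega)
    rw [← hprod, hC]; ring
  have hcoC : IsCoprime B C := by
    rw [hC] at hcoA
    exact hcoA.of_mul_right_right.of_mul_right_right
  have hB3 := aux_norm_int B C _ _ hBpos hcoC (hBC.trans hN)
  have hC3 := aux_norm_int C B _ _ hCpos hcoC.symm ((mul_comm C B).trans (hBC.trans hN))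
  by_cases hk3 : k % 3 = 0
  · obtain ⟨j, hj⟩ : (3 : ℤ) ∣ k := Int.dvd_of_emod_eq_zero hk3
    apply hB3
    have : B = 3 * (6 * j + 2 * j * (t - s) - 1) + 2 := by rw [hB, hj]; ring
    omega
  · have h2 := hkt hk3
    obtain ⟨r, hr⟩ : ∃ r, k * t = 3 * r + 2 := ⟨k * t / 3, by omega⟩
    -- `s` is divisible by 3
    have hs3 : (3 : ℤ) ∣ s := by
      refine ⟨t * (2 * k + 2 * r + 1) - 2 * k * (x ^ 2 + y ^ 2 + z ^ 2) + 2 * k * s, ?_⟩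
      rw [hs]
      linear_combination h + 2 * t * hr
    obtain ⟨σ, hσ⟩ := hs3
    -- `4 k ^ 2 C = k t + k s`
    have hkk : k * k % 3 = 1 := by
      rw [Int.mul_emod]
      have : k % 3 = 1 ∨ k % 3 = 2 := by omega
      rcases this with h | h <;> rw [h] <;> norm_num
    obtain ⟨e, he⟩ : ∃ e, k * k = 3 * e + 1 := ⟨k * k / 3, by omega⟩
    apply hC3
    have : C = 3 * (r + k * σ - 4 * e * C - C) + 2 := by
      linear_combination (-k) * hC + hr + k * hσ + (-4 * C) * he
    omega

theorem not_almost_universal_of_two_mod_twelve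
    (m : ℤ) (hm : 14 ≤ m) (h12 : m % 12 = 2) :
    {n : ℕ | ¬ ∃ x y z : ℤ, pm m x + pm m y + pm m z = (n : ℤ)}.Infinite := by
  obtain ⟨k, hk, rfl⟩ : ∃ k : ℕ, 1 ≤ k ∧ m = 12 * (k : ℤ) + 2 :=
    ⟨(m / 12).toNat, by omega, by omega⟩
  obtain ⟨ε, hε, hkε⟩ : ∃ ε : ℕ, ε % 3 ≠ 0 ∧ (k % 3 ≠ 0 → (k * ε) % 3 = 2) := by
    by_cases h : k % 3 = 0
    · exact ⟨1, by norm_num, fun h' => absurd h h'⟩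
    · have h' : k % 3 = 1 ∨ k % 3 = 2 := by omega
      rcases h' with h | h
      · exact ⟨2, by norm_num, fun _ => by omega⟩
      · exact ⟨1, by norm_num, fun _ => by omega⟩
  have hco : (6 * k - 1 + 4 * k * ε).Coprime (12 * k) := by
    have hc : (6 * k - 1 + 4 * k * ε) + 1 = 2 * k * (3 + 2 * ε) := by
      have : 6 * k - 1 + 1 = 6 * k := by omega
      calc _ = (6 * k - 1 + 1) + 4 * k * ε := by ring
        _ = _ := by rw [this]; ring
    refine Nat.coprime_of_dvd fun q hq h1 h2 => ?_
    have hnk : ¬ q ∣ 2 * k := fun h => by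
      have h3 := (Nat.dvd_add_right h1).mp (hc ▸ h.mul_right _)
      exact hq.one_lt.ne' (Nat.dvd_one.mp h3)
    have h3 : q ∣ 3 := by
      have h4 : q ∣ (2 * k) * (2 * 3) := by rw [show 2 * k * (2 * 3) = 12 * k by ring]; exact h2
      rcases hq.dvd_mul.mp h4 with h5 | h5
      · exact absurd h5 hnk
      · rcases hq.dvd_mul.mp h5 with h6 | h6
        · exact absurd (h6.mul_right k) hnk
        · exact h6
    obtain rfl := (Nat.prime_dvd_prime_iff_eq hq Nat.prime_three).mp h3
    have hk3 : k % 3 ≠ 0 := fun h => hnk ((Nat.dvd_of_mod_eq_zero h).mul_left 2)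
    have h5 := hkε hk3
    have h6 : 4 * k * ε = 4 * (k * ε) := by ring
    rw [h6] at h1
    omega
  refine Set.infinite_of_not_bddAbove ?_
  rintro ⟨M, hM⟩
  obtain ⟨p, hpgt, hp, hmod⟩ := Nat.forall_exists_prime_gt_and_modEq
    (6 * k - 1 + 4 * k * ε + 12 * k * (M + 1)) (by omega : 12 * k ≠ 0) hco
  obtain ⟨j, hj⟩ : 12 * k ∣ p - (6 * k - 1 + 4 * k * ε) :=
    (Nat.modEq_iff_dvd' (by omega)).mp hmod.symm
  have hjM : M + 1 < j := by
    have : 12 * k * (M + 1) < 12 * k * j := by omega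
    exact Nat.lt_of_mul_lt_mul_left this
  have hpe : p = 6 * k - 1 + 4 * k * ε + 12 * k * j := by omega
  have hpi : (p : ℤ) = 6 * (k : ℤ) - 1 + 4 * k * ((ε : ℤ) + 3 * j) := by
    rw [hpe]
    push_cast [show 1 ≤ 6 * k by omega]
    ring
  have hmem : (ε + 3 * j) * (6 * k - 1 + 2 * k * (ε + 3 * j)) ∈
      {n : ℕ | ¬ ∃ x y z : ℤ, pm (12 * (k : ℤ) + 2) x + pm (12 * (k : ℤ) + 2) y
        + pm (12 * (k : ℤ) + 2) z = (n : ℤ)} := by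
    rintro ⟨x, y, z, h⟩
    rw [aux_pm, aux_pm, aux_pm] at h
    push_cast [show 1 ≤ 6 * k by omega] at h
    refine aux_main k (ε + 3 * j) x y z p (by omega) hp hpi (by omega) (fun h3 => ?_) h
    have h5 := hkε (by omega)
    have h6 : (k : ℤ) * (ε + 3 * j) = ((k * ε : ℕ) : ℤ) + 3 * (k * j) := by push_cast; ring
    rw [h6]
    omega
  have hle := hM hmem
  have h1 : 1 ≤ 6 * k - 1 + 2 * k * (ε + 3 * j) := by omega
  have := Nat.mul_le_mul_left (ε + 3 * j) h1
  omega
end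

section
/- Let m ≥ 4 be an integer with m ≡ 0 (mod 4). Then P_m is not almost universal; that is, the set of natural numbers n for which there exist no integers x, y, z with p_m(x) + p_m(y) + p_m(z) = n is infinite. -/
theorem three_sq_mod_eight (u v w : ℤ) : (u ^ 2 + v ^ 2 + w ^ 2) % 8 ≠ 7 := by
  have h : ∀ t : ℤ, t ^ 2 % 8 = 0 ∨ t ^ 2 % 8 = 1 ∨ t ^ 2 % 8 = 4 := by
    intro t
    have h1 : t % 8 = 0 ∨ t % 8 = 1 ∨ t % 8 = 2 ∨ t % 8 = 3 ∨ t % 8 = 4 ∨ t % 8 = 5 ∨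
      t % 8 = 6 ∨ t % 8 = 7 := by omega
    rcases h1 with h | h | h | h | h | h | h | h <;> simp [pow_two, Int.mul_emod, h]
  have := h u
  have := h v
  have := h w
  omega

theorem pm_eq (b x : ℤ) : pm (4 * b + 4) x = (2 * b + 1) * x ^ 2 - 2 * b * x := by
  unfold pm
  apply Int.ediv_eq_of_eq_mul_right (by norm_num)
  ring

theorem not_almost_universal_of_zero_mod_four
    (m : ℤ) (hm : 4 ≤ m) (h4 : m % 4 = 0) :
    {n : ℕ | ¬ ∃ x y z : ℤ, pm m x + pm m y + pm m z = (n : ℤ)}.Infinite := by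
  obtain ⟨b, rfl⟩ : ∃ b : ℕ, m = 4 * (b : ℤ) + 4 := ⟨((m - 4) / 4).toNat, by omega⟩
  apply Set.infinite_of_injective_forall_mem
    (f := fun j : ℕ => (2 * b + 1) * (7 + 5 * b ^ 2) + 8 * j)
  · intro i j h
    simp only at h
    omega
  · rintro j ⟨x, y, z, h⟩
    simp only [pm_eq] at h
    push_cast at h
    obtain ⟨c, hc⟩ : ∃ c : ℤ, (b : ℤ) * (b + 1) = 2 * c := by
      obtain ⟨c, hc⟩ := Int.even_mul_succ_self (b : ℤ)
      exact ⟨c, by linarith⟩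
    set a : ℤ := 2 * b + 1 with ha
    apply three_sq_mod_eight (a * x - b) (a * y - b) (a * z - b)
    have ha2 : a ^ 2 = 8 * c + 1 := by rw [ha]; linear_combination 4 * hc
    have key : (a * x - b) ^ 2 + (a * y - b) ^ 2 + (a * z - b) ^ 2
        = 7 + 8 * (c * (7 + 5 * b ^ 2) + a * j + b ^ 2) := by
      have hb : 2 * (b : ℤ) = a - 1 := by rw [ha]; ring
      linear_combination a * h + (7 + 5 * (b : ℤ) ^ 2) * ha2
    rw [key]
    omega
end

section
/- Let m ≥ 8 be an integer with m ≡ 0 (mod 8). Then for all integers x, y, z, one has P_m(x,y,z) ≢ 4 (mod 8). In particular, P_m represents no integer congruent to 4 modulo 8. -/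
theorem pm_values (m : ℤ) (h8 : m % 8 = 0) (x : ℤ) :
    pm m x % 8 = 0 ∨ pm m x % 8 = 1 ∨ pm m x % 8 = 5 := by
  obtain ⟨k, rfl⟩ : ∃ k, m = 8 * k := ⟨m / 8, by omega⟩
  obtain ⟨t, ht⟩ : ∃ t, x * (x - 1) = 2 * t := by
    have h := Int.even_mul_pred_self x
    obtain ⟨t, ht⟩ := h
    exact ⟨t, by omega⟩
  have e : pm (8 * k) x = 8 * (k * t) + (1 - (x - 1) ^ 2) := by
    unfold pm
    apply Int.ediv_eq_of_eq_mul_right (by norm_num)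
    linear_combination 8 * k * ht
  rw [e]
  have hq : (x - 1) ^ 2 % 8 = 0 ∨ (x - 1) ^ 2 % 8 = 1 ∨ (x - 1) ^ 2 % 8 = 4 := by
    have : (x - 1) % 8 = 0 ∨ (x - 1) % 8 = 1 ∨ (x - 1) % 8 = 2 ∨ (x - 1) % 8 = 3 ∨
      (x - 1) % 8 = 4 ∨ (x - 1) % 8 = 5 ∨ (x - 1) % 8 = 6 ∨ (x - 1) % 8 = 7 := by omega
    rcases this with h | h | h | h | h | h | h | h <;> simp [pow_two, Int.mul_emod, h]
  omega

theorem no_four_mod_eight_of_zero_mod_eight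
    (m : ℤ) (hm : 8 ≤ m) (h8 : m % 8 = 0) (x y z : ℤ) :
    (pm m x + pm m y + pm m z) % 8 ≠ 4 := by
  have hx := pm_values m h8 x
  have hy := pm_values m h8 y
  have hz := pm_values m h8 z
  omega
end

section
/- Let ℓ be a prime with ℓ ≡ 1 (mod 12). Then there exist no integers X, Y, Z with X ≡ Y ≡ Z ≡ 5 (mod 12) and X² + Y² + Z² = 3ℓ². -/
lemma exists_prime_two_mod_three (n : ℕ) (hn : n % 3 = 2) :
    ∃ q : ℕ, q.Prime ∧ q % 3 = 2 ∧ q ∣ n := by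
  induction n using Nat.strong_induction_on with
  | _ n ih =>
    have h1 : n ≠ 1 := by omega
    obtain ⟨p, hp, k, hk⟩ := Nat.exists_prime_and_dvd h1
    by_cases hp2 : p % 3 = 2
    · exact ⟨p, hp, hp2, k, hk⟩
    · have hk2 : k % 3 = 2 := by
        have hm : (p * k) % 3 = 2 := by rw [← hk]; exact hn
        rw [Nat.mul_mod] at hm
        have h3 : p % 3 < 3 := Nat.mod_lt _ (by norm_num)
        have h4 : k % 3 < 3 := Nat.mod_lt _ (by norm_num)
        generalize p % 3 = c at *
        generalize k % 3 = d at *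
        interval_cases c <;> interval_cases d <;> simp_all
      have hlt : k < n := by
        have := hp.two_le
        have : 0 < k := by omega
        nlinarith
      obtain ⟨q, hq, hq2, hqk⟩ := ih k hlt hk2
      exact ⟨q, hq, hq2, hk ▸ Dvd.dvd.mul_left hqk p⟩

lemma zmod_zero (q : ℕ) (hq : q.Prime) (hq3 : q % 3 = 2) [Fact q.Prime] (a b : ZMod q)
    (h : a ^ 2 + a * b + b ^ 2 = 0) : b = 0 := by
  by_contra hb
  have ha : a ≠ 0 := by
    rintro rfl
    apply hb
    simpa using h
  have h3 : a ^ 3 = b ^ 3 := by linear_combination (a - b) * h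
  have e : q - 1 = 3 * (q / 3) + 1 := by omega
  have fa := ZMod.pow_card_sub_one_eq_one ha
  have fb := ZMod.pow_card_sub_one_eq_one hb
  rw [e, pow_succ, pow_mul] at fa fb
  rw [h3] at fa
  have hab : a = b := by
    have hne : (b ^ 3) ^ (q / 3) ≠ 0 := pow_ne_zero _ (pow_ne_zero _ hb)
    exact mul_left_cancel₀ hne (fa.trans fb.symm)
  subst hab
  have h4 : ((3 : ℕ) : ZMod q) * a ^ 2 = 0 := by push_cast; linear_combination h
  rcases mul_eq_zero.mp h4 with h5 | h5
  · rw [ZMod.natCast_eq_zero_iff] at h5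
    have := (Nat.prime_dvd_prime_iff_eq hq Nat.prime_three).mp h5
    omega
  · exact hb (pow_eq_zero_iff (two_ne_zero) |>.mp h5)

lemma int_dvd (q : ℕ) (hq : q.Prime) (hq3 : q % 3 = 2) (a b : ℤ)
    (h : (q : ℤ) ∣ a ^ 2 + a * b + b ^ 2) : (q : ℤ) ∣ b := by
  haveI : Fact q.Prime := ⟨hq⟩
  rw [← ZMod.intCast_zmod_eq_zero_iff_dvd] at h ⊢
  push_cast at h
  exact zmod_zero q hq hq3 _ _ h

lemma not_two_mod_three (u v : ℕ) (a b : ℤ) (hc : Nat.Coprime u v)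
    (h : (u : ℤ) * v = a ^ 2 + a * b + b ^ 2) : u % 3 ≠ 2 := by
  induction u using Nat.strong_induction_on generalizing a b with
  | _ u ih =>
    intro hu
    obtain ⟨q, hq, hq3, k, rfl⟩ := exists_prime_two_mod_three u hu
    have hd : (q : ℤ) ∣ a ^ 2 + a * b + b ^ 2 := ⟨k * v, by rw [← h]; push_cast; ring⟩
    obtain ⟨b', rfl⟩ := int_dvd q hq hq3 a b hd
    obtain ⟨a', rfl⟩ := int_dvd q hq hq3 (q * b') a (by convert hd using 1; ring)
    have hq0 : (q : ℤ) ≠ 0 := by exact_mod_cast hq.ne_zero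
    have h2 : (k : ℤ) * v = q * (a' ^ 2 + a' * b' + b' ^ 2) := by
      apply mul_left_cancel₀ hq0
      push_cast at h
      linear_combination h
    have hqv : Nat.Coprime q v := hc.coprime_dvd_left ⟨k, rfl⟩
    have hqk : q ∣ k := by
      apply hqv.dvd_of_dvd_mul_right
      have : (q : ℤ) ∣ ((k * v : ℕ) : ℤ) := ⟨_, by push_cast; exact h2⟩
      exact_mod_cast this
    obtain ⟨w, rfl⟩ := hqk
    have hw0 : 0 < w := by
      rcases Nat.eq_zero_or_pos w with rfl | hw
      · simp at hu
      · exact hw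
    refine ih w ?_ a' b' ?_ ?_ ?_
    · have := hq.two_le
      nlinarith [Nat.mul_le_mul this this]
    · exact hc.coprime_dvd_left ⟨q * q, by ring⟩
    · apply mul_left_cancel₀ hq0
      push_cast at h2
      linear_combination h2
    · rw [Nat.mul_mod, Nat.mul_mod q w, hq3] at hu
      omega

theorem no_solution_five_mod_twelve (ℓ : ℕ) (hℓ : ℓ.Prime) (h12 : ℓ % 12 = 1) :
    ¬ ∃ X Y Z : ℤ, X % 12 = 5 ∧ Y % 12 = 5 ∧ Z % 12 = 5 ∧
      X ^ 2 + Y ^ 2 + Z ^ 2 = 3 * (ℓ : ℤ) ^ 2 := by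
  rintro ⟨X, Y, Z, hX, hY, hZ, h⟩
  obtain ⟨x, rfl⟩ : ∃ x, X = 12 * x + 5 := ⟨X / 12, by omega⟩
  obtain ⟨y, rfl⟩ : ∃ x, Y = 12 * x + 5 := ⟨Y / 12, by omega⟩
  obtain ⟨z, rfl⟩ : ∃ x, Z = 12 * x + 5 := ⟨Z / 12, by omega⟩
  obtain ⟨m, hm⟩ : ∃ m : ℤ, (ℓ : ℤ) = 12 * m + 1 := ⟨(ℓ : ℤ) / 12, by omega⟩
  obtain ⟨T, hT⟩ : ∃ T, T = x + y + z := ⟨_, rfl⟩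
  obtain ⟨N, hN⟩ : ∃ N, N = (x - y) ^ 2 + (x - y) * (y - z) + (y - z) ^ 2 := ⟨_, rfl⟩
  obtain ⟨V, hV⟩ : ∃ V, V = 6 * m + 2 * T + 3 := ⟨_, rfl⟩
  have key : (3 * m - T - 1) * V = 4 * N := by
    rw [hm] at h
    subst hV hN hT
    linarith
  have h4 : (4 : ℤ) ∣ 3 * m - T - 1 := by
    have hco : IsCoprime (4 : ℤ) V := by
      have : IsCoprime ((2 : ℤ) ^ 2) V :=
        IsCoprime.pow_left ⟨-(3 * m + T + 1), 1, by subst hV; ring⟩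
      simpa using this
    exact hco.dvd_of_dvd_mul_right ⟨N, key⟩
  obtain ⟨U, hU⟩ := h4
  have hUV : U * V = N := by
    rw [hU] at key
    linarith
  have hsum : (ℓ : ℤ) = 8 * U + V := by linarith
  have hℓ0 : (0 : ℤ) < ℓ := by exact_mod_cast hℓ.pos
  have hN3 : ∃ r, N = T ^ 2 + 3 * r :=
    ⟨-(x * y + y * z + x * z), by subst hN hT; ring⟩
  have hU3 : U % 3 = 2 := by
    obtain ⟨r, hr⟩ := hN3
    have hT3 : T % 3 = 0 ∨ T % 3 = 1 ∨ T % 3 = 2 := by omega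
    rcases hT3 with h0 | h0 | h0
    · omega
    · exfalso
      obtain ⟨t, rfl⟩ : ∃ t, T = 3 * t + 1 := ⟨T / 3, by omega⟩
      obtain ⟨w, rfl⟩ : ∃ t, U = 3 * t + 1 := ⟨U / 3, by omega⟩
      obtain ⟨e, rfl⟩ : ∃ t, V = 3 * t + 2 := ⟨V / 3, by omega⟩
      ring_nf at hUV hr
      omega
    · exfalso
      obtain ⟨t, rfl⟩ : ∃ t, T = 3 * t + 2 := ⟨T / 3, by omega⟩
      obtain ⟨w, rfl⟩ : ∃ t, U = 3 * t := ⟨U / 3, by omega⟩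
      ring_nf at hUV hr
      omega
  have hN0 : 0 ≤ N := by
    subst hN
    nlinarith [sq_nonneg (x - y + (y - z)), sq_nonneg (x - y), sq_nonneg (y - z)]
  have hU0 : 0 < U := by
    by_contra hneg
    have : U < 0 := by omega
    have : 0 < V := by omega
    nlinarith
  have hV0 : 0 < V := by
    by_contra hneg
    have : V < 0 := by omega
    nlinarith
  clear hN3
  lift U to ℕ using hU0.le
  lift V to ℕ using hV0.le
  refine not_two_mod_three U V (x - y) (y - z) ?_ (hUV.trans hN) (by omega)
  have hs : ℓ = 8 * U + V := by exact_mod_cast hsum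
  have hg : Nat.gcd U V ∣ ℓ := by
    rw [hs]
    exact dvd_add (Dvd.dvd.mul_left (Nat.gcd_dvd_left U V) 8) (Nat.gcd_dvd_right U V)
  rcases (Nat.dvd_prime hℓ).mp hg with h1 | h1
  · exact h1
  · have := Nat.le_of_dvd (by omega) (Nat.gcd_dvd_left U V)
    omega
end

section
/- Let ℓ be a prime with ℓ ≡ 1 (mod 12). Then there exist no integers X, Y, Z with X ≡ 5 (mod 12), Y ≡ 1 (mod 12), Z ≡ 1 (mod 12), and X² + Y² + Z² = 3ℓ². -/
/-- A prime `p ≡ 2 (mod 3)` dividing `a² + ab + b²` divides `a` and `b`. -/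
theorem aux_inert (p : ℕ) (hp : p.Prime) (h3 : p % 3 = 2) (a b : ℤ)
    (h : (p : ℤ) ∣ a ^ 2 + a * b + b ^ 2) : (p : ℤ) ∣ a ∧ (p : ℤ) ∣ b := by
  have : Fact p.Prime := ⟨hp⟩
  rw [← ZMod.intCast_zmod_eq_zero_iff_dvd] at h
  rw [← ZMod.intCast_zmod_eq_zero_iff_dvd, ← ZMod.intCast_zmod_eq_zero_iff_dvd]
  push_cast at h
  generalize (a : ZMod p) = x at *
  generalize (b : ZMod p) = y at *
  by_cases hy : y = 0
  · subst hy
    simpa using h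
  by_cases hx : x = 0
  · subst hx
    simpa using h
  exfalso
  obtain ⟨k, hk⟩ : ∃ k, p = 3 * k + 2 := ⟨p / 3, by omega⟩
  have hcube : x ^ 3 = y ^ 3 := by linear_combination (x - y) * h
  have h1 := ZMod.pow_card_sub_one_eq_one hx
  have h2 := ZMod.pow_card_sub_one_eq_one hy
  have e : p - 1 = 3 * k + 1 := by omega
  rw [e, pow_succ, pow_mul, hcube] at h1
  rw [e, pow_succ, pow_mul] at h2
  have hxy : x = y := by
    have hne : (y ^ 3) ^ k ≠ 0 := pow_ne_zero _ (pow_ne_zero _ hy)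
    exact mul_left_cancel₀ hne (h1.trans h2.symm)
  subst hxy
  have h30 : (3 : ZMod p) * x ^ 2 = 0 := by linear_combination h
  rcases mul_eq_zero.mp h30 with h' | h'
  · have : ((3 : ℕ) : ZMod p) = 0 := by exact_mod_cast h'
    rw [ZMod.natCast_eq_zero_iff] at this
    have := (Nat.prime_dvd_prime_iff_eq hp Nat.prime_three).mp this
    omega
  · exact hx (by simpa using h')

/-- A natural number that is `2 (mod 3)` has a prime factor that is `2 (mod 3)`. -/
theorem aux_factor (m : ℕ) (hm : m % 3 = 2) : ∃ p, p.Prime ∧ p % 3 = 2 ∧ p ∣ m := by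
  induction m using Nat.strong_induction_on with
  | _ m ih =>
    obtain ⟨q, hq, r, rfl⟩ := Nat.exists_prime_and_dvd (n := m) (by omega)
    by_cases h2 : q % 3 = 2
    · exact ⟨q, hq, h2, dvd_mul_right _ _⟩
    have hr : r % 3 = 2 := by
      rw [Nat.mul_mod] at hm
      have := Nat.mod_lt q (show 3 > 0 by norm_num)
      have := Nat.mod_lt r (show 3 > 0 by norm_num)
      interval_cases q % 3 <;> interval_cases r % 3 <;> simp_all
    have hlt : r < q * r := by nlinarith [hq.two_le, show 0 < r by omega]
    obtain ⟨p, hp, hp2, hd⟩ := ih r hlt hr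
    exact ⟨p, hp, hp2, hd.mul_left _⟩

/-- If `m n = a² + ab + b²` with `m ≡ 2 (mod 3)`, then `m` and `n` share a prime factor
that is `2 (mod 3)`. -/
theorem aux_common (m : ℕ) : ∀ n a b : ℤ, m % 3 = 2 → (m : ℤ) * n = a ^ 2 + a * b + b ^ 2 →
    ∃ p : ℕ, p.Prime ∧ p % 3 = 2 ∧ p ∣ m ∧ (p : ℤ) ∣ n := by
  induction m using Nat.strong_induction_on with
  | _ m ih =>
    intro n a b hm h
    obtain ⟨p, hp, hp2, hd⟩ := aux_factor m hm
    by_cases hn : (p : ℤ) ∣ n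
    · exact ⟨p, hp, hp2, hd, hn⟩
    have hpz : Prime (p : ℤ) := Nat.prime_iff_prime_int.mp hp
    have hp0 : (p : ℤ) ≠ 0 := hpz.ne_zero
    obtain ⟨r, rfl⟩ := hd
    obtain ⟨⟨a', rfl⟩, ⟨b', rfl⟩⟩ := aux_inert p hp hp2 a b (by
      rw [← h]; push_cast; exact ⟨r * n, by ring⟩)
    have h1 : (r : ℤ) * n = p * (a' ^ 2 + a' * b' + b' ^ 2) := by
      apply mul_left_cancel₀ hp0
      push_cast at h
      linear_combination h
    have hr : (p : ℤ) ∣ r := (hpz.dvd_or_dvd ⟨_, h1⟩).resolve_right hn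
    obtain ⟨s, rfl⟩ := Int.natCast_dvd_natCast.mp hr
    have h2 : (s : ℤ) * n = a' ^ 2 + a' * b' + b' ^ 2 := by
      apply mul_left_cancel₀ hp0
      push_cast at h1
      linear_combination h1
    have hs : s % 3 = 2 := by
      rw [Nat.mul_mod, Nat.mul_mod p s, hp2] at hm
      have := Nat.mod_lt s (show 3 > 0 by norm_num)
      interval_cases s % 3 <;> simp_all
    have hlt : s < p * (p * s) := by
      have := hp.two_le
      have : 0 < s := by omega
      nlinarith [Nat.mul_le_mul hp.two_le hp.two_le]
    obtain ⟨q, hq, hq2, hqd, hqn⟩ := ih s hlt n a' b' hs h2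
    exact ⟨q, hq, hq2, (hqd.mul_left _).mul_left _, hqn⟩

theorem no_solution_five_one_one_mod_twelve (ℓ : ℕ) (hℓ : ℓ.Prime) (h12 : ℓ % 12 = 1) :
    ¬ ∃ X Y Z : ℤ, X % 12 = 5 ∧ Y % 12 = 1 ∧ Z % 12 = 1 ∧
      X ^ 2 + Y ^ 2 + Z ^ 2 = 3 * (ℓ : ℤ) ^ 2 := by
  rintro ⟨X, Y, Z, hX, hY, hZ, h⟩
  -- `(3ℓ + S)(3ℓ - S) = 2 (a² + ab + b²)` with `S = X + Y + Z`, `a = X - Y`, `b = Y - Z`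
  have key : (3 * (ℓ : ℤ) + (X + Y + Z)) * (3 * ℓ - (X + Y + Z)) =
      2 * ((X - Y) ^ 2 + (X - Y) * (Y - Z) + (Y - Z) ^ 2) := by
    linear_combination (-3) * h
  have hpos : 0 < 3 * (ℓ : ℤ) + (X + Y + Z) := by
    by_contra hneg
    have hN : 0 ≤ (X - Y) ^ 2 + (X - Y) * (Y - Z) + (Y - Z) ^ 2 := by
      nlinarith [sq_nonneg ((X - Y) + (Y - Z)), sq_nonneg (X - Y), sq_nonneg (Y - Z)]
    have hA : 3 * (ℓ : ℤ) + (X + Y + Z) < 0 := by omega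
    have hB : 0 < 3 * (ℓ : ℤ) - (X + Y + Z) := by omega
    nlinarith [mul_neg_of_neg_of_pos hA hB]
  obtain ⟨m, hm⟩ : ∃ m : ℕ, 3 * (ℓ : ℤ) + (X + Y + Z) = 2 * m :=
    ⟨((3 * (ℓ : ℤ) + (X + Y + Z)) / 2).toNat, by omega⟩
  obtain ⟨p, hp, hp2, hpm, hpn⟩ := aux_common m (3 * ℓ - (X + Y + Z)) (X - Y) (Y - Z)
    (by omega) (by rw [hm] at key; linarith)
  have hodd : p ≠ 2 := by
    rintro rfl
    omega
  have hd : (p : ℤ) ∣ ((6 * ℓ : ℕ) : ℤ) := by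
    have h1 : (p : ℤ) ∣ 2 * (m : ℤ) := (Int.natCast_dvd_natCast.mpr hpm).mul_left _
    have h2 := dvd_add h1 hpn
    rw [← hm] at h2
    have e : ((6 * ℓ : ℕ) : ℤ) =
        3 * (ℓ : ℤ) + (X + Y + Z) + (3 * ℓ - (X + Y + Z)) := by
      push_cast
      ring
    rw [e]
    exact h2
  rcases hp.dvd_mul.mp (Int.natCast_dvd_natCast.mp hd) with h6 | hl
  · have := Nat.le_of_dvd (by norm_num) h6
    interval_cases p <;> omega
  · have := (Nat.prime_dvd_prime_iff_eq hp hℓ).mp hl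
    omega
end

section
/- Let ℓ be a prime with ℓ ≡ 7 (mod 12). Then there exist no integers X, Y, Z with X ≡ 1 (mod 12), Y ≡ 5 (mod 12), Z ≡ 5 (mod 12), and X² + Y² + Z² = 3ℓ². -/
theorem aux_dvd (q : ℕ) (hq : q.Prime) (h3 : q % 3 = 2) (a b : ℤ)
    (h : (q : ℤ) ∣ a ^ 2 + a * b + b ^ 2) : (q : ℤ) ∣ a ∧ (q : ℤ) ∣ b := by
  have : Fact q.Prime := ⟨hq⟩
  have cube : ∀ x : ZMod q, (x ^ 3) ^ (2 * (q / 3) + 1) = x := by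
    intro x
    have e : x ^ (3 * (q / 3) + 2) = x := by
      have : 3 * (q / 3) + 2 = q := by omega
      rw [this]; exact ZMod.pow_card x
    calc (x ^ 3) ^ (2 * (q / 3) + 1) = x ^ (3 * (q / 3) + 2) * x ^ (3 * (q / 3) + 1) := by
          rw [← pow_mul, ← pow_add]; congr 1; ring
      _ = x ^ (3 * (q / 3) + 2) := by rw [e, ← pow_succ', e]
      _ = x := e
  rw [← ZMod.intCast_zmod_eq_zero_iff_dvd] at h
  push_cast at h
  rw [← ZMod.intCast_zmod_eq_zero_iff_dvd, ← ZMod.intCast_zmod_eq_zero_iff_dvd]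
  have hc : (a : ZMod q) ^ 3 = (b : ZMod q) ^ 3 := by
    linear_combination ((a : ZMod q) - b) * h
  have hab : (a : ZMod q) = b := by rw [← cube a, hc, cube]
  have h3' : (3 : ZMod q) ≠ 0 := by
    intro h0
    have h1 : ((3 : ℕ) : ZMod q) = 0 := by exact_mod_cast h0
    rw [ZMod.natCast_eq_zero_iff] at h1
    have := (Nat.prime_dvd_prime_iff_eq hq Nat.prime_three).1 h1
    omega
  have hb : (b : ZMod q) = 0 := by
    rw [hab] at h
    have : (3 : ZMod q) * (b : ZMod q) ^ 2 = 0 := by linear_combination h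
    simpa [h3'] using this
  exact ⟨hab.trans hb, hb⟩

theorem aux_prime (n : ℕ) (h : n % 3 = 2) : ∃ q : ℕ, q.Prime ∧ q % 3 = 2 ∧ q ∣ n := by
  induction n using Nat.strong_induction_on with
  | _ n ih =>
    have hp := Nat.minFac_prime (n := n) (by omega)
    obtain ⟨k, hk⟩ := Nat.minFac_dvd n
    by_cases h2 : n.minFac % 3 = 2
    · exact ⟨_, hp, h2, Nat.minFac_dvd n⟩
    · have hm : (n.minFac % 3) * (k % 3) % 3 = 2 := by rw [← Nat.mul_mod, ← hk, h]
      have hk2 : k % 3 = 2 := by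
        have : n.minFac % 3 < 3 := Nat.mod_lt _ (by norm_num)
        interval_cases n.minFac % 3 <;> omega
      have hkn : k < n := by
        have := hp.two_le
        have : 2 * k ≤ n := by
          calc 2 * k ≤ n.minFac * k := Nat.mul_le_mul_right _ this
            _ = n := hk.symm
        omega
      obtain ⟨q, h1, h2, h3⟩ := ih k hkn hk2
      exact ⟨q, h1, h2, h3.trans (Dvd.intro_left _ hk.symm)⟩

theorem aux_main_s10 (n : ℕ) : ∀ m a b : ℤ, n % 3 = 2 → (n : ℤ) * m = a ^ 2 + a * b + b ^ 2 →
    ∃ q : ℕ, q.Prime ∧ q % 3 = 2 ∧ q ∣ n ∧ (q : ℤ) ∣ m := by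
  induction n using Nat.strong_induction_on with
  | _ n ih =>
    intro m a b h e
    obtain ⟨q, hq, hq3, hqn⟩ := aux_prime n h
    by_cases hm : (q : ℤ) ∣ m
    · exact ⟨q, hq, hq3, hqn, hm⟩
    have hqn' : (q : ℤ) ∣ n := by exact_mod_cast hqn
    obtain ⟨⟨a, rfl⟩, ⟨b, rfl⟩⟩ := aux_dvd q hq hq3 a b (e ▸ hqn'.mul_right m)
    have hqi : Prime (q : ℤ) := Nat.prime_iff_prime_int.1 hq
    obtain ⟨k, rfl⟩ := hqn
    have e2 : (k : ℤ) * m = q * (a ^ 2 + a * b + b ^ 2) := by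
      apply mul_left_cancel₀ hqi.ne_zero
      push_cast at e
      linear_combination e
    have hk : (q : ℤ) ∣ k := (hqi.dvd_or_dvd (Dvd.intro _ e2.symm)).resolve_right hm
    obtain ⟨j, rfl⟩ : q ∣ k := by exact_mod_cast hk
    have e3 : (j : ℤ) * m = a ^ 2 + a * b + b ^ 2 := by
      apply mul_left_cancel₀ hqi.ne_zero
      push_cast at e2
      linear_combination e2
    have hj : j % 3 = 2 := by
      rw [Nat.mul_mod, Nat.mul_mod q j, hq3] at h
      omega
    have hlt : j < q * (q * j) := by
      have := hq.two_le
      have : 0 < j := by omega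
      nlinarith [Nat.mul_le_mul ‹2 ≤ q› ‹2 ≤ q›, Nat.mul_le_mul_right j (Nat.mul_le_mul ‹2 ≤ q› ‹2 ≤ q›)]
    obtain ⟨r, h1, h2, h3, h4⟩ := ih j hlt m a b hj e3
    exact ⟨r, h1, h2, (h3.mul_left q).mul_left q, h4⟩

theorem no_solution_one_five_five_mod_twelve (ℓ : ℕ) (hℓ : ℓ.Prime) (h12 : ℓ % 12 = 7) :
    ¬ ∃ X Y Z : ℤ, X % 12 = 1 ∧ Y % 12 = 5 ∧ Z % 12 = 5 ∧
      X ^ 2 + Y ^ 2 + Z ^ 2 = 3 * (ℓ : ℤ) ^ 2 := by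
  rintro ⟨X, Y, Z, hX, hY, hZ, h⟩
  obtain ⟨t, ht⟩ : ∃ t : ℤ, 3 * (ℓ : ℤ) - (X + Y + Z) = 2 * t := 
    ⟨(3 * (ℓ : ℤ) - (X + Y + Z)) / 2, by omega⟩
  have e : t * (3 * ℓ + (X + Y + Z)) = (X - Y) ^ 2 + (X - Y) * (Y - Z) + (Y - Z) ^ 2 := by
    have : 2 * (t * (3 * ℓ + (X + Y + Z))) =
      2 * ((X - Y) ^ 2 + (X - Y) * (Y - Z) + (Y - Z) ^ 2) := by
      linear_combination (-(3 * (ℓ : ℤ) + (X + Y + Z))) * ht - 3 * h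
    linarith
  have ht0 : 0 ≤ t := by
    have h9 : (X + Y + Z) ^ 2 ≤ (3 * (ℓ : ℤ)) ^ 2 := by
      nlinarith [sq_nonneg (X - Y), sq_nonneg (Y - Z), sq_nonneg (X - Z)]
    have := abs_le_of_sq_le_sq' h9 (by positivity)
    linarith [this.2]
  lift t to ℕ using ht0
  obtain ⟨q, hq, hq3, ⟨c, hc⟩, hqm⟩ := aux_main_s10 t _ _ _ (by omega) e
  have hodd : t % 2 = 1 := by omega
  have hd : (q : ℤ) ∣ ((6 * ℓ : ℕ) : ℤ) := by
    have h1 : (q : ℤ) ∣ t := ⟨c, by rw [hc]; push_cast; ring⟩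
    have h2 := dvd_add (h1.mul_left 2) hqm
    rw [← ht] at h2
    have h3 : ((6 * ℓ : ℕ) : ℤ) = 3 * (ℓ : ℤ) - (X + Y + Z) + (3 * ℓ + (X + Y + Z)) := by
      push_cast; ring
    rw [h3]; exact h2
  have hd' : q ∣ 2 * (3 * ℓ) := by
    have : q ∣ 6 * ℓ := by exact_mod_cast hd
    rwa [← mul_assoc]
  rcases (hq.dvd_mul).1 hd' with h2 | h2
  · have := (Nat.prime_dvd_prime_iff_eq hq Nat.prime_two).1 h2
    subst this
    omega
  · rcases (hq.dvd_mul).1 h2 with h2 | h2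
    · have := (Nat.prime_dvd_prime_iff_eq hq Nat.prime_three).1 h2
      omega
    · have := (Nat.prime_dvd_prime_iff_eq hq hℓ).1 h2
      omega
end

section
/- For every positive integer N, one has A(N) + 3·C(N) − B(N) − 3·D(N) = −u(N), where u(N) = r if N = 3r² for an integer r with r ≡ 1 (mod 4) (such an r is unique if it exists), and u(N) = 0 if no such integer r exists. -/
/-- `tripleCount N a b c` is the number of ordered triples `(X, Y, Z) ∈ ℤ³` with
`X² + Y² + Z² = N` and `X ≡ a, Y ≡ b, Z ≡ c (mod 12)`. -/
noncomputable def tripleCount (N : ℕ) (a b c : ℤ) : ℕ :=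
  Set.ncard {t : ℤ × ℤ × ℤ | t.1 ^ 2 + t.2.1 ^ 2 + t.2.2 ^ 2 = (N : ℤ) ∧
    t.1 % 12 = a ∧ t.2.1 % 12 = b ∧ t.2.2 % 12 = c}

namespace SpinorTheta

/-- The `q`-Pochhammer product `(1 - q) ... (1 - q ^ n)`. -/
def qp {A : Type*} [CommRing A] (q : A) (n : ℕ) : A :=
  ∏ i ∈ Finset.range n, (1 - q ^ (i + 1))

/-- Gaussian binomial coefficients. -/
def qb {A : Type*} [CommRing A] (q : A) : ℕ → ℕ → A
  | _, 0 => 1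
  | 0, _ + 1 => 0
  | m + 1, j + 1 => qb q m j + q ^ (j + 1) * qb q m (j + 1)

theorem qb_zero {A : Type*} [CommRing A] (q : A) (m : ℕ) : qb q m 0 = 1 := by
  cases m <;> rfl

theorem qb_succ {A : Type*} [CommRing A] (q : A) (m j : ℕ) :
    qb q (m + 1) (j + 1) = qb q m j + q ^ (j + 1) * qb q m (j + 1) := rfl

theorem qb_lt {A : Type*} [CommRing A] (q : A) (m : ℕ) : ∀ j, m < j → qb q m j = 0 := by
  induction m with
  | zero => intro j hj; cases j with
    | zero => omega
    | succ j => rfl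
  | succ m ih => intro j hj; cases j with
    | zero => omega
    | succ j => rw [qb_succ, ih j (by omega), ih (j + 1) (by omega)]; simp

theorem qb_self {A : Type*} [CommRing A] (q : A) (m : ℕ) : qb q m m = 1 := by
  induction m with
  | zero => rfl
  | succ m ih => rw [qb_succ, ih, qb_lt q m (m + 1) (by omega)]; simp

theorem qb_mul {A : Type*} [CommRing A] (q : A) (s : ℕ) : ∀ j l, j + l = s →
    qb q (j + l) j * qp q j * qp q l = qp q (j + l) := by
  induction s with
  | zero =>
    intro j l h
    obtain ⟨rfl, rfl⟩ : j = 0 ∧ l = 0 := by omega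
    simp [qb_zero, qp]
  | succ s ih =>
    intro j l h
    cases j with
    | zero => simp [qb_zero, qp]
    | succ j =>
      cases l with
      | zero => simp [qb_self, qp]
      | succ l =>
        have h1 := ih j (l + 1) (by omega)
        have h2 := ih (j + 1) l (by omega)
        have e : j + 1 + l = j + (l + 1) := by ring
        rw [e] at h2
        have e' : j + 1 + (l + 1) = j + (l + 1) + 1 := by ring
        rw [e', qb_succ]
        have p1 : ∀ n, qp q (n + 1) = qp q n * (1 - q ^ (n + 1)) := fun n =>
          Finset.prod_range_succ _ _
        rw [p1 (j + (l + 1))]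
        have : qp q (j + (l + 1)) * (1 - q ^ (j + (l + 1) + 1)) =
          qp q (j + (l + 1)) * (1 - q ^ (j + 1)) +
            q ^ (j + 1) * (1 - q ^ (l + 1)) * qp q (j + (l + 1)) := by ring
        rw [this]
        have h3 : qp q (j + (l + 1)) * (1 - q ^ (l + 1)) =
            qb q (j + (l + 1)) (j + 1) * qp q (j + 1) * qp q (l + 1) := by
          rw [← h2, p1 l]; ring
        rw [mul_assoc (q ^ (j + 1)), mul_comm (1 - q ^ (l + 1)), h3, ← h1, p1 j]
        ring

theorem qbinom_thm {A : Type*} [CommRing A] (q x : A) (m : ℕ) : ∀ z : A,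
    ∏ i ∈ Finset.range m, (x + z * q ^ i) =
      ∑ j ∈ Finset.range (m + 1), q ^ (j.choose 2) * qb q m j * z ^ j * x ^ (m - j) := by
  induction m with
  | zero => intro z; simp [qb_zero]
  | succ m ih =>
    intro z
    rw [Finset.prod_range_succ']
    have : ∀ i, x + z * q ^ (i + 1) = x + (z * q) * q ^ i := by intro i; ring
    simp only [this]
    rw [ih (z * q), Finset.sum_range_succ' _ (m + 1), mul_add]
    have key : ∀ j ∈ Finset.range (m + 1),
        q ^ ((j + 1).choose 2) * qb q (m + 1) (j + 1) * z ^ (j + 1) * x ^ (m + 1 - (j + 1)) =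
        (q ^ (j.choose 2) * qb q m j * (z * q) ^ j * x ^ (m - j)) * z +
        q ^ ((j + 1).choose 2) * qb q m (j + 1) * (z * q) ^ (j + 1) * x ^ (m - j) := by
      intro j hj
      rw [qb_succ, Nat.choose_succ_succ' j 1, Nat.choose_one_right, Nat.add_sub_add_right, pow_add]
      ring
    rw [Finset.sum_congr rfl key, Finset.sum_add_distrib, ← Finset.sum_mul]
    have h2 : (∑ j ∈ Finset.range (m + 1),
          q ^ (j.choose 2) * qb q m j * (z * q) ^ j * x ^ (m - j)) * x =
        ∑ j ∈ Finset.range (m + 1),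
          q ^ ((j + 1).choose 2) * qb q m (j + 1) * (z * q) ^ (j + 1) * x ^ (m - j)
        + x ^ (m + 1) := by
      rw [Finset.sum_range_succ', Finset.sum_range_succ _ m, qb_lt q m (m + 1) (by omega), add_mul,
        Finset.sum_mul]
      simp only [qb_zero, mul_zero, zero_mul, add_zero]
      congr 1
      · apply Finset.sum_congr rfl
        intro j hj
        have hj' := Finset.mem_range.mp hj
        have : m - j = (m - (j + 1)) + 1 := by omega
        rw [this, pow_succ]; ring
      · simp [pow_succ]
    simp only [pow_zero, mul_one]
    rw [h2, qb_zero]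
    simp
    ring

open Polynomial in
/-- derivative at 1 of the finite triple product, before cancellation -/
theorem fin_raw {R : Type*} [CommRing R] (q : R) (L : ℕ) :
    -(∏ i ∈ Finset.range L, (q ^ L - q ^ i)) * q ^ L *
      (∏ i ∈ Finset.range L, (q ^ L - q ^ (L + 1 + i))) =
    ∑ j ∈ Finset.range (2 * L + 2), q ^ (j.choose 2) * qb q (2 * L + 1) j * ((-1) ^ j * j) *
      (q ^ L) ^ (2 * L + 1 - j) := by
  have hmap : ∀ m j, qb (C q) m j = C (qb q m j) := by
    intro m
    induction m with
    | zero => intro j; cases j <;> simp [qb]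
    | succ m ih => intro j; cases j <;> simp [qb, ih]
  have h := qbinom_thm (C q) (C (q ^ L)) (2 * L + 1) (-X)
  have h' := congrArg (fun p => (derivative p).eval 1) h
  rw [show 2 * L + 1 = L + 1 + L by ring, Finset.prod_range_add, Finset.prod_range_succ] at h'
  have h3 : C (q ^ L) + -X * C q ^ L = C (q ^ L) * (1 - X) := by rw [C_pow]; ring
  rw [h3] at h'
  simp only [derivative_mul, derivative_sub, derivative_one, derivative_X, eval_add, eval_mul,
    eval_sub, eval_one, eval_X, sub_self, mul_zero, eval_C, derivative_C, eval_zero,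
    zero_mul, add_zero, zero_add, zero_sub, mul_neg, mul_one, hmap, eval_prod, eval_neg,
    eval_pow, derivative_sum, eval_finsetSum] at h'
  have h4 : ∀ j : ℕ, eval 1 (derivative ((-X : R[X]) ^ j)) = (-1) ^ j * (j : R) := by
    intro j
    rw [neg_pow, ← C_1, ← C_neg, ← C_pow, derivative_C_mul, derivative_X_pow]
    simp
  simp only [← C_pow, ← C_mul, derivative_C, derivative_mul, eval_add, eval_mul, eval_C, eval_zero,
    zero_mul, mul_zero, add_zero, zero_add, h4] at h'
  rw [show 2 * L + 2 = L + 1 + L + 1 by ring, show 2 * L + 1 = L + 1 + L by ring, ← h']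
  simp [sub_eq_add_neg]

theorem fin_id {R : Type*} [CommRing R] [IsDomain R] (q : R) (hq : q ≠ 0) (L : ℕ) :
    qp q L ^ 2 = ∑ k ∈ Finset.range (L + 1), (-1) ^ k * q ^ ((k + 1).choose 2) *
      ((L + 1 + k : ℕ) * qb q (2 * L + 1) (L + 1 + k) - (L - k : ℕ) * qb q (2 * L + 1) (L - k)) := by
  have hT : ∀ n : ℕ, 2 * ((n + 1).choose 2) = n * (n + 1) := by
    intro n
    rw [Nat.choose_two_right, Nat.mul_div_cancel' ]
    · simp; ring
    · simpa [mul_comm] using (Nat.even_mul_succ_self n).two_dvd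
  have h := fin_raw q L
  have a1 : ∏ i ∈ Finset.range L, (q ^ L - q ^ i) = (-1) ^ L * q ^ (L.choose 2) * qp q L := by
    rw [qp, ← Finset.prod_range_reflect (fun i => 1 - q ^ (i + 1)) L, Nat.choose_two_right,
      ← Finset.sum_range_id, ← Finset.prod_pow_eq_pow_sum]
    have c : ((-1 : R)) ^ L = ∏ i ∈ Finset.range L, (-1 : R) := by simp
    rw [c, ← Finset.prod_mul_distrib, ← Finset.prod_mul_distrib]
    apply Finset.prod_congr rfl
    intro i hi
    have hi' := Finset.mem_range.mp hi
    have e : q ^ L = q ^ i * q ^ (L - 1 - i + 1) := by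
      rw [← pow_add]; congr 1; omega
    rw [e]; ring
  have a2 : ∏ i ∈ Finset.range L, (q ^ L - q ^ (L + 1 + i)) = q ^ (L * L) * qp q L := by
    have c : q ^ (L * L) = ∏ i ∈ Finset.range L, q ^ L := by simp [pow_mul]
    rw [qp, c, ← Finset.prod_mul_distrib]
    apply Finset.prod_congr rfl
    intro i _
    ring
  rw [a1, a2] at h
  rw [show 2 * L + 2 = (L + 1) + (L + 1) by ring, Finset.sum_range_add,
    ← Finset.sum_range_reflect _ (L + 1), ← Finset.sum_add_distrib] at h
  have hne : (-1) ^ (L + 1) * q ^ (L.choose 2 + L + L * L) ≠ 0 := by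
    apply mul_ne_zero
    · simp
    · exact pow_ne_zero _ hq
  apply mul_left_cancel₀ hne
  rw [Finset.mul_sum]
  calc _ = _ := ?_
    _ = _ := h
    _ = _ := ?_
  · ring
  · apply Finset.sum_congr rfl
    intro k hk
    have hk' : k ≤ L := by simpa [Nat.lt_succ_iff] using hk
    have c2 : ∀ n : ℕ, 2 * n.choose 2 + n = n * n := by
      intro n
      cases n with
      | zero => rfl
      | succ n => rw [hT]; ring
    obtain ⟨d, rfl⟩ := Nat.exists_eq_add_of_le hk'
    rw [show k + d + 1 - 1 - k = d by omega, show k + d - k = d by omega,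
      show 2 * (k + d) + 1 - d = 2 * k + d + 1 by omega,
      show 2 * (k + d) + 1 - (k + d + 1 + k) = d by omega, ← pow_mul, ← pow_mul]
    have e1 : (k + d).choose 2 + (k + d) + (k + d) * (k + d) + (k + 1).choose 2 =
        d.choose 2 + (k + d) * (2 * k + d + 1) := by
      have := c2 (k + d); have := c2 d; have := hT k
      nlinarith
    have e2 : (k + d).choose 2 + (k + d) + (k + d) * (k + d) + (k + 1).choose 2 =
        (k + d + 1 + k).choose 2 + (k + d) * d := by
      have := c2 (k + d); have := c2 (k + d + 1 + k); have := hT k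
      nlinarith
    have g1 : q ^ (d.choose 2) * q ^ ((k + d) * (2 * k + d + 1)) =
        q ^ ((k + d).choose 2 + (k + d) + (k + d) * (k + d)) * q ^ ((k + 1).choose 2) := by
      rw [← pow_add, ← pow_add, e1]
    have g2 : q ^ ((k + d + 1 + k).choose 2) * q ^ ((k + d) * d) =
        q ^ ((k + d).choose 2 + (k + d) + (k + d) * (k + d)) * q ^ ((k + 1).choose 2) := by
      rw [← pow_add, ← pow_add, e2]
    have s1 : (-1 : R) ^ (k + d + 1) * (-1) ^ k = - (-1) ^ d := by
      rw [← pow_add, show k + d + 1 + k = 2 * k + d + 1 by ring, pow_succ, pow_add, pow_mul]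
      simp
    have s2 : (-1 : R) ^ (k + d + 1 + k) = - (-1) ^ d := by
      rw [pow_add, s1]
    rw [s2]
    linear_combination
      -(qb q (2 * (k + d) + 1) (k + d + 1 + k) * ((-1) ^ d * ((k + d + 1 + k : ℕ) : R))) * g2 +
      (qb q (2 * (k + d) + 1) d * ((-1) ^ d * (d : R))) * g1 -
      (q ^ ((k + d).choose 2 + (k + d) + (k + d) * (k + d)) * q ^ ((k + 1).choose 2) *
      ((k + d + 1 + k : ℕ) * qb q (2 * (k + d) + 1) (k + d + 1 + k) -
        d * qb q (2 * (k + d) + 1) d)) * s1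

open PowerSeries in
/-- Jacobi's identity, coefficientwise. -/
theorem jacobi (n : ℕ) : (pentagonalSeries ℤ ^ 3).coeff n =
    ∑ k ∈ Finset.range (2 * (n + 1) + 1),
      if n = (k + 1).choose 2 then (-1 : ℤ) ^ k * (2 * (k : ℤ) + 1) else 0 := by
  set M := n + 1 with hM
  let π : ℤ⟦X⟧ →+* ℤ⟦X⟧ ⧸ Ideal.span {(X : ℤ⟦X⟧) ^ M} := Ideal.Quotient.mk _
  have hπ : ∀ a b : ℤ⟦X⟧, π a = π b ↔ ∀ m < M, coeff m a = coeff m b := by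
    intro a b
    rw [Ideal.Quotient.mk_eq_mk_iff_sub_mem, Ideal.mem_span_singleton, X_pow_dvd_iff]
    simp [sub_eq_zero]
  have hX : ∀ i, M ≤ i → π X ^ i = 0 := by
    intro i hi
    rw [← map_pow, ← map_zero π, hπ]
    intro m hm
    rw [coeff_X_pow, if_neg (by omega)]; simp
  have hst : ∀ l, M ≤ l → π (qp X l) = π (qp X M) := by
    intro l hl
    induction l, hl using Nat.le_induction with
    | base => rfl
    | succ l hl ih =>
      rw [qp, Finset.prod_range_succ, ← qp, map_mul, ih]
      simp [hX (l + 1) (by omega)]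
  have hE : ∀ l, M ≤ l → π (qp X l) = π (pentagonalSeries ℤ) := by
    intro l hl
    have h1 : ∀ᶠ s in Filter.atTop, ∀ m ∈ Finset.range M,
        (∏ n ∈ s, (1 - X ^ (n + 1) : ℤ⟦X⟧)).coeff m = (pentagonalSeries ℤ).coeff m := by
      rw [Filter.eventually_all_finset]
      intro m _
      exact coeff_prod_one_sub_X_pow_eventually_eq ℤ m
    have h2 := Filter.tendsto_finset_range.eventually h1
    obtain ⟨K, hK1, hK2⟩ := (h2.and (Filter.eventually_ge_atTop M)).exists
    rw [hst l hl, ← hst K hK2, hπ]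
    intro m hm
    exact hK1 m (Finset.mem_range.mpr hm)
  have hU : IsUnit (π (pentagonalSeries ℤ)) := by
    rw [← hE M le_rfl]
    apply IsUnit.map
    rw [isUnit_iff_constantCoeff, qp, map_prod]
    simp
  have hqb : ∀ j l, M ≤ j → M ≤ l → π (qb X (j + l) j) * π (pentagonalSeries ℤ) = 1 := by
    intro j l hj hl
    have h := congrArg π (qb_mul (X : ℤ⟦X⟧) _ j l rfl)
    rw [map_mul, map_mul, hE j hj, hE l hl, hE (j + l) (by omega)] at h
    apply hU.mul_right_cancel
    rw [h, one_mul]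
  have hfin := congrArg π (fin_id (X : ℤ⟦X⟧) X_ne_zero (2 * M))
  have hT : ∀ k : ℕ, k ≤ (k + 1).choose 2 := by
    intro k
    rw [Nat.choose_succ_succ' k 1]; simp
  have key : π (pentagonalSeries ℤ ^ 3) = π (∑ k ∈ Finset.range (2 * M + 1),
      (((-1) ^ k * (2 * k + 1) : ℤ) : ℤ⟦X⟧) * X ^ ((k + 1).choose 2)) := by
    rw [map_pow, pow_succ (π (pentagonalSeries ℤ)) 2, ← hE (2 * M) (by omega), ← map_pow, hfin, hE (2 * M) (by omega),
      map_sum, map_sum, Finset.sum_mul]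
    apply Finset.sum_congr rfl
    intro k hk
    by_cases hk2 : M ≤ (k + 1).choose 2
    · simp [hX _ hk2]
    · have := hT k
      have q1 := hqb (2 * M + 1 + k) (2 * M - k) (by omega) (by omega)
      have q2 := hqb (2 * M - k) (2 * M + 1 + k) (by omega) (by omega)
      rw [show 2 * M + 1 + k + (2 * M - k) = 2 * (2 * M) + 1 by omega] at q1
      rw [show 2 * M - k + (2 * M + 1 + k) = 2 * (2 * M) + 1 by omega] at q2
      obtain ⟨d, hd⟩ := Nat.exists_eq_add_of_le (show k ≤ 2 * M by omega)
      have hd' : 2 * M - k = d := by omega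
      rw [hd'] at q2 ⊢
      have hd3 : ((2 * M + 1 + k : ℕ) : ℤ⟦X⟧ ⧸ Ideal.span {(X : ℤ⟦X⟧) ^ M}) = d + 2 * k + 1 := by
        rw [hd]; push_cast; ring
      simp only [map_mul, map_sub, map_pow, map_natCast, map_neg, map_one, map_intCast, hd3]
      push_cast
      linear_combination ((-1) ^ k * π X ^ ((k + 1).choose 2)) *
        ((d + 2 * k + 1) * q1 - d * q2)
  rw [hπ] at key
  rw [key n (by omega), map_sum]
  apply Finset.sum_congr rfl
  intro k _
  rw [← map_intCast (C : ℤ →+* ℤ⟦X⟧), coeff_C_mul, coeff_X_pow]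
  simp

/-- Indicator of the residue class `a` modulo 12. -/
def ind (a x : ℤ) : ℤ := if x % 12 = a then 1 else 0

/-- The sign `(-1) ^ k`. -/
def sg (k : ℤ) : ℤ := if k % 2 = 0 then 1 else -1

/-- Parametrization of the integers congruent to 1 or 5 modulo 12. -/
def ph (k : ℤ) : ℤ := if k % 2 = 0 then 1 - 6 * k else 6 * k - 1

theorem count_swap (N : ℕ) (a b c : ℤ) : tripleCount N a b c = tripleCount N b a c := by
  unfold tripleCount
  apply Set.ncard_congr (fun t _ => (t.2.1, t.1, t.2.2))
  · rintro ⟨x, y, z⟩ ⟨h1, h2, h3, h4⟩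
    exact ⟨by simpa [add_comm] using h1, h3, h2, h4⟩
  · rintro ⟨x, y, z⟩ ⟨x', y', z'⟩ _ _ h
    simp only [Prod.mk.injEq] at h ⊢
    tauto
  · rintro ⟨x, y, z⟩ ⟨h1, h2, h3, h4⟩
    exact ⟨(y, x, z), ⟨by simpa [add_comm] using h1, h3, h2, h4⟩, rfl⟩

theorem count_swap' (N : ℕ) (a b c : ℤ) : tripleCount N a b c = tripleCount N a c b := by
  unfold tripleCount
  apply Set.ncard_congr (fun t _ => (t.1, t.2.2, t.2.1))
  · rintro ⟨x, y, z⟩ ⟨h1, h2, h3, h4⟩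
    refine ⟨?_, h2, h4, h3⟩
    simp only at h1 ⊢
    linarith
  · rintro ⟨x, y, z⟩ ⟨x', y', z'⟩ _ _ h
    simp only [Prod.mk.injEq] at h ⊢
    tauto
  · rintro ⟨x, y, z⟩ ⟨h1, h2, h3, h4⟩
    refine ⟨(x, z, y), ⟨?_, h2, h4, h3⟩, rfl⟩
    simp only at h1 ⊢
    linarith

theorem abs_bound (N : ℕ) (x : ℤ) (h : x ^ 2 ≤ N) : x ∈ Finset.Icc (-(N : ℤ)) N := by
  rw [Finset.mem_Icc]
  constructor <;> nlinarith

theorem count_eq (N : ℕ) (a b c : ℤ) : (tripleCount N a b c : ℤ) =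
    ∑ x ∈ Finset.Icc (-(N : ℤ)) N, ∑ y ∈ Finset.Icc (-(N : ℤ)) N, ∑ z ∈ Finset.Icc (-(N : ℤ)) N,
      ind a x * (ind b y * (ind c z * if x ^ 2 + y ^ 2 + z ^ 2 = (N : ℤ) then 1 else 0)) := by
  set B := Finset.Icc (-(N : ℤ)) N with hB
  have hs : {t : ℤ × ℤ × ℤ | t.1 ^ 2 + t.2.1 ^ 2 + t.2.2 ^ 2 = (N : ℤ) ∧
      t.1 % 12 = a ∧ t.2.1 % 12 = b ∧ t.2.2 % 12 = c} =
      ((B ×ˢ B ×ˢ B).filter (fun t : ℤ × ℤ × ℤ => t.1 ^ 2 + t.2.1 ^ 2 + t.2.2 ^ 2 = (N : ℤ) ∧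
      t.1 % 12 = a ∧ t.2.1 % 12 = b ∧ t.2.2 % 12 = c) : Finset (ℤ × ℤ × ℤ)) := by
    ext ⟨x, y, z⟩
    simp only [Set.mem_setOf_eq, Finset.coe_filter, Finset.mem_product]
    constructor
    · rintro ⟨h, h'⟩
      refine ⟨⟨abs_bound N x ?_, abs_bound N y ?_, abs_bound N z ?_⟩, h, h'⟩ <;> nlinarith
    · exact fun h => h.2
  rw [tripleCount, hs, Set.ncard_coe_finset, Finset.card_filter]
  push_cast
  rw [Finset.sum_product]
  apply Finset.sum_congr rfl
  intro x _
  rw [Finset.sum_product]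
  apply Finset.sum_congr rfl
  intro y _
  apply Finset.sum_congr rfl
  intro z _
  simp only [ind, ite_and, mul_ite, ite_mul, mul_one, one_mul, mul_zero, zero_mul]
  split_ifs <;> rfl

theorem lhs_eq (N : ℕ) : (tripleCount N 5 5 5 : ℤ) + 3 * tripleCount N 5 1 1
      - tripleCount N 1 1 1 - 3 * tripleCount N 1 5 5 =
    -∑ x ∈ Finset.Icc (-(N : ℤ)) N, ∑ y ∈ Finset.Icc (-(N : ℤ)) N, ∑ z ∈ Finset.Icc (-(N : ℤ)) N,
      (ind 1 x - ind 5 x) * ((ind 1 y - ind 5 y) * ((ind 1 z - ind 5 z) *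
        if x ^ 2 + y ^ 2 + z ^ 2 = (N : ℤ) then 1 else 0)) := by
  have e : (tripleCount N 5 5 5 : ℤ) + 3 * tripleCount N 5 1 1
      - tripleCount N 1 1 1 - 3 * tripleCount N 1 5 5 =
      (tripleCount N 5 5 5 : ℤ) + tripleCount N 5 1 1 + tripleCount N 1 5 1 + tripleCount N 1 1 5
      - tripleCount N 1 1 1 - tripleCount N 1 5 5 - tripleCount N 5 1 5 - tripleCount N 5 5 1 := by
    rw [count_swap N 1 5 1, count_swap' N 1 1 5, count_swap N 1 5 1,
      count_swap' N 5 5 1, count_swap N 5 1 5]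
    ring
  rw [e]
  simp only [count_eq, ← Finset.sum_add_distrib, ← Finset.sum_sub_distrib, ← Finset.sum_neg_distrib]
  apply Finset.sum_congr rfl; intro x _
  apply Finset.sum_congr rfl; intro y _
  apply Finset.sum_congr rfl; intro z _
  ring

theorem ph_sq (k : ℤ) : ph k ^ 2 = 24 * (pentagonal k : ℤ) + 1 := by
  have := two_mul_natCast_pentagonal k
  unfold ph
  split_ifs <;> linear_combination (-12) * this

theorem ph_inj : Function.Injective ph := by
  intro a b h
  unfold ph at h
  split_ifs at h <;> omega

theorem reindex (N : ℕ) (f : ℤ → ℤ) :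
    ∑ x ∈ Finset.Icc (-(N : ℤ)) N, (ind 1 x - ind 5 x) * f x =
    ∑ k ∈ (Finset.Icc (-(N : ℤ)) N).filter (fun k => ph k ∈ Finset.Icc (-(N : ℤ)) N),
      sg k * f (ph k) := by
  symm
  apply Finset.sum_of_injOn ph ph_inj.injOn
  · intro k hk
    exact (Finset.mem_filter.mp hk).2
  · intro x hx hx'
    have : x % 12 ≠ 1 ∧ x % 12 ≠ 5 := by
      refine ⟨fun h => hx' ?_, fun h => hx' ?_⟩
      · refine ⟨(1 - x) / 6, ?_, ?_⟩
        · rw [Finset.mem_coe, Finset.mem_filter]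
          have e : ph ((1 - x) / 6) = x := by unfold ph; split_ifs <;> omega
          rw [e]
          refine ⟨?_, hx⟩
          rw [Finset.mem_Icc] at hx ⊢
          omega
        · unfold ph; split_ifs <;> omega
      · refine ⟨(1 + x) / 6, ?_, ?_⟩
        · rw [Finset.mem_coe, Finset.mem_filter]
          have e : ph ((1 + x) / 6) = x := by unfold ph; split_ifs <;> omega
          rw [e]
          refine ⟨?_, hx⟩
          rw [Finset.mem_Icc] at hx ⊢
          omega
        · unfold ph; split_ifs <;> omega
    simp [ind, this]
  · intro k _
    congr 1
    unfold sg ind ph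
    split_ifs <;> omega

open PowerSeries in
theorem cube_coeff (S : Finset ℤ) (n : ℕ) :
    ((∑ k ∈ S, C (sg k) * X ^ pentagonal k : ℤ⟦X⟧) ^ 3).coeff n =
    ∑ k ∈ S, ∑ l ∈ S, ∑ m ∈ S, sg k * (sg l * (sg m *
      if n = pentagonal k + pentagonal l + pentagonal m then 1 else 0)) := by
  rw [pow_succ, pow_two, Finset.sum_mul_sum, Finset.sum_mul, map_sum]
  apply Finset.sum_congr rfl; intro k _
  rw [Finset.sum_mul_sum, map_sum]
  apply Finset.sum_congr rfl; intro l _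
  rw [map_sum]
  apply Finset.sum_congr rfl; intro m _
  have : (C (sg k) * X ^ pentagonal k * (C (sg l) * X ^ pentagonal l) *
      (C (sg m) * X ^ pentagonal m) : ℤ⟦X⟧) =
      C (sg k * (sg l * sg m)) * X ^ (pentagonal k + pentagonal l + pentagonal m) := by
    rw [map_mul, map_mul]; ring
  rw [this, coeff_C_mul, coeff_X_pow]
  ring

open PowerSeries in
theorem cube_congr (P Q : ℤ⟦X⟧) (n : ℕ) (h : ∀ m < n + 1, coeff m P = coeff m Q) :
    coeff n (P ^ 3) = coeff n (Q ^ 3) := by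
  have h1 : (X : ℤ⟦X⟧) ^ (n + 1) ∣ P - Q := by
    rw [X_pow_dvd_iff]
    intro m hm
    rw [map_sub, h m hm, sub_self]
  have h2 := h1.trans (sub_dvd_pow_sub_pow P Q 3)
  rw [X_pow_dvd_iff] at h2
  have := h2 n (by omega)
  rw [map_sub] at this
  linarith

open PowerSeries in
theorem theta_coeff (n : ℕ) :
    ∑ x ∈ Finset.Icc (-((24 * n + 3 : ℕ) : ℤ)) (24 * n + 3 : ℕ),
    ∑ y ∈ Finset.Icc (-((24 * n + 3 : ℕ) : ℤ)) (24 * n + 3 : ℕ),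
    ∑ z ∈ Finset.Icc (-((24 * n + 3 : ℕ) : ℤ)) (24 * n + 3 : ℕ),
      (ind 1 x - ind 5 x) * ((ind 1 y - ind 5 y) * ((ind 1 z - ind 5 z) *
        if x ^ 2 + y ^ 2 + z ^ 2 = ((24 * n + 3 : ℕ) : ℤ) then 1 else 0)) =
    (pentagonalSeries ℤ ^ 3).coeff n := by
  set N := 24 * n + 3 with hN
  simp only [← Finset.mul_sum]
  rw [reindex]
  simp only [reindex]
  set S := (Finset.Icc (-(N : ℤ)) N).filter (fun k => ph k ∈ Finset.Icc (-(N : ℤ)) N) with hS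
  rw [cube_congr (pentagonalSeries ℤ) (∑ k ∈ S, C (sg k) * X ^ pentagonal k) n, cube_coeff]
  · simp only [Finset.mul_sum]
    apply Finset.sum_congr rfl; intro k _
    apply Finset.sum_congr rfl; intro l _
    apply Finset.sum_congr rfl; intro m _
    simp only [ph_sq]
    congr 4
    apply propext
    omega
  · intro m hm
    rw [map_sum]
    simp only [coeff_C_mul, coeff_X_pow]
    by_cases h : m ∈ Set.range pentagonal
    · obtain ⟨k, rfl⟩ := h
      rw [coeff_pentagonalSeries_pentagonal, Finset.sum_eq_single k]
      · simp only [if_true, mul_one, sg]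
        split_ifs with hk
        · rw [Int.negOnePow_even k (Int.even_iff.mpr hk)]; simp
        · rw [Int.negOnePow_odd k (Int.odd_iff.mpr (by omega))]; simp
      · intro b _ hb
        rw [if_neg, mul_zero]
        intro h
        exact hb (pentagonal_injective h).symm
      · intro hk
        exfalso
        apply hk
        have h1 : ph k ∈ Finset.Icc (-(N : ℤ)) N := by
          apply abs_bound
          rw [ph_sq]; omega
        rw [hS, Finset.mem_filter]
        refine ⟨?_, h1⟩
        rw [Finset.mem_Icc] at h1 ⊢
        unfold ph at h1
        split_ifs at h1 <;> omega
    · rw [coeff_pentagonalSeries_eq_zero ℤ h]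
      symm
      apply Finset.sum_eq_zero
      intro k _
      rw [if_neg, mul_zero]
      rintro rfl
      exact h ⟨k, rfl⟩

theorem two_tri (k : ℕ) : 2 * ((k + 1).choose 2) = k * (k + 1) := by
  rw [Nat.choose_two_right, Nat.mul_div_cancel']
  · simp; ring
  · simpa [mul_comm] using (Nat.even_mul_succ_self k).two_dvd

theorem sq_mod8 (r : ℤ) (h : r % 4 = 1) : ∃ s, r ^ 2 = 8 * s + 1 := by
  obtain ⟨t, rfl⟩ : ∃ t, r = 4 * t + 1 := ⟨r / 4, by omega⟩
  exact ⟨2 * t ^ 2 + t, by ring⟩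

theorem odd_sign (k : ℕ) : ((-1 : ℤ) ^ k * (2 * (k : ℤ) + 1)) % 4 = 1 := by
  rcases Nat.even_or_odd k with h | h
  · rw [h.neg_one_pow]
    have := Nat.even_iff.mp h
    omega
  · rw [h.neg_one_pow]
    have := Nat.odd_iff.mp h
    omega

theorem sign_sq (k : ℕ) : ((-1 : ℤ) ^ k * (2 * (k : ℤ) + 1)) ^ 2 = 8 * ((k + 1).choose 2 : ℕ) + 1 := by
  have h : (2 : ℤ) * ((k + 1).choose 2 : ℕ) = k * (k + 1) := by exact_mod_cast two_tri k
  rw [mul_pow, ← pow_mul, mul_comm k 2, pow_mul]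
  simp only [even_two, Even.neg_pow, one_pow, one_mul]
  linear_combination (-4) * h

theorem sq_unique (r s : ℤ) (hr : r % 4 = 1) (hs : s % 4 = 1) (h : r ^ 2 = s ^ 2) : r = s := by
  rcases sq_eq_sq_iff_eq_or_eq_neg.mp h with h | h <;> omega

end SpinorTheta

open SpinorTheta in
theorem spinor_theta_coefficient_identity (N : ℕ) (hN : 0 < N) (u : ℤ)
    (hu : (∃ r : ℤ, r % 4 = 1 ∧ (N : ℤ) = 3 * r ^ 2 ∧ u = r) ∨
      ((¬ ∃ r : ℤ, r % 4 = 1 ∧ (N : ℤ) = 3 * r ^ 2) ∧ u = 0)) :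
    (tripleCount N 5 5 5 : ℤ) + 3 * tripleCount N 5 1 1
      - tripleCount N 1 1 1 - 3 * tripleCount N 1 5 5 = -u := by
  rw [lhs_eq, neg_inj]
  by_cases hmod : N % 24 = 3
  · obtain ⟨n, rfl⟩ : ∃ n, N = 24 * n + 3 := ⟨N / 24, by omega⟩
    rw [theta_coeff, jacobi]
    rcases hu with ⟨r, hr, hNr, rfl⟩ | ⟨hno, rfl⟩
    · -- the unique index
      obtain ⟨k, hk⟩ : ∃ k : ℕ, (-1 : ℤ) ^ k * (2 * (k : ℤ) + 1) = u := by
        rcases le_or_gt 0 u with h | h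
        · refine ⟨(u / 2).toNat, ?_⟩
          rw [Even.neg_one_pow (Nat.even_iff.mpr (by omega))]
          omega
        · refine ⟨((-u) / 2).toNat, ?_⟩
          rw [Odd.neg_one_pow (Nat.odd_iff.mpr (by omega))]
          omega
      have hsq := sign_sq k
      rw [hk] at hsq
      have hn : n = (k + 1).choose 2 := by
        push_cast at hNr
        omega
      rw [Finset.sum_eq_single k]
      · rw [if_pos hn, hk]
      · intro b _ hb
        rw [if_neg]
        intro hb'
        apply hb
        have e1 := sign_sq b
        rw [← hb', hn, ← hsq] at e1
        have e2 := congrArg Int.natAbs (sq_unique _ _ (odd_sign b) hr e1)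
        rw [← hk] at e2
        simp only [Int.natAbs_mul, Int.natAbs_pow, Int.natAbs_neg, Int.natAbs_one, one_pow,
          one_mul] at e2
        omega
      · intro hk'
        exfalso
        apply hk'
        rw [Finset.mem_range]
        have : k ≤ (k + 1).choose 2 := by
          rw [Nat.choose_succ_succ' k 1]; simp
        omega
    · apply Finset.sum_eq_zero
      intro k _
      rw [if_neg]
      intro h
      apply hno
      refine ⟨_, odd_sign k, ?_⟩
      rw [sign_sq, ← h]
      push_cast
      ring
  · have hu0 : u = 0 := by
      rcases hu with ⟨r, hr, hNr, rfl⟩ | ⟨_, h⟩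
      · exfalso
        obtain ⟨s, hs⟩ := sq_mod8 u hr
        omega
      · exact h
    rw [hu0]
    apply Finset.sum_eq_zero; intro x _
    apply Finset.sum_eq_zero; intro y _
    apply Finset.sum_eq_zero; intro z _
    have key : ∀ x : ℤ, ind 1 x - ind 5 x ≠ 0 → ∃ s, x ^ 2 = 24 * s + 1 := by
      intro x hx
      have : x % 12 = 1 ∨ x % 12 = 5 := by
        by_contra hc
        push Not at hc
        apply hx
        simp [ind, hc]
      rcases this with h | h
      · obtain ⟨t, rfl⟩ : ∃ t, x = 12 * t + 1 := ⟨x / 12, by omega⟩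
        exact ⟨6 * t ^ 2 + t, by ring⟩
      · obtain ⟨t, rfl⟩ : ∃ t, x = 12 * t + 5 := ⟨x / 12, by omega⟩
        exact ⟨6 * t ^ 2 + 5 * t + 1, by ring⟩
    by_contra hne
    have n1 := left_ne_zero_of_mul hne
    have n2 := left_ne_zero_of_mul (right_ne_zero_of_mul hne)
    have n3 := left_ne_zero_of_mul (right_ne_zero_of_mul (right_ne_zero_of_mul hne))
    have n4 := right_ne_zero_of_mul (right_ne_zero_of_mul (right_ne_zero_of_mul hne))
    have n5 : x ^ 2 + y ^ 2 + z ^ 2 = (N : ℤ) := by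
      by_contra hc
      exact n4 (if_neg hc)
    obtain ⟨a, ha⟩ := key x n1
    obtain ⟨b, hb⟩ := key y n2
    obtain ⟨c, hc⟩ := key z n3
    omega
end

section
/- Let ℓ be a prime with ℓ ≡ 1 (mod 3). Then A(3ℓ²) + B(3ℓ²) + 3·C(3ℓ²) + 3·D(3ℓ²) = ℓ. -/
/-- Quaternion from components. -/
def qq (a b c d : ℤ) : Quaternion ℤ := ⟨a, b, c, d⟩

@[simp] lemma qq_re (a b c d : ℤ) : (qq a b c d).re = a := rfl
@[simp] lemma qq_imI (a b c d : ℤ) : (qq a b c d).imI = b := rfl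
@[simp] lemma qq_imJ (a b c d : ℤ) : (qq a b c d).imJ = c := rfl
@[simp] lemma qq_imK (a b c d : ℤ) : (qq a b c d).imK = d := rfl

lemma qcast_ne (p : ℤ) (hp : p ≠ 0) : (p : Quaternion ℤ) ≠ 0 := by
  intro h
  apply hp
  have := congrArg (fun q : Quaternion ℤ => q.re) h
  simpa only [Quaternion.re_intCast, Quaternion.re_zero, Int.cast_id] using this

lemma star_mul_mul (w c : Quaternion ℤ) (k n : ℤ) (hwr : w.re = 0) (hcr : c.re = 0)
    (hk : k = 2 * (w.imI * c.imI + w.imJ * c.imJ + w.imK * c.imK))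
    (hn : Quaternion.normSq w = n) :
    star w * c * w = (k : Quaternion ℤ) * w - (n : Quaternion ℤ) * c := by
  rw [Quaternion.normSq_def'] at hn
  rw [hwr] at hn
  subst hk hn
  ext <;> simp only [Quaternion.re_mul, Quaternion.imI_mul, Quaternion.imJ_mul,
    Quaternion.imK_mul, Quaternion.re_star, Quaternion.imI_star, Quaternion.imJ_star,
    Quaternion.imK_star, Quaternion.re_sub, Quaternion.imI_sub, Quaternion.imJ_sub,
    Quaternion.imK_sub, Quaternion.re_intCast, Quaternion.imI_intCast, Quaternion.imJ_intCast,
    Quaternion.imK_intCast, hwr, hcr, Int.cast_id] <;> ring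

open Quaternion in
/-- Halving an even-norm Lipschitz quaternion. -/
lemma lip_half (a : Quaternion ℤ) (h : Even (normSq a)) :
    ∃ b e : Quaternion ℤ, 2 * b = a * e ∧ 2 * normSq b = normSq a := by
  have hN := normSq_def' (a := a)
  rw [hN] at h
  simp only [Int.even_add, Int.even_pow, ne_eq, OfNat.ofNat_ne_zero, not_false_eq_true,
    and_true] at h
  have key : (Even (a.re + a.imI) ∧ Even (a.imJ + a.imK)) ∨
      (Even (a.re + a.imJ) ∧ Even (a.imI + a.imK)) ∨
      (Even (a.re + a.imK) ∧ Even (a.imI + a.imJ)) := by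
    simp only [Int.even_add]; tauto
  rw [hN]
  rcases key with ⟨⟨s, hs⟩, ⟨t, ht⟩⟩ | ⟨⟨s, hs⟩, ⟨t, ht⟩⟩ | ⟨⟨s, hs⟩, ⟨t, ht⟩⟩
  · have e1 : a.imI = s + s - a.re := by linarith
    have e2 : a.imK = t + t - a.imJ := by linarith
    refine ⟨qq (a.re - s) s t (t - a.imJ), qq 1 1 0 0, ?_, ?_⟩
    · rw [two_mul]; ext <;> simp <;> linarith
    · simp only [normSq_def', qq_re, qq_imI, qq_imJ, qq_imK, e1, e2]; ring
  · have e1 : a.imJ = s + s - a.re := by linarith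
    have e2 : a.imK = t + t - a.imI := by linarith
    refine ⟨qq (a.re - s) (a.imI - t) s t, qq 1 0 1 0, ?_, ?_⟩
    · rw [two_mul]; ext <;> simp <;> linarith
    · simp only [normSq_def', qq_re, qq_imI, qq_imJ, qq_imK, e1, e2]; ring
  · have e1 : a.imK = s + s - a.re := by linarith
    have e2 : a.imJ = t + t - a.imI := by linarith
    refine ⟨qq (a.re - s) t (t - a.imI) s, qq 1 0 0 1, ?_, ?_⟩
    · rw [two_mul]; ext <;> simp <;> linarith
    · simp only [normSq_def', qq_re, qq_imI, qq_imJ, qq_imK, e1, e2]; ring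

lemma round_odd (n t : ℤ) (hn : 0 < n) (ho : Odd n) : ∃ q : ℤ, 4 * (t - n * q) ^ 2 < n ^ 2 := by
  refine ⟨(2 * t + n) / (2 * n), ?_⟩
  set q := (2 * t + n) / (2 * n)
  have h1 := Int.mul_ediv_add_emod (2 * t + n) (2 * n)
  have h2 := Int.emod_nonneg (2 * t + n) (by omega : 2 * n ≠ 0)
  have h3 := Int.emod_lt_of_pos (2 * t + n) (by omega : 0 < 2 * n)
  have h4 : (2 * t + n) % (2 * n) ≠ 0 := by
    intro h0
    obtain ⟨k, hk⟩ := ho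
    have : 2 * (n * q) = 2 * t + n := by rw [h0] at h1; linarith
    omega
  have h5 : 0 < (2 * t + n) % (2 * n) := lt_of_le_of_ne h2 (Ne.symm h4)
  set s := (2 * t + n) % (2 * n)
  have h6 : 2 * (t - n * q) = s - n := by linarith
  have : 4 * (t - n * q) ^ 2 = (s - n) ^ 2 := by rw [← h6]; ring
  rw [this]
  apply sq_lt_sq.mpr
  rw [abs_of_pos hn, abs_lt]
  constructor <;> linarith

open Quaternion in
lemma lip_round (n : ℤ) (t : Quaternion ℤ) (hn : 0 < n) (ho : Odd n) :
    ∃ q : Quaternion ℤ, normSq (t - (n : Quaternion ℤ) * q) < n ^ 2 := by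
  obtain ⟨q0, h0⟩ := round_odd n t.re hn ho
  obtain ⟨q1, h1⟩ := round_odd n t.imI hn ho
  obtain ⟨q2, h2⟩ := round_odd n t.imJ hn ho
  obtain ⟨q3, h3⟩ := round_odd n t.imK hn ho
  refine ⟨qq q0 q1 q2 q3, ?_⟩
  rw [normSq_def']
  simp
  linarith

open Quaternion in
/-- The right ideal generated by `w` and an odd integer is principal. -/
lemma lip_gen (p : ℤ) (hp : 0 < p) (ho : Odd p) (w : Quaternion ℤ) :
    ∃ g x y u z : Quaternion ℤ, g = w * x + p * y ∧ w = g * u ∧ (p : Quaternion ℤ) = g * z := by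
  classical
  let I : Quaternion ℤ → Prop := fun r => ∃ x y : Quaternion ℤ, r = w * x + p * y
  have hcomm : ∀ a : Quaternion ℤ, (p : Quaternion ℤ) * a = a * p := fun a => Int.cast_comm p a
  have Imul : ∀ r s, I r → I (r * s) := by
    rintro r s ⟨x, y, rfl⟩
    exact ⟨x * s, y * s, by simp [add_mul, mul_assoc]⟩
  have Isub : ∀ r s, I r → I s → I (r - s) := by
    rintro r s ⟨x, y, rfl⟩ ⟨x', y', rfl⟩
    exact ⟨x - x', y - y', by simp only [mul_sub]; abel⟩
  have Iw : I w := ⟨1, 0, by simp⟩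
  have Ip : I p := ⟨0, 1, by simp⟩
  have hex : ∃ n : ℕ, 0 < n ∧ ∃ r, I r ∧ normSq r = n := by
    refine ⟨(p ^ 2).toNat, Int.pos_iff_toNat_pos.1 (by positivity), p, Ip, ?_⟩
    rw [normSq_intCast, Int.toNat_of_nonneg (by positivity)]; simp
  obtain ⟨hn, g, hg, hgn⟩ := Nat.find_spec hex
  set n := Nat.find hex with hndef
  have hmin : ∀ r, I r → normSq r < n → r = 0 := by
    intro r hr hlt
    by_contra h0
    have hpos : 0 < normSq r := lt_of_le_of_ne normSq_nonneg (Ne.symm (normSq_ne_zero.2 h0))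
    refine Nat.find_min hex (m := (normSq r).toNat) ?_ ⟨?_, r, hr, ?_⟩
    · rw [← hndef]; omega
    · omega
    · omega
  have hodd : Odd (n : ℤ) := by
    by_contra hne
    rw [Int.not_odd_iff_even, ← hgn] at hne
    obtain ⟨b, e, hbe, hb⟩ := lip_half g hne
    have hIb : I b := by
      obtain ⟨k, hk⟩ := ho
      have h1 : I (p * b) := Imul _ _ Ip
      have h2 : I (2 * b * k) := by rw [hbe]; exact Imul _ _ (Imul _ _ hg)
      have := Isub _ _ h1 h2
      have e1 : (p : Quaternion ℤ) * b - 2 * b * k = b := by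
        rw [hk, ← Int.cast_comm k (2 * b)]; push_cast; noncomm_ring
      rwa [e1] at this
    have hnp : (0 : ℤ) < n := by exact_mod_cast hn
    have := hmin b hIb (by omega)
    subst this
    simp at hb
    omega
  have hdiv : ∀ a, I a → ∃ q, a = g * q := by
    intro a ha
    have hnp : (0 : ℤ) < n := by exact_mod_cast hn
    obtain ⟨q, hq⟩ := lip_round n (star g * a) hnp hodd
    refine ⟨q, ?_⟩
    have e1 : star g * a - ((n : ℤ) : Quaternion ℤ) * q = star g * (a - g * q) := by
      rw [mul_sub, ← mul_assoc, star_mul_self, hgn]; rfl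
    rw [e1, map_mul, normSq_star, hgn] at hq
    have := hmin (a - g * q) (Isub _ _ ha (Imul _ _ hg)) (by nlinarith)
    exact sub_eq_zero.mp this
  obtain ⟨x, y, hxy⟩ := hg
  obtain ⟨u, hu⟩ := hdiv w Iw
  obtain ⟨z, hz⟩ := hdiv p Ip
  exact ⟨g, x, y, u, z, hxy, hu, hz⟩

open Quaternion in
lemma lip_prime (p : ℕ) (hp : p.Prime) (ho : Odd p) (w : Quaternion ℤ)
    (hw : (p : ℤ) ∣ normSq w) (hnd : ¬ (p : Quaternion ℤ) ∣ w) :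
    ∃ g x y u : Quaternion ℤ, normSq g = p ∧ g = w * x + p * y ∧ w = g * u := by
  obtain ⟨g, x, y, u, z, hg, hu, hz⟩ := lip_gen p (by exact_mod_cast hp.pos)
    (by exact_mod_cast ho) w
  refine ⟨g, x, y, u, ?_, by simpa using hg, hu⟩
  have hpg : (p : ℤ) ∣ normSq g := by
    rw [hg, normSq_add, map_mul, map_mul]
    refine dvd_add (dvd_add (hw.mul_right _) ?_) ?_
    · rw [normSq_intCast]; exact (dvd_pow_self _ two_ne_zero).mul_right _
    · have : ((w * x) * star (((p : ℤ) : Quaternion ℤ) * y)).re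
        = p * ((w * x) * star y).re := by simp; ring
      rw [this]
      exact (dvd_mul_right _ _).mul_left _
  have h2 : normSq g * normSq z = (p : ℤ) ^ 2 := by
    rw [← map_mul, ← hz, normSq_intCast]; simp
  have hgd : normSq g ∣ (p : ℤ) ^ 2 := ⟨_, h2.symm⟩
  obtain ⟨m, hm⟩ := hpg
  have hp0 : (p : ℤ) ≠ 0 := by exact_mod_cast hp.ne_zero
  have hmz : m * normSq z = p := by
    rw [hm] at h2
    apply mul_left_cancel₀ hp0
    rw [← mul_assoc, h2]; ring
  have hpp : (0:ℤ) < p := by exact_mod_cast hp.pos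
  have hz0 : 0 ≤ normSq z := normSq_nonneg
  have hm0 : 0 < m := by
    by_contra h; nlinarith
  have hmd : m ∣ p := ⟨_, hmz.symm⟩
  lift m to ℕ using hm0.le
  rcases (Nat.dvd_prime hp).1 (by exact_mod_cast hmd) with h1 | h1
  · rw [hm, h1]; simp
  · exfalso
    rw [h1] at hmz
    have hz1 : normSq z = 1 := by
      apply mul_left_cancel₀ hp0; rw [hmz]; simp
    apply hnd
    refine ⟨star z * u, ?_⟩
    have : (p : Quaternion ℤ) = g * z := by simpa using hz
    rw [this, mul_assoc, ← mul_assoc z, self_mul_star, hz1, hu]; simp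

open Quaternion in
lemma rep_cross (p : ℤ) (g u w v c : Quaternion ℤ) (hg : normSq g = p) (hw : w = g * u)
    (hv : v = g * c * star g) : (p : Quaternion ℤ) ∣ v * w := by
  refine ⟨g * c * u, ?_⟩
  have : star g * g = (p : Quaternion ℤ) := by rw [star_mul_self, hg]; rfl
  rw [hv, hw]
  calc g * c * star g * (g * u) = g * c * (star g * g) * u := by noncomm_ring
    _ = _ := by rw [this, ← Int.cast_comm p (g * c), mul_assoc]

open Quaternion in
/-- Finish: from divisibility get the pure quaternion of norm 3. -/
lemma rep_finish (p : ℤ) (hp : p ≠ 0) (g v c : Quaternion ℤ) (hg : normSq g = p)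
    (hv : v.re = 0) (hn : normSq v = 3 * p ^ 2) (h : v = g * c * star g) :
    c.re = 0 ∧ normSq c = 3 := by
  constructor
  · have : p * p * c.re = 0 := by
      have e : (star g * v * g).re = 0 := by
        simp [hv]; ring
      have h1 : star g * g = (p : Quaternion ℤ) := by rw [star_mul_self, hg]; rfl
      have h2 : star g * v * g = (p : Quaternion ℤ) * c * p := by
        rw [h]
        calc star g * (g * c * star g) * g = (star g * g) * c * (star g * g) := by noncomm_ring
          _ = _ := by rw [h1]
      rw [h2] at e
      simp at e
      simp; tauto
    simpa [hp] using this
  · rw [h, map_mul, map_mul, normSq_star, hg] at hn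
    have : p ^ 2 ≠ 0 := pow_ne_zero _ hp
    apply mul_left_cancel₀ this
    linarith

open Quaternion in
lemma rep_prim (p : ℤ) (hp : p ≠ 0) (g x y u w v s s' : Quaternion ℤ) (k k' : ℤ)
    (hg : normSq g = p)
    (hgx : g = w * x + p * y) (hw : w = g * u) (hv : v.re = 0) (hn : normSq v = 3 * p ^ 2)
    (h1 : v = k * w + p * s) (h2 : w = k' * v + p * s') :
    ∃ c, v = g * c * star g := by
  have hgg : star g * g = (p : Quaternion ℤ) := by rw [star_mul_self, hg]; rfl
  have hgg' : g * star g = (p : Quaternion ℤ) := by rw [self_mul_star, hg]; rfl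
  have hp0 : (p : Quaternion ℤ) ≠ 0 := qcast_ne p hp
  -- v = g * b
  obtain ⟨b, hb⟩ : ∃ b, v = g * b := by
    refine ⟨k * u + star g * s, ?_⟩
    rw [mul_add, ← mul_assoc, ← mul_assoc, hgg', ← Int.cast_comm k g, mul_assoc, ← hw]
    exact h1
  have hstar : star v = - v := by
    ext <;> simp [hv]
  have hbn : normSq b = 3 * p := by
    rw [hb, map_mul, hg] at hn
    apply mul_left_cancel₀ hp; linarith
  have hbb : b * star b = ((3 * p : ℤ) : Quaternion ℤ) := by rw [self_mul_star, hbn]; rfl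
  have hbv : b * v = - (((3 * p : ℤ) : Quaternion ℤ) * star g) := by
    have : v = - (star b * star g) := by rw [← star_mul, ← hb, hstar, neg_neg]
    rw [this, mul_neg, ← mul_assoc, hbb]
  -- b * g divisible by p
  obtain ⟨d, hd⟩ : ∃ d, b * g = p * d := by
    refine ⟨k' * (-(3 * star g)) * x + b * s' * x + b * y, ?_⟩
    have e1 : b * g = k' * (b * v) * x + p * (b * s' * x + b * y) := by
      rw [hgx]
      conv_lhs => rw [h2]
      have c1 := Int.cast_comm p b
      have c2 := Int.cast_comm k' b
      calc b * ((k' * v + p * s') * x + p * y)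
          = (b * k') * v * x + (b * p) * s' * x + (b * p) * y := by noncomm_ring
        _ = (k' * b) * v * x + (p * b) * s' * x + (p * b) * y := by rw [c1, c2]
        _ = _ := by noncomm_ring
    rw [e1, hbv]
    have c3 := Int.cast_comm p ((k' : Quaternion ℤ))
    push_cast
    have c4 : (3 : Quaternion ℤ) * p = p * 3 := (Int.cast_comm p (3 : Quaternion ℤ)).symm
    rw [c4]
    calc (k' : Quaternion ℤ) * -(p * 3 * star g) * x + p * (b * s' * x + b * y)
        = (k' * p) * -(3 * star g) * x + p * (b * s' * x + b * y) := by noncomm_ring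
      _ = (p * k') * -(3 * star g) * x + p * (b * s' * x + b * y) := by rw [c3]
      _ = _ := by noncomm_ring
  refine ⟨d, ?_⟩
  apply mul_left_cancel₀ hp0
  calc (p : Quaternion ℤ) * v = v * p := Int.cast_comm p v
    _ = g * (b * g) * star g := by rw [hb, ← hgg']; noncomm_ring
    _ = (g * p) * d * star g := by rw [hd]; noncomm_ring
    _ = _ := by rw [← Int.cast_comm p g]; noncomm_ring

open Quaternion in
lemma rep_nonprim (p : ℤ) (hp : p ≠ 0) (g x y w c0 : Quaternion ℤ) (d : ℤ)
    (hg : normSq g = p) (hgx : g = w * x + p * y) (hwr : w.re = 0) (hcr : c0.re = 0)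
    (hwn : p ∣ normSq w)
    (hd : w.imI * c0.imI + w.imJ * c0.imJ + w.imK * c0.imK = p * d) :
    ∃ c, (p : Quaternion ℤ) * c0 = g * c * star g := by
  have hgg' : g * star g = (p : Quaternion ℤ) := by rw [self_mul_star, hg]; rfl
  have hp0 : (p : Quaternion ℤ) ≠ 0 := qcast_ne p hp
  obtain ⟨m, hm⟩ := hwn
  have e0 : star w * c0 * w = p * (2 * d * w - m * c0) := by
    rw [star_mul_mul w c0 (2 * (p * d)) (p * m) hwr hcr (by rw [hd]) hm]
    have := Int.cast_comm p (2 : Quaternion ℤ)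
    push_cast
    rw [← mul_assoc (2 : Quaternion ℤ), ← this]
    simp only [mul_sub, mul_assoc]
  obtain ⟨c, hc⟩ : ∃ c, star g * c0 * g = p * c := by
    refine ⟨star x * (2 * d * w - m * c0) * x + star x * star w * c0 * y
      + star y * c0 * g, ?_⟩
    have c1 := fun a => Int.cast_comm p (a : Quaternion ℤ)
    have e1 : star g = star x * star w + p * star y := by
      rw [hgx]; simp [c1]
    calc star g * c0 * g = (star x * star w) * c0 * g + p * star y * c0 * g := by
          rw [e1]; noncomm_ring
      _ = (star x * star w) * c0 * (w * x + p * y) + p * star y * c0 * g := by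
          rw [← hgx]
      _ = star x * (star w * c0 * w) * x + (star x * star w * c0 * p) * y
          + p * star y * c0 * g := by noncomm_ring
      _ = (star x * p) * (2 * d * w - m * c0) * x + (star x * star w * c0 * p) * y
          + p * star y * c0 * g := by rw [e0]; noncomm_ring
      _ = (p * star x) * (2 * d * w - m * c0) * x + (p * (star x * star w * c0)) * y
          + p * star y * c0 * g := by rw [c1 (star x), c1 (star x * star w * c0)]
      _ = _ := by noncomm_ring
  refine ⟨c, ?_⟩
  apply mul_left_cancel₀ hp0
  have c2 := Int.cast_comm p g
  have c3 := Int.cast_comm p c0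
  calc (p : Quaternion ℤ) * (p * c0) = p * c0 * p := by rw [mul_assoc, c3]
    _ = g * (star g * c0 * g) * star g := by rw [← hgg']; noncomm_ring
    _ = (g * p) * c * star g := by rw [hc]; noncomm_ring
    _ = (p * g) * c * star g := by rw [c2]
    _ = _ := by noncomm_ring

open Quaternion in
lemma rep_nonprim_conv (p : ℤ) (hp : p ≠ 0) (g u w c0 c : Quaternion ℤ)
    (hg : normSq g = p) (hw : w = g * u) (hwr : w.re = 0) (hcr : c0.re = 0)
    (hwn : p ∣ normSq w) (h : (p : Quaternion ℤ) * c0 = g * c * star g) :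
    (p : Quaternion ℤ) ∣
      ((2 * (w.imI * c0.imI + w.imJ * c0.imJ + w.imK * c0.imK) : ℤ) : Quaternion ℤ) * w := by
  have hgg : star g * g = (p : Quaternion ℤ) := by rw [star_mul_self, hg]; rfl
  have hp0 : (p : Quaternion ℤ) ≠ 0 := qcast_ne p hp
  have c1 := fun a => Int.cast_comm p (a : Quaternion ℤ)
  have e0 : star g * c0 * g = p * c := by
    apply mul_left_cancel₀ hp0
    calc (p : Quaternion ℤ) * (star g * c0 * g) = (p * star g) * c0 * g := by noncomm_ring
      _ = star g * (p * c0) * g := by rw [c1]; noncomm_ring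
      _ = (star g * g) * c * (star g * g) := by rw [h]; noncomm_ring
      _ = _ := by rw [hgg, mul_assoc, ← c1]
  have e1 : star w * c0 * w = p * (star u * c * u) := by
    calc star w * c0 * w = star u * (star g * c0 * g) * u := by
          rw [hw, star_mul]; noncomm_ring
      _ = (star u * p) * c * u := by rw [e0]; noncomm_ring
      _ = _ := by rw [← c1]; noncomm_ring
  obtain ⟨m, hm⟩ := hwn
  have e2 := star_mul_mul w c0 _ (p * m) hwr hcr rfl hm
  refine ⟨star u * c * u + m * c0, ?_⟩
  have e3 := eq_add_of_sub_eq (e2.symm.trans e1)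
  rw [e3, mul_add, Int.cast_mul, mul_assoc (p : Quaternion ℤ) (m : Quaternion ℤ) c0]

/-- Points of the conic `x² + y² + z² = 0`. -/
def conic {F : Type*} [Field F] (ω : F) : Option F → F × F × F
  | none => (1, ω ^ 2, ω)
  | some t => (2 * t + 2 - t ^ 2, 2 * t + 2 * ω - t ^ 2 * ω ^ 2, 2 * t + 2 * ω ^ 2 - t ^ 2 * ω)

section
variable {F : Type*} [Field F] (ω : F) (hω : ω ^ 2 + ω + 1 = 0) (h2 : (2 : F) ≠ 0)
  (h3 : (3 : F) ≠ 0)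

lemma conic_iso (hω : ω ^ 2 + ω + 1 = 0) (i : Option F) :
    (conic ω i).1 ^ 2 + (conic ω i).2.1 ^ 2 + (conic ω i).2.2 ^ 2 = 0 := by
  rcases i with _ | t <;> simp only [conic] <;> grind

lemma conic_ne (hω : ω ^ 2 + ω + 1 = 0) (h2 : (2 : F) ≠ 0) (h3 : (3 : F) ≠ 0) (i : Option F)
    (h : (conic ω i).1 = 0 ∧ (conic ω i).2.1 = 0 ∧ (conic ω i).2.2 = 0) : False := by
  rcases i with _ | t
  · simp [conic] at h
  · simp only [conic] at h
    obtain ⟨a, b, c⟩ := h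
    have : (2 : F) * 3 = 0 := by grind
    simp_all

lemma conic_uniq (hω : ω ^ 2 + ω + 1 = 0) (h2 : (2 : F) ≠ 0) (h3 : (3 : F) ≠ 0)
    (i j : Option F)
    (ha : (conic ω i).1 * (conic ω j).2.1 = (conic ω i).2.1 * (conic ω j).1)
    (hb : (conic ω i).1 * (conic ω j).2.2 = (conic ω i).2.2 * (conic ω j).1)
    (hc : (conic ω i).2.1 * (conic ω j).2.2 = (conic ω i).2.2 * (conic ω j).2.1) : i = j := by
  have h23 : (2 : F) * 3 * 3 ≠ 0 := by simp [h2, h3]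
  have hw3 : ω ^ 3 = 1 := by grind
  rcases i with _ | t <;> rcases j with _ | s <;> simp only [conic] at ha hb hc
  · rfl
  · exfalso
    apply h23
    grind
  · exfalso
    apply h23
    grind
  · have h : (2 : F) * 3 * (2 * 3) * (t - s) = 0 := by
      grind
    have : t - s = 0 := by simpa [h2, h3] using h
    rw [sub_eq_zero.1 this]

lemma conic_exists (hω : ω ^ 2 + ω + 1 = 0) (h2 : (2 : F) ≠ 0) (h3 : (3 : F) ≠ 0)
    (x y z : F) (hn : x ^ 2 + y ^ 2 + z ^ 2 = 0) (h0 : ¬ (x = 0 ∧ y = 0 ∧ z = 0)) :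
    ∃ i k, k ≠ 0 ∧ x = k * (conic ω i).1 ∧ y = k * (conic ω i).2.1 ∧
      z = k * (conic ω i).2.2 := by
  have hw3 : ω ^ 3 = 1 := by grind
  obtain ⟨a, ha⟩ : ∃ a, 3 * a = x + y + z := ⟨(x + y + z) / 3, by field_simp⟩
  obtain ⟨b, hb⟩ : ∃ b, 3 * b = x + ω ^ 2 * y + ω * z :=
    ⟨(x + ω ^ 2 * y + ω * z) / 3, by field_simp⟩
  obtain ⟨c, hc⟩ : ∃ c, 3 * c = x + ω * y + ω ^ 2 * z :=
    ⟨(x + ω * y + ω ^ 2 * z) / 3, by field_simp⟩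
  have hx : x = a + b + c := by apply mul_left_cancel₀ h3; grind
  have hy : y = a + ω * b + ω ^ 2 * c := by apply mul_left_cancel₀ h3; grind
  have hz : z = a + ω ^ 2 * b + ω * c := by apply mul_left_cancel₀ h3; grind
  have hq : a ^ 2 + 2 * b * c = 0 := by apply mul_left_cancel₀ h3; grind
  by_cases hb0 : b = 0
  · have ha0 : a = 0 := by simpa [hb0] using hq
    refine ⟨none, c, ?_, ?_, ?_, ?_⟩
    · rintro rfl; apply h0; simp [hx, hy, hz, ha0, hb0]
    all_goals simp only [conic, hx, hy, hz, ha0, hb0]; ring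
  · have ht : a = b * (a / b) := by field_simp
    set t := a / b
    have hk : b = b / 2 * 2 := by field_simp
    have hk0 : b / 2 ≠ 0 := div_ne_zero hb0 h2
    set k := b / 2
    have hc' : c = - k * t ^ 2 := by
      apply mul_left_cancel₀ h2
      apply mul_left_cancel₀ hb0
      grind
    refine ⟨some t, k, hk0, ?_, ?_, ?_⟩ <;> simp only [conic] <;> grind

lemma conic_orth [Fintype F] [DecidableEq F] (hω : ω ^ 2 + ω + 1 = 0) (h2 : (2 : F) ≠ 0)
    (h3 : (3 : F) ≠ 0)
    (e1 e2 e3 : F) (he1 : e1 = 1 ∨ e1 = -1) (he2 : e2 = 1 ∨ e2 = -1) (he3 : e3 = 1 ∨ e3 = -1) :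
    (Finset.univ.filter (fun i => (conic ω i).1 * e1 + (conic ω i).2.1 * e2
      + (conic ω i).2.2 * e3 = 0)).card = 2 := by
  have hw3 : ω ^ 3 = 1 := by grind
  have hw0 : ω ≠ 0 := by rintro rfl; simp at hω
  have key : ∀ r s : F, r ≠ s → (∀ i, ((conic ω i).1 * e1 + (conic ω i).2.1 * e2
      + (conic ω i).2.2 * e3 = 0) ↔ (i = some r ∨ i = some s)) →
      (Finset.univ.filter (fun i => (conic ω i).1 * e1 + (conic ω i).2.1 * e2
      + (conic ω i).2.2 * e3 = 0)).card = 2 := by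
    intro r s hrs h
    rw [show (Finset.univ.filter (fun i => (conic ω i).1 * e1 + (conic ω i).2.1 * e2
      + (conic ω i).2.2 * e3 = 0)) = {some r, some s} by ext i; simp [h]]
    exact Finset.card_pair (by simpa using hrs)
  have key0 : (∀ i, ((conic ω i).1 * e1 + (conic ω i).2.1 * e2
      + (conic ω i).2.2 * e3 = 0) ↔ (i = none ∨ i = some 0)) →
      (Finset.univ.filter (fun i => (conic ω i).1 * e1 + (conic ω i).2.1 * e2
      + (conic ω i).2.2 * e3 = 0)).card = 2 := by
    intro h
    rw [show (Finset.univ.filter (fun i => (conic ω i).1 * e1 + (conic ω i).2.1 * e2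
      + (conic ω i).2.2 * e3 = 0)) = {none, some 0} by ext i; simp [h]]
    exact Finset.card_pair (by simp)
  -- the four lines up to sign
  have L0 : (e2 = e1 ∧ e3 = e1) → ∀ i, ((conic ω i).1 * e1 + (conic ω i).2.1 * e2
      + (conic ω i).2.2 * e3 = 0) ↔ (i = none ∨ i = some 0) := by
    rintro ⟨rfl, rfl⟩ (_ | t)
    · simp only [conic, true_or, iff_true]; grind
    · simp only [conic, reduceCtorEq, false_or, Option.some.injEq]
      have : (2 * t + 2 - t ^ 2) * e3 + (2 * t + 2 * ω - t ^ 2 * ω ^ 2) * e3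
        + (2 * t + 2 * ω ^ 2 - t ^ 2 * ω) * e3 = 2 * 3 * e3 * t := by grind
      rw [this]
      have : e3 ≠ 0 := by rcases he1 with h | h <;> simp [h]
      simp [h2, h3, this]
  -- with `r` a cube root of unity
  have L1 : ∀ r : F, r ≠ 0 → (∀ t, ∃ d : F, d ≠ 0 ∧ (conic ω (some t)).1 * e1 +
        (conic ω (some t)).2.1 * e2 + (conic ω (some t)).2.2 * e3 = d * ((t - r) * (t + 2 * r))) →
      ((conic ω none).1 * e1 + (conic ω none).2.1 * e2 + (conic ω none).2.2 * e3 ≠ 0) →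
      (Finset.univ.filter (fun i => (conic ω i).1 * e1 + (conic ω i).2.1 * e2
      + (conic ω i).2.2 * e3 = 0)).card = 2 := by
    intro r hr h hn
    apply key r (-(2 * r))
    · intro h'
      have : 3 * r = 0 := by grind
      simp [h3, hr] at this
    · rintro (_ | t)
      · simp [hn]
      · obtain ⟨d, hd, hd'⟩ := h t
        rw [hd']
        simp [hd, sub_eq_zero, eq_neg_iff_add_eq_zero]
  have n2 : (-2 : F) ≠ 0 := by simpa using h2
  rcases he1 with rfl | rfl <;> rcases he2 with rfl | rfl <;> rcases he3 with rfl | rfl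
  · exact key0 (L0 ⟨rfl, rfl⟩)
  · refine L1 (ω ^ 2) (by simp [hw0]) (fun t => ⟨2 * ω, by simp [h2, hw0], ?_⟩) ?_
    · simp only [conic]; grind
    · simp only [conic]
      rw [show (1 * 1 + ω ^ 2 * 1 + ω * -1 : F) = -2 * ω by grind]; simp [h2, hw0]
  · refine L1 ω (by simp [hw0]) (fun t => ⟨2 * ω ^ 2, by simp [h2, hw0], ?_⟩) ?_
    · simp only [conic]; grind
    · simp only [conic]
      rw [show (1 * 1 + ω ^ 2 * -1 + ω * 1 : F) = -2 * ω ^ 2 by grind]; simp [h2, hw0]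
  · refine L1 1 (by simp) (fun t => ⟨-2, by simp [h2], ?_⟩) ?_
    · simp only [conic]; grind
    · simp only [conic]
      rw [show (1 * 1 + ω ^ 2 * -1 + ω * -1 : F) = 2 by grind]; simp [h2]
  · refine L1 1 (by simp) (fun t => ⟨2, by simp [h2], ?_⟩) ?_
    · simp only [conic]; grind
    · simp only [conic]
      rw [show (1 * -1 + ω ^ 2 * 1 + ω * 1 : F) = -2 by grind]; simp [h2]
  · refine L1 ω (by simp [hw0]) (fun t => ⟨-2 * ω ^ 2, by simp [h2, hw0], ?_⟩) ?_
    · simp only [conic]; grind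
    · simp only [conic]
      rw [show (1 * -1 + ω ^ 2 * 1 + ω * -1 : F) = 2 * ω ^ 2 by grind]; simp [h2, hw0]
  · refine L1 (ω ^ 2) (by simp [hw0]) (fun t => ⟨-2 * ω, by simp [h2, hw0], ?_⟩) ?_
    · simp only [conic]; grind
    · simp only [conic]
      rw [show (1 * -1 + ω ^ 2 * -1 + ω * 1 : F) = 2 * ω by grind]; simp [h2, hw0]
  · exact key0 (L0 ⟨rfl, rfl⟩)
end

lemma exists_omega (p : ℕ) [Fact p.Prime] (h3 : p % 3 = 1) : ∃ ω : ZMod p, ω ^ 2 + ω + 1 = 0 := by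
  have hc : 3 ∣ Fintype.card (ZMod p)ˣ := by
    rw [ZMod.card_units]; omega
  have : Fact (Nat.Prime 3) := ⟨Nat.prime_three⟩
  obtain ⟨u, hu⟩ := exists_prime_orderOf_dvd_card 3 hc
  refine ⟨u, ?_⟩
  have h1 : (u : ZMod p) ^ 3 = 1 := by
    have := pow_orderOf_eq_one u
    rw [hu] at this
    rw [← Units.val_pow_eq_pow_val, this, Units.val_one]
  have h2 : (u : ZMod p) - 1 ≠ 0 := by
    intro h
    have : u = 1 := by ext; simpa using sub_eq_zero.1 h
    rw [this] at hu; simp at hu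
  apply mul_left_cancel₀ h2
  linear_combination h1

lemma qdvd_iff (p : ℤ) (q : Quaternion ℤ) :
    (p : Quaternion ℤ) ∣ q ↔ p ∣ q.re ∧ p ∣ q.imI ∧ p ∣ q.imJ ∧ p ∣ q.imK := by
  constructor
  · rintro ⟨r, rfl⟩
    simp
  · rintro ⟨⟨a, ha⟩, ⟨b, hb⟩, ⟨c, hc⟩, ⟨d, hd⟩⟩
    refine ⟨qq a b c d, ?_⟩
    ext <;> simp [ha, hb, hc, hd]

/-- Integer points on a sphere. -/
noncomputable def sph (N : ℕ) : Finset (ℤ × ℤ × ℤ) :=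
  ((Finset.Icc (-(N : ℤ)) N) ×ˢ (Finset.Icc (-(N : ℤ)) N) ×ˢ (Finset.Icc (-(N : ℤ)) N)).filter
    (fun t => t.1 ^ 2 + t.2.1 ^ 2 + t.2.2 ^ 2 = (N : ℤ))

lemma mem_sph (N : ℕ) (t : ℤ × ℤ × ℤ) :
    t ∈ sph N ↔ t.1 ^ 2 + t.2.1 ^ 2 + t.2.2 ^ 2 = (N : ℤ) := by
  simp only [sph, Finset.mem_filter, Finset.mem_product, Finset.mem_Icc, and_iff_right_iff_imp]
  intro h
  have key : ∀ x : ℤ, x ^ 2 ≤ N → -(N : ℤ) ≤ x ∧ x ≤ N := by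
    intro x hx
    constructor <;> nlinarith [Int.le_self_sq x, Int.le_self_sq (-x)]
  refine ⟨key _ ?_, key _ ?_, key _ ?_⟩ <;>
    nlinarith [sq_nonneg t.1, sq_nonneg t.2.1, sq_nonneg t.2.2]

lemma sph_three_pm : ∀ t ∈ sph 3, (t.1 = 1 ∨ t.1 = -1) ∧ (t.2.1 = 1 ∨ t.2.1 = -1) ∧
    (t.2.2 = 1 ∨ t.2.2 = -1) := by
  rintro ⟨x, y, z⟩ h
  rw [mem_sph] at h
  push_cast at h
  have key : ∀ r : ℤ, r ^ 2 ≤ 3 → -1 ≤ r ∧ r ≤ 1 := by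
    intro r hr
    constructor <;> nlinarith
  obtain ⟨a1, a2⟩ := key x (by nlinarith [sq_nonneg y, sq_nonneg z])
  obtain ⟨b1, b2⟩ := key y (by nlinarith [sq_nonneg x, sq_nonneg z])
  obtain ⟨c1, c2⟩ := key z (by nlinarith [sq_nonneg y, sq_nonneg x])
  interval_cases x <;> interval_cases y <;> interval_cases z <;> simp at h ⊢

lemma card_sph_three : (sph 3).card = 8 := by
  have : sph 3 = ({1, -1} : Finset ℤ) ×ˢ ({1, -1} : Finset ℤ) ×ˢ ({1, -1} : Finset ℤ) := by
    ext t
    simp only [Finset.mem_product, Finset.mem_insert, Finset.mem_singleton]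
    refine ⟨sph_three_pm t, ?_⟩
    rintro ⟨h1 | h1, h2 | h2, h3 | h3⟩ <;> rw [mem_sph, h1, h2, h3] <;> norm_num
  rw [this]
  rfl

/-- Pure quaternion of a vector. -/
def vec (t : ℤ × ℤ × ℤ) : Quaternion ℤ := qq 0 t.1 t.2.1 t.2.2

@[simp] lemma vec_re (t : ℤ × ℤ × ℤ) : (vec t).re = 0 := rfl
@[simp] lemma vec_imI (t : ℤ × ℤ × ℤ) : (vec t).imI = t.1 := rfl
@[simp] lemma vec_imJ (t : ℤ × ℤ × ℤ) : (vec t).imJ = t.2.1 := rfl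
@[simp] lemma vec_imK (t : ℤ × ℤ × ℤ) : (vec t).imK = t.2.2 := rfl

lemma vec_norm (t : ℤ × ℤ × ℤ) :
    Quaternion.normSq (vec t) = t.1 ^ 2 + t.2.1 ^ 2 + t.2.2 ^ 2 := by
  rw [Quaternion.normSq_def']; simp

/-- Vector part. -/
def unvec (q : Quaternion ℤ) : ℤ × ℤ × ℤ := (q.imI, q.imJ, q.imK)

lemma vec_unvec (q : Quaternion ℤ) (h : q.re = 0) : vec (unvec q) = q := by
  ext <;> simp [unvec, h]

lemma unvec_vec (t : ℤ × ℤ × ℤ) : unvec (vec t) = t := rfl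

lemma conj_re (g : Quaternion ℤ) (t : ℤ × ℤ × ℤ) : (g * vec t * star g).re = 0 := by
  simp; ring

open Quaternion in
lemma row_count (p : ℕ) (hp : p ≠ 0) (g : Quaternion ℤ) (hg : normSq g = p)
    [DecidablePred fun v => ∃ c ∈ sph 3, vec v = g * vec c * star g] :
    ((sph (3 * p ^ 2)).filter (fun v => ∃ c ∈ sph 3, vec v = g * vec c * star g)).card = 8 := by
  classical
  rw [← card_sph_three]
  have : (sph (3 * p ^ 2)).filter (fun v => ∃ c ∈ sph 3, vec v = g * vec c * star g)
      = (sph 3).image (fun c => unvec (g * vec c * star g)) := by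
    ext v
    simp only [Finset.mem_filter, Finset.mem_image]
    constructor
    · rintro ⟨_, c, hc, h⟩
      exact ⟨c, hc, by rw [← h, unvec_vec]⟩
    · rintro ⟨c, hc, rfl⟩
      have e := vec_unvec _ (conj_re g c)
      refine ⟨?_, c, hc, e⟩
      rw [mem_sph, ← vec_norm, e, map_mul, map_mul, normSq_star, hg, vec_norm,
        (mem_sph _ _).1 hc]
      push_cast; ring
  rw [this]
  apply Finset.card_image_of_injective
  intro a b hab
  have h : g * vec a * star g = g * vec b * star g := by
    have := congrArg vec hab
    simpa only [vec_unvec _ (conj_re g _)] using this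
  have hg0 : g ≠ 0 := by
    rintro rfl; simp at hg; exact hp (by exact_mod_cast hg.symm)
  have hsg : star g ≠ 0 := by simpa using hg0
  have := mul_left_cancel₀ hg0 (mul_right_cancel₀ hsg h)
  rw [← unvec_vec a, this, unvec_vec]

open Quaternion in
theorem card_sph_main (p : ℕ) (hp : p.Prime) (hp3 : p % 3 = 1) :
    (sph (3 * p ^ 2)).card = 8 * p := by
  classical
  have : Fact p.Prime := ⟨hp⟩
  have hpp : p ≠ 2 := by rintro rfl; simp at hp3
  have hpodd : Odd p := hp.odd_of_ne_two hpp
  obtain ⟨ω, hω⟩ := exists_omega p hp3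
  have h2 : (2 : ZMod p) ≠ 0 := by
    intro h
    have : p ∣ 2 := (ZMod.natCast_eq_zero_iff 2 p).1 (by exact_mod_cast h)
    exact hpp ((Nat.prime_dvd_prime_iff_eq hp Nat.prime_two).1 this)
  have h3 : (3 : ZMod p) ≠ 0 := by
    intro h
    have : p ∣ 3 := (ZMod.natCast_eq_zero_iff 3 p).1 (by exact_mod_cast h)
    have := (Nat.prime_dvd_prime_iff_eq hp Nat.prime_three).1 this
    omega
  have hp0 : (p : ℤ) ≠ 0 := by exact_mod_cast hp.ne_zero
  have zc : ∀ n : ℤ, (n : ZMod p) = 0 ↔ (p : ℤ) ∣ n := fun n => ZMod.intCast_zmod_eq_zero_iff_dvd n p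
  -- lifts
  have lift : ∀ i : Option (ZMod p), ∃ w : ℤ × ℤ × ℤ,
      (w.1 : ZMod p) = (conic ω i).1 ∧ (w.2.1 : ZMod p) = (conic ω i).2.1 ∧
      (w.2.2 : ZMod p) = (conic ω i).2.2 := by
    intro i
    obtain ⟨a, ha⟩ := ZMod.intCast_surjective (conic ω i).1
    obtain ⟨b, hb⟩ := ZMod.intCast_surjective (conic ω i).2.1
    obtain ⟨c, hc⟩ := ZMod.intCast_surjective (conic ω i).2.2
    exact ⟨(a, b, c), ha, hb, hc⟩
  choose w hw1 hw2 hw3 using lift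
  have hwn : ∀ i, (p : ℤ) ∣ normSq (vec (w i)) := by
    intro i
    rw [vec_norm, ← zc]
    push_cast
    rw [hw1, hw2, hw3]; exact conic_iso ω hω i
  have hwd : ∀ i, ¬ (((p : ℤ) : Quaternion ℤ) ∣ vec (w i)) := by
    intro i h
    rw [qdvd_iff] at h
    simp only [vec_imI, vec_imJ, vec_imK, ← zc, hw1, hw2, hw3] at h
    exact conic_ne ω hω h2 h3 i h.2
  have hgen := fun i => lip_prime p hp hpodd (vec (w i)) (hwn i) (by simpa using hwd i)
  choose g x y u hgn hgx hgu using hgen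
  let R : Option (ZMod p) → ℤ × ℤ × ℤ → Prop :=
    fun i v => ∃ c ∈ sph 3, vec v = g i * vec c * star (g i)
  have hdc := Finset.sum_card_bipartiteAbove_eq_sum_card_bipartiteBelow (s := Finset.univ)
    (t := sph (3 * p ^ 2)) R
  have hrow : ∀ i ∈ (Finset.univ : Finset (Option (ZMod p))),
      (Finset.bipartiteAbove R (sph (3 * p ^ 2)) i).card = 8 := by
    intro i _
    exact row_count p hp.ne_zero (g i) (hgn i)
  rw [Finset.sum_congr rfl hrow] at hdc
  simp only [Finset.sum_const, Finset.card_univ, Fintype.card_option, ZMod.card,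
    smul_eq_mul] at hdc
  -- finishing representation
  have fin : ∀ i v c, v ∈ sph (3 * p ^ 2) → vec v = g i * c * star (g i) → R i v := by
    intro i v c hv h
    obtain ⟨hc1, hc2⟩ := rep_finish p hp0 (g i) (vec v) c (hgn i) (vec_re v)
      (by rw [vec_norm, (mem_sph _ _).1 hv]; push_cast; ring) h
    refine ⟨unvec c, ?_, ?_⟩
    · rw [mem_sph, ← vec_norm, vec_unvec c hc1, hc2]; rfl
    · rw [vec_unvec c hc1]; exact h
  -- primitive columns
  have hprim : ∀ v ∈ sph (3 * p ^ 2), ¬ (((p : ℤ) : Quaternion ℤ) ∣ vec v) →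
      (Finset.bipartiteBelow R Finset.univ v).card = 1 := by
    intro v hv hnd
    have hvs := (mem_sph _ _).1 hv
    have hv0 : ((v.1 : ZMod p)) ^ 2 + (v.2.1 : ZMod p) ^ 2 + (v.2.2 : ZMod p) ^ 2 = 0 := by
      have := congrArg (fun n : ℤ => (n : ZMod p)) hvs
      simpa using this
    obtain ⟨i, k, hk, e1, e2, e3⟩ := conic_exists ω hω h2 h3 _ _ _ hv0 (by
      intro h
      apply hnd
      rw [qdvd_iff]
      simpa [← zc] using h)
    rw [Finset.card_eq_one]
    refine ⟨i, ?_⟩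
    ext j
    simp only [Finset.mem_bipartiteBelow, Finset.mem_univ, true_and, Finset.mem_singleton]
    constructor
    · rintro ⟨c, _, hc⟩
      have hd := rep_cross p (g j) (u j) (vec (w j)) (vec v) (vec c) (hgn j) (hgu j) hc
      rw [qdvd_iff] at hd
      simp only [Quaternion.imI_mul, Quaternion.imJ_mul, Quaternion.imK_mul, vec_re, vec_imI,
        vec_imJ, vec_imK, ← zc] at hd
      push_cast at hd
      rw [hw1, hw2, hw3, e1, e2, e3] at hd
      obtain ⟨-, d1, d2, d3⟩ := hd
      symm
      apply conic_uniq ω hω h2 h3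
      · apply mul_left_cancel₀ hk; linear_combination d3
      · apply mul_left_cancel₀ hk; linear_combination -d2
      · apply mul_left_cancel₀ hk; linear_combination d1
    · rintro rfl
      obtain ⟨K, hK⟩ := ZMod.intCast_surjective k
      obtain ⟨K', hK'⟩ := ZMod.intCast_surjective k⁻¹
      have D1 : ((p : ℤ) : Quaternion ℤ) ∣ vec v - K * vec (w j) := by
        rw [qdvd_iff]
        simp only [← zc]
        simp [hw1, hw2, hw3, e1, e2, e3, hK]
      have D2 : ((p : ℤ) : Quaternion ℤ) ∣ vec (w j) - K' * vec v := by
        rw [qdvd_iff]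
        simp only [← zc]
        simp [hw1, hw2, hw3, e1, e2, e3, hK', hk]
      obtain ⟨s, hs⟩ := D1
      obtain ⟨s', hs'⟩ := D2
      obtain ⟨c, hc⟩ := rep_prim p hp0 (g j) (x j) (y j) (u j) (vec (w j)) (vec v) s s' K K'
        (hgn j) (by simpa using hgx j) (hgu j) (vec_re v)
        (by rw [vec_norm, hvs]; push_cast; ring) (by rw [← hs]; abel) (by rw [← hs']; abel)
      exact fin j v c hv hc
  -- imprimitive columns
  have himp : ∀ v ∈ sph (3 * p ^ 2), (((p : ℤ) : Quaternion ℤ) ∣ vec v) →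
      (Finset.bipartiteBelow R Finset.univ v).card = 2 := by
    intro v hv hd
    have hvs := (mem_sph _ _).1 hv
    obtain ⟨-, ⟨a, ha⟩, ⟨b, hb⟩, ⟨c, hc⟩⟩ := (qdvd_iff _ _).1 hd
    simp only [vec_imI, vec_imJ, vec_imK] at ha hb hc
    have h3' : (a, b, c) ∈ sph 3 := by
      rw [mem_sph]
      rw [ha, hb, hc] at hvs
      have : (p : ℤ) ^ 2 ≠ 0 := pow_ne_zero _ hp0
      apply mul_left_cancel₀ this
      push_cast at hvs ⊢
      linarith
    have hvv : vec v = ((p : ℤ) : Quaternion ℤ) * vec (a, b, c) := by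
      ext <;> simp [ha, hb, hc]
    obtain ⟨pa, pb, pc⟩ := sph_three_pm _ h3'
    simp only at pa pb pc
    have cst : ∀ n : ℤ, (n = 1 ∨ n = -1) → ((n : ZMod p) = 1 ∨ (n : ZMod p) = -1) := by
      rintro n (rfl | rfl) <;> simp
    rw [← conic_orth ω hω h2 h3 a b c (cst _ pa) (cst _ pb) (cst _ pc)]
    congr 1
    ext i
    simp only [Finset.mem_bipartiteBelow, Finset.mem_univ, true_and, Finset.mem_filter]
    have tr : (conic ω i).1 * (a : ZMod p) + (conic ω i).2.1 * (b : ZMod p)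
        + (conic ω i).2.2 * (c : ZMod p) =
        (((w i).1 * a + (w i).2.1 * b + (w i).2.2 * c : ℤ) : ZMod p) := by
      push_cast; rw [hw1, hw2, hw3]
    rw [tr]
    constructor
    · rintro ⟨c', _, hc'⟩
      rw [hvv] at hc'
      have := rep_nonprim_conv p hp0 (g i) (u i) (vec (w i)) (vec (a, b, c)) (vec c') (hgn i)
        (hgu i) rfl rfl (hwn i) hc'
      by_contra hne
      apply hwd i
      rw [qdvd_iff] at this ⊢
      simp only [vec_imI, vec_imJ, vec_imK] at this
      set D := (w i).1 * a + (w i).2.1 * b + (w i).2.2 * c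
      have hpr : Prime (p : ℤ) := Nat.prime_iff_prime_int.1 hp
      have h2D : ¬ (p : ℤ) ∣ 2 * D := by
        rw [← zc]; push_cast; simp [h2]; exact_mod_cast hne
      generalize 2 * D = E at *
      simp at this
      obtain ⟨t1, t2, t3⟩ := this
      refine ⟨by simp, ?_, ?_, ?_⟩
      · exact (hpr.dvd_or_dvd t1).resolve_left h2D
      · exact (hpr.dvd_or_dvd t2).resolve_left h2D
      · exact (hpr.dvd_or_dvd t3).resolve_left h2D
    · intro h
      rw [zc] at h
      obtain ⟨d, hd'⟩ := h
      obtain ⟨c', hc'⟩ := rep_nonprim p hp0 (g i) (x i) (y i) (vec (w i)) (vec (a, b, c)) d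
        (hgn i) (by simpa using hgx i) rfl rfl (hwn i) hd'
      exact fin i v c' hv (by rw [hvv]; exact hc')
  have hcard8 : ((sph (3 * p ^ 2)).filter
      (fun v => ((p : ℤ) : Quaternion ℤ) ∣ vec v)).card = 8 := by
    rw [← card_sph_three]
    have : (sph (3 * p ^ 2)).filter (fun v => ((p : ℤ) : Quaternion ℤ) ∣ vec v) =
        (sph 3).image (fun t => ((p : ℤ) * t.1, (p : ℤ) * t.2.1, (p : ℤ) * t.2.2)) := by
      ext v
      simp only [Finset.mem_filter, Finset.mem_image, mem_sph, qdvd_iff]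
      constructor
      · rintro ⟨hvs, -, ⟨a, ha⟩, ⟨b, hb⟩, ⟨c, hc⟩⟩
        simp only [vec_imI, vec_imJ, vec_imK] at ha hb hc
        refine ⟨(a, b, c), ?_, ?_⟩
        · rw [ha, hb, hc] at hvs
          have : (p : ℤ) ^ 2 ≠ 0 := pow_ne_zero _ hp0
          apply mul_left_cancel₀ this
          push_cast at hvs ⊢
          linarith
        · simp only [← ha, ← hb, ← hc]
      · rintro ⟨⟨a, b, c⟩, h, rfl⟩
        simp only at h
        constructor
        · push_cast at h ⊢
          linear_combination (p : ℤ) ^ 2 * h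
        · simp
    rw [this]
    apply Finset.card_image_of_injective
    rintro ⟨a, b, c⟩ ⟨a', b', c'⟩ h
    simpa [hp.ne_zero] using h
  rw [← Finset.sum_filter_add_sum_filter_not (sph (3 * p ^ 2))
    (fun v => ((p : ℤ) : Quaternion ℤ) ∣ vec v)] at hdc
  rw [Finset.sum_congr rfl (fun v hv => himp v (Finset.mem_filter.1 hv).1
      (Finset.mem_filter.1 hv).2),
    Finset.sum_congr rfl (fun v hv => hprim v (Finset.mem_filter.1 hv).1
      (Finset.mem_filter.1 hv).2)] at hdc
  have hsum := Finset.card_filter_add_card_filter_not (s := sph (3 * p ^ 2))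
    (fun v => ((p : ℤ) : Quaternion ℤ) ∣ vec v)
  simp only [Finset.sum_const, smul_eq_mul] at hdc
  rw [hcard8] at hdc hsum
  omega
lemma tc_eq (N : ℕ) (a b c : ℤ) : tripleCount N a b c =
    ((sph N).filter (fun t => (t.1 % 12, t.2.1 % 12, t.2.2 % 12) = (a, b, c))).card := by
  rw [tripleCount, ← Set.ncard_coe_finset]
  congr 1
  ext t
  simp [mem_sph]

lemma tc_rot (N : ℕ) (a b c : ℤ) : tripleCount N a b c = tripleCount N b c a := by
  unfold tripleCount
  refine Set.ncard_congr (fun t _ => (t.2.1, t.2.2, t.1)) ?_ ?_ ?_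
  · rintro ⟨x, y, z⟩ ⟨h, h1, h2, h3⟩
    exact ⟨by simp only at h ⊢; linarith, h2, h3, h1⟩
  · rintro ⟨x, y, z⟩ ⟨x', y', z'⟩ _ _ h
    simp only [Prod.mk.injEq] at h ⊢; tauto
  · rintro ⟨x, y, z⟩ ⟨h, h1, h2, h3⟩
    exact ⟨(z, x, y), ⟨by simp only at h ⊢; linarith, h3, h1, h2⟩, rfl⟩

lemma tc_neg (N : ℕ) (a b c : ℤ) (ha : 0 < a) (ha' : a < 12) :
    tripleCount N (12 - a) b c = tripleCount N a b c := by
  unfold tripleCount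
  refine Set.ncard_congr (fun t _ => (-t.1, t.2.1, t.2.2)) ?_ ?_ ?_
  · rintro ⟨x, y, z⟩ ⟨h, h1, h2, h3⟩
    exact ⟨by simp only at h ⊢; linarith, by simp only at h1 ⊢; omega, h2, h3⟩
  · rintro ⟨x, y, z⟩ ⟨x', y', z'⟩ _ _ h
    simpa only [Prod.mk.injEq, neg_inj] using h
  · rintro ⟨x, y, z⟩ ⟨h, h1, h2, h3⟩
    exact ⟨(-x, y, z), ⟨by simp only at h ⊢; linarith, by simp only at h1 ⊢; omega, h2, h3⟩,
      by simp⟩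

lemma residues (x y z L : ℤ) (h : x ^ 2 + y ^ 2 + z ^ 2 = 3 * L ^ 2) (h2 : L % 2 = 1)
    (h3 : L % 3 = 1) : x % 12 = 1 ∨ x % 12 = 5 ∨ x % 12 = 7 ∨ x % 12 = 11 := by
  have e4 : (x ^ 2 + y ^ 2 + z ^ 2) % 4 = 3 := by
    have hL : L % 4 = 1 ∨ L % 4 = 3 := by omega
    rw [h]; rcases hL with h | h <;> simp [pow_two, Int.mul_emod, h]
  have hx2 : x % 2 = 1 := by
    have a1 : x % 4 = 0 ∨ x % 4 = 1 ∨ x % 4 = 2 ∨ x % 4 = 3 := by omega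
    have a2 : y % 4 = 0 ∨ y % 4 = 1 ∨ y % 4 = 2 ∨ y % 4 = 3 := by omega
    have a3 : z % 4 = 0 ∨ z % 4 = 1 ∨ z % 4 = 2 ∨ z % 4 = 3 := by omega
    rcases a1 with a1 | a1 | a1 | a1
    · exfalso
      rcases a2 with a2 | a2 | a2 | a2 <;> rcases a3 with a3 | a3 | a3 | a3 <;>
        simp [pow_two, Int.add_emod, Int.mul_emod, a1, a2, a3] at e4
    · omega
    · exfalso
      rcases a2 with a2 | a2 | a2 | a2 <;> rcases a3 with a3 | a3 | a3 | a3 <;>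
        simp [pow_two, Int.add_emod, Int.mul_emod, a1, a2, a3] at e4
    · omega
  have hx3 : x % 3 ≠ 0 := by
    intro hx
    have e3 : (x ^ 2 + y ^ 2 + z ^ 2) % 3 = 0 := by rw [h]; omega
    have a2 : y % 3 = 0 ∨ y % 3 = 1 ∨ y % 3 = 2 := by omega
    have a3 : z % 3 = 0 ∨ z % 3 = 1 ∨ z % 3 = 2 := by omega
    have hyz : y % 3 = 0 ∧ z % 3 = 0 := by
      rcases a2 with a2 | a2 | a2 <;> rcases a3 with a3 | a3 | a3 <;>
        simp [pow_two, Int.add_emod, Int.mul_emod, hx, a2, a3] at e3 ⊢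
    obtain ⟨a, rfl⟩ := Int.dvd_of_emod_eq_zero hx
    obtain ⟨b, rfl⟩ := Int.dvd_of_emod_eq_zero hyz.1
    obtain ⟨c, rfl⟩ := Int.dvd_of_emod_eq_zero hyz.2
    have : L ^ 2 = 3 * (a ^ 2 + b ^ 2 + c ^ 2) := by linarith
    have h1 : L ^ 2 % 3 = 1 := by simp [pow_two, Int.mul_emod, h3]
    omega
  omega

theorem genus_theta_coefficient_identity (ℓ : ℕ) (hℓ : ℓ.Prime) (h3 : ℓ % 3 = 1) :
    tripleCount (3 * ℓ ^ 2) 5 5 5 + tripleCount (3 * ℓ ^ 2) 1 1 1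
      + 3 * tripleCount (3 * ℓ ^ 2) 5 1 1 + 3 * tripleCount (3 * ℓ ^ 2) 1 5 5 = ℓ := by
  have hmain := card_sph_main ℓ hℓ h3
  have hodd : ℓ % 2 = 1 := by
    rcases hℓ.eq_two_or_odd with h | h
    · subst h; simp at h3
    · exact h
  generalize hN : 3 * ℓ ^ 2 = N at *
  have hmaps : ∀ t ∈ sph N, (t.1 % 12, t.2.1 % 12, t.2.2 % 12) ∈
      (({1, 5, 7, 11} : Finset ℤ) ×ˢ ({1, 5, 7, 11} : Finset ℤ) ×ˢ ({1, 5, 7, 11} : Finset ℤ)) := by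
    rintro ⟨x, y, z⟩ ht
    rw [mem_sph, ← hN] at ht
    push_cast at ht
    have l2 : (ℓ : ℤ) % 2 = 1 := by omega
    have l3 : (ℓ : ℤ) % 3 = 1 := by omega
    have r1 := residues x y z ℓ ht l2 l3
    have r2 := residues y z x ℓ (by linarith) l2 l3
    have r3 := residues z x y ℓ (by linarith) l2 l3
    simp only [Finset.mem_product, Finset.mem_insert, Finset.mem_singleton]
    exact ⟨r1, r2, r3⟩
  rw [Finset.card_eq_sum_card_fiberwise hmaps, Finset.sum_product] at hmain
  simp only [Finset.sum_product] at hmain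
  have n1 : ∀ b c, tripleCount N 11 b c = tripleCount N 1 b c :=
    fun b c => tc_neg N 1 b c (by norm_num) (by norm_num)
  have n2 : ∀ b c, tripleCount N 7 b c = tripleCount N 5 b c :=
    fun b c => tc_neg N 5 b c (by norm_num) (by norm_num)
  have n3 : ∀ a c, tripleCount N a 11 c = tripleCount N a 1 c :=
    fun a c => by rw [tc_rot, n1, ← tc_rot]
  have n4 : ∀ a c, tripleCount N a 7 c = tripleCount N a 5 c :=
    fun a c => by rw [tc_rot, n2, ← tc_rot]
  have n5 : ∀ a b, tripleCount N a b 11 = tripleCount N a b 1 :=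
    fun a c => by rw [tc_rot, n3, ← tc_rot]
  have n6 : ∀ a b, tripleCount N a b 7 = tripleCount N a b 5 :=
    fun a c => by rw [tc_rot, n4, ← tc_rot]
  have m1 : tripleCount N 1 1 5 = tripleCount N 5 1 1 := by rw [tc_rot, tc_rot]
  have m2 : tripleCount N 1 5 1 = tripleCount N 5 1 1 := by rw [tc_rot]
  have m3 : tripleCount N 5 5 1 = tripleCount N 1 5 5 := by rw [tc_rot, tc_rot]
  have m4 : tripleCount N 5 1 5 = tripleCount N 1 5 5 := by rw [tc_rot]
  simp only [← tc_eq] at hmain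
  have s4 : ∀ f : ℤ → ℕ, ∑ i ∈ ({1, 5, 7, 11} : Finset ℤ), f i = f 1 + f 5 + f 7 + f 11 := by
    intro f
    rw [Finset.sum_insert (by decide), Finset.sum_insert (by decide),
      Finset.sum_insert (by decide), Finset.sum_singleton]
    ring
  simp only [s4, n1, n2, n3, n4, n5, n6, m1, m2, m3, m4] at hmain
  omega
end

section
/- Let ℓ > 3 be a prime. Then the number of ordered triples (X,Y,Z) ∈ ℤ³ with X² + Y² + Z² = 3ℓ² equals 8(ℓ + 1 − (−3/ℓ)), where (−3/ℓ) denotes the Legendre symbol of −3 modulo ℓ. -/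
namespace ThreeSq

/-- `(0, a) * (p, q, r, s) = 0` as quaternions modulo `ℓ`. -/
def Lam {ℓ : ℕ} (a : Fin 3 → ZMod ℓ) (p q r s : ℤ) : Prop :=
  (a 0 * q + a 1 * r + a 2 * s = 0) ∧
  (p * a 0 + (a 1 * s - a 2 * r) = 0) ∧
  (p * a 1 + (a 2 * q - a 0 * s) = 0) ∧
  (p * a 2 + (a 0 * r - a 1 * q) = 0)

lemma pigeon (ℓ : ℕ) [Fact ℓ.Prime] (c d : Fin 4 → ZMod ℓ) :
    ∃ x : Fin 4 → ℤ, x ≠ 0 ∧ (∑ i, x i ^ 2 < 4 * ℓ) ∧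
      (∑ i, c i * x i = 0) ∧ (∑ i, d i * x i = 0) := by
  have hp : ℓ.Prime := Fact.out
  let m := Nat.sqrt ℓ
  have hm1 : ℓ < (m + 1) * (m + 1) := Nat.lt_succ_sqrt ℓ
  have hm2 : m * m < ℓ := by
    rcases (Nat.sqrt_le ℓ).lt_or_eq with h | h
    · exact h
    · exfalso
      exact hp.prime.irreducible.not_isSquare ⟨_, h.symm⟩
  let f : (Fin 4 → Fin (m + 1)) → ZMod ℓ × ZMod ℓ := fun y =>
    (∑ i, c i * ((y i : ℕ) : ZMod ℓ), ∑ i, d i * ((y i : ℕ) : ZMod ℓ))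
  have hcard : Fintype.card (ZMod ℓ × ZMod ℓ) < Fintype.card (Fin 4 → Fin (m + 1)) := by
    simp only [Fintype.card_prod, ZMod.card, Fintype.card_pi, Fintype.card_fin, Finset.prod_const,
      Finset.card_univ]
    nlinarith
  obtain ⟨y, z, hyz, hf⟩ := Fintype.exists_ne_map_eq_of_card_lt f hcard
  have hf1 := congrArg Prod.fst hf
  have hf2 := congrArg Prod.snd hf
  simp only [f] at hf1 hf2
  refine ⟨fun i => ((y i : ℕ) : ℤ) - ((z i : ℕ) : ℤ), ?_, ?_, ?_, ?_⟩
  · intro h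
    apply hyz
    funext i
    have := congrFun h i
    simp only [Pi.zero_apply] at this
    apply Fin.ext
    omega
  · have key : ∀ i, (((y i : ℕ) : ℤ) - ((z i : ℕ) : ℤ)) ^ 2 < ℓ := by
      intro i
      have h1 : ((y i : ℕ) : ℤ) ≤ m := by have := (y i).2; omega
      have h2 : ((z i : ℕ) : ℤ) ≤ m := by have := (z i).2; omega
      have h3 : (m : ℤ) * m < ℓ := by exact_mod_cast hm2
      have h4 : (0 : ℤ) ≤ (y i : ℕ) := by positivity
      have h5 : (0 : ℤ) ≤ (z i : ℕ) := by positivity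
      have : (((y i : ℕ) : ℤ) - ((z i : ℕ) : ℤ)) ^ 2 ≤ (m : ℤ) ^ 2 := by
        apply sq_le_sq'
        · linarith
        · linarith
      nlinarith
    rw [Fin.sum_univ_four]
    linarith [key 0, key 1, key 2, key 3]
  · push_cast
    simp only [mul_sub, Finset.sum_sub_distrib, hf1, sub_self]
  · push_cast
    simp only [mul_sub, Finset.sum_sub_distrib, hf2, sub_self]

lemma short_lam (ℓ : ℕ) [Fact ℓ.Prime] (a : Fin 3 → ZMod ℓ) (ha : a ≠ 0)
    (haa : a 0 ^ 2 + a 1 ^ 2 + a 2 ^ 2 = 0) :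
    ∃ p q r s : ℤ, 0 < p ^ 2 + q ^ 2 + r ^ 2 + s ^ 2 ∧
      p ^ 2 + q ^ 2 + r ^ 2 + s ^ 2 < 4 * ℓ ∧ Lam a p q r s := by
  have pos : ∀ x : Fin 4 → ℤ, x ≠ 0 → 0 < x 0 ^ 2 + x 1 ^ 2 + x 2 ^ 2 + x 3 ^ 2 := by
    intro x hx
    by_contra hcon
    apply hx
    have h0 : x 0 = 0 := by nlinarith [sq_nonneg (x 0), sq_nonneg (x 1), sq_nonneg (x 2), sq_nonneg (x 3)]
    have h1 : x 1 = 0 := by nlinarith [sq_nonneg (x 0), sq_nonneg (x 1), sq_nonneg (x 2), sq_nonneg (x 3)]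
    have h2 : x 2 = 0 := by nlinarith [sq_nonneg (x 0), sq_nonneg (x 1), sq_nonneg (x 2), sq_nonneg (x 3)]
    have h3 : x 3 = 0 := by nlinarith [sq_nonneg (x 0), sq_nonneg (x 1), sq_nonneg (x 2), sq_nonneg (x 3)]
    funext i
    fin_cases i <;> assumption
  by_cases h0 : a 0 ≠ 0
  · obtain ⟨x, hx, hlt, h1, h2⟩ := pigeon ℓ ![0, a 0, a 1, a 2] ![a 0, 0, -a 2, a 1]
    simp [Fin.sum_univ_four] at h1 h2 hlt
    refine ⟨x 0, x 1, x 2, x 3, pos x hx, hlt, ?_, ?_, ?_, ?_⟩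
    · linear_combination h1
    · linear_combination h2
    · apply mul_left_cancel₀ h0
      linear_combination a 1 * h2 + a 2 * h1 - x 3 * haa
    · apply mul_left_cancel₀ h0
      grind
  by_cases h0' : a 1 ≠ 0
  · obtain ⟨x, hx, hlt, h1, h2⟩ := pigeon ℓ ![0, a 0, a 1, a 2] ![a 1, a 2, 0, -a 0]
    simp [Fin.sum_univ_four] at h1 h2 hlt
    refine ⟨x 0, x 1, x 2, x 3, pos x hx, hlt, ?_, ?_, ?_, ?_⟩
    · linear_combination h1
    · apply mul_left_cancel₀ h0'
      grind
    · linear_combination h2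
    · apply mul_left_cancel₀ h0'
      grind
  by_cases h0'' : a 2 ≠ 0
  · obtain ⟨x, hx, hlt, h1, h2⟩ := pigeon ℓ ![0, a 0, a 1, a 2] ![a 2, -a 1, a 0, 0]
    simp [Fin.sum_univ_four] at h1 h2 hlt
    refine ⟨x 0, x 1, x 2, x 3, pos x hx, hlt, ?_, ?_, ?_, ?_⟩
    · linear_combination h1
    · apply mul_left_cancel₀ h0''
      grind
    · apply mul_left_cancel₀ h0''
      grind
    · linear_combination h2
  · exfalso
    apply ha
    push Not at h0 h0' h0''
    funext i
    fin_cases i <;> assumption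

lemma lam_norm (ℓ : ℕ) [Fact ℓ.Prime] (a : Fin 3 → ZMod ℓ) (ha : a ≠ 0) (p q r s : ℤ)
    (h : Lam a p q r s) : (ℓ : ℤ) ∣ p ^ 2 + q ^ 2 + r ^ 2 + s ^ 2 := by
  rw [← ZMod.intCast_zmod_eq_zero_iff_dvd]
  push_cast
  obtain ⟨h0, h1, h2, h3⟩ := h
  by_contra hne
  apply ha
  funext i
  fin_cases i
  · apply mul_left_cancel₀ hne
    simp only [Fin.zero_eta, Pi.zero_apply]
    grind
  · apply mul_left_cancel₀ hne
    simp only [Fin.mk_one, Pi.zero_apply]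
    grind
  · apply mul_left_cancel₀ hne
    simp only [Fin.reduceFinMk, Pi.zero_apply]
    grind

/-- right multiplication followed by exact division -/
lemma lam_mul_div (ℓ : ℕ) [Fact ℓ.Prime] (a : Fin 3 → ZMod ℓ) (p q r s : ℤ)
    (h : Lam a p q r s) (n x y z w : ℤ) (hn : ¬ (ℓ : ℤ) ∣ n)
    (P Q R S : ℤ)
    (hP : n * P = p * x - q * y - r * z - s * w)
    (hQ : n * Q = p * y + q * x + r * w - s * z)
    (hR : n * R = p * z - q * w + r * x + s * y)
    (hS : n * S = p * w + q * z - r * y + s * x) : Lam a P Q R S := by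
  rw [← ZMod.intCast_zmod_eq_zero_iff_dvd] at hn
  have hP' := congrArg (Int.cast : ℤ → ZMod ℓ) hP
  have hQ' := congrArg (Int.cast : ℤ → ZMod ℓ) hQ
  have hR' := congrArg (Int.cast : ℤ → ZMod ℓ) hR
  have hS' := congrArg (Int.cast : ℤ → ZMod ℓ) hS
  push_cast at hP' hQ' hR' hS'
  obtain ⟨h0, h1, h2, h3⟩ := h
  refine ⟨?_, ?_, ?_, ?_⟩
  · apply mul_left_cancel₀ hn
    linear_combination a 0 * hQ' + a 1 * hR' + a 2 * hS' + x * h0 - y * (-h1) - z * (-h2) - w * (-h3)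
  · apply mul_left_cancel₀ hn
    linear_combination a 0 * hP' + a 1 * hS' - a 2 * hR' + x * h1 - y * h0 + w * h2 - z * h3
  · apply mul_left_cancel₀ hn
    linear_combination a 1 * hP' + a 2 * hQ' - a 0 * hS' + x * h2 - z * h0 + y * h3 - w * h1
  · apply mul_left_cancel₀ hn
    linear_combination a 2 * hP' + a 0 * hR' - a 1 * hQ' + x * h3 - w * h0 + z * h1 - y * h2

lemma norm_mul_div (n p q r s x y z w P Q R S : ℤ)
    (hP : n * P = p * x - q * y - r * z - s * w)
    (hQ : n * Q = p * y + q * x + r * w - s * z)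
    (hR : n * R = p * z - q * w + r * x + s * y)
    (hS : n * S = p * w + q * z - r * y + s * x) :
    n ^ 2 * (P ^ 2 + Q ^ 2 + R ^ 2 + S ^ 2) =
      (p ^ 2 + q ^ 2 + r ^ 2 + s ^ 2) * (x ^ 2 + y ^ 2 + z ^ 2 + w ^ 2) := by
  have : n ^ 2 * (P ^ 2 + Q ^ 2 + R ^ 2 + S ^ 2) =
      (n * P) ^ 2 + (n * Q) ^ 2 + (n * R) ^ 2 + (n * S) ^ 2 := by ring
  rw [this, hP, hQ, hR, hS]
  ring

lemma sq_parity (x : ℤ) : ∃ k, x ^ 2 = x + 2 * k := by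
  rcases Int.even_or_odd' x with ⟨m, h | h⟩
  · exact ⟨2 * m ^ 2 - m, by rw [h]; ring⟩
  · exact ⟨2 * m ^ 2 + m, by rw [h]; ring⟩

lemma mod_three (x : ℤ) : ∃ k e : ℤ, x = 3 * k + e ∧ (e ^ 2 = 0 ∨ e ^ 2 = 1) := by
  have h : x % 3 = 0 ∨ x % 3 = 1 ∨ x % 3 = 2 := by omega
  rcases h with h | h | h
  · exact ⟨x / 3, 0, by omega, by norm_num⟩
  · exact ⟨x / 3, 1, by omega, by norm_num⟩
  · exact ⟨x / 3 + 1, -1, by omega, by norm_num⟩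

lemma exists_norm_ell (ℓ : ℕ) [Fact ℓ.Prime] (h3 : 3 < ℓ) (a : Fin 3 → ZMod ℓ) (ha : a ≠ 0)
    (haa : a 0 ^ 2 + a 1 ^ 2 + a 2 ^ 2 = 0) :
    ∃ p q r s : ℤ, p ^ 2 + q ^ 2 + r ^ 2 + s ^ 2 = ℓ ∧ Lam a p q r s := by
  have hp : ℓ.Prime := Fact.out
  have hodd : ℓ % 2 = 1 := by
    rcases hp.eq_two_or_odd with h | h
    · omega
    · exact h
  have hnd3 : ¬ 3 ∣ ℓ := by
    intro h
    rcases (Nat.dvd_prime hp).1 h with h | h <;> omega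
  have hl2 : ¬ (ℓ : ℤ) ∣ 2 := by
    intro h
    have := Int.le_of_dvd (by norm_num) h
    omega
  have hl3 : ¬ (ℓ : ℤ) ∣ 3 := by
    intro h
    have := Int.le_of_dvd (by norm_num) h
    omega
  obtain ⟨p, q, r, s, hpos, hlt, hL⟩ := short_lam ℓ a ha haa
  obtain ⟨k, hk⟩ := lam_norm ℓ a ha p q r s hL
  have hl0 : (0 : ℤ) < ℓ := by omega
  have hk0 : 0 < k := by
    rw [hk] at hpos
    exact pos_of_mul_pos_right hpos hl0.le
  have hk4 : k < 4 := by
    rw [hk] at hlt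
    nlinarith
  have hk' : k = 1 ∨ k = 2 ∨ k = 3 := by omega
  rcases hk' with rfl | rfl | rfl
  · exact ⟨p, q, r, s, by linarith, hL⟩
  · obtain ⟨e1, he1⟩ := sq_parity p
    obtain ⟨e2, he2⟩ := sq_parity q
    obtain ⟨e3, he3⟩ := sq_parity r
    obtain ⟨e4, he4⟩ := sq_parity s
    have hsum : (p + q + r + s) % 2 = 0 := by omega
    have hc : ((p - q) % 2 = 0 ∧ (r - s) % 2 = 0) ∨ ((p - r) % 2 = 0 ∧ (q - s) % 2 = 0) ∨
      ((p - s) % 2 = 0 ∧ (q - r) % 2 = 0) := by omega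
    rcases hc with ⟨h1, h2⟩ | ⟨h1, h2⟩ | ⟨h1, h2⟩
    · have hP : 2 * ((p - q) / 2) = p * 1 - q * 1 - r * 0 - s * 0 := by omega
      have hQ : 2 * ((p + q) / 2) = p * 1 + q * 1 + r * 0 - s * 0 := by omega
      have hR : 2 * ((r + s) / 2) = p * 0 - q * 0 + r * 1 + s * 1 := by omega
      have hS : 2 * ((s - r) / 2) = p * 0 + q * 0 - r * 1 + s * 1 := by omega
      refine ⟨_, _, _, _, ?_, lam_mul_div ℓ a p q r s hL 2 1 1 0 0 hl2 _ _ _ _ hP hQ hR hS⟩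
      have := norm_mul_div _ _ _ _ _ _ _ _ _ _ _ _ _ hP hQ hR hS
      rw [hk] at this
      linarith
    · have hP : 2 * ((p - r) / 2) = p * 1 - q * 0 - r * 1 - s * 0 := by omega
      have hQ : 2 * ((q - s) / 2) = p * 0 + q * 1 + r * 0 - s * 1 := by omega
      have hR : 2 * ((p + r) / 2) = p * 1 - q * 0 + r * 1 + s * 0 := by omega
      have hS : 2 * ((q + s) / 2) = p * 0 + q * 1 - r * 0 + s * 1 := by omega
      refine ⟨_, _, _, _, ?_, lam_mul_div ℓ a p q r s hL 2 1 0 1 0 hl2 _ _ _ _ hP hQ hR hS⟩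
      have := norm_mul_div _ _ _ _ _ _ _ _ _ _ _ _ _ hP hQ hR hS
      rw [hk] at this
      linarith
    · have hP : 2 * ((p - s) / 2) = p * 1 - q * 0 - r * 0 - s * 1 := by omega
      have hQ : 2 * ((q + r) / 2) = p * 0 + q * 1 + r * 1 - s * 0 := by omega
      have hR : 2 * ((r - q) / 2) = p * 0 - q * 1 + r * 1 + s * 0 := by omega
      have hS : 2 * ((p + s) / 2) = p * 1 + q * 0 - r * 0 + s * 1 := by omega
      refine ⟨_, _, _, _, ?_, lam_mul_div ℓ a p q r s hL 2 1 0 0 1 hl2 _ _ _ _ hP hQ hR hS⟩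
      have := norm_mul_div _ _ _ _ _ _ _ _ _ _ _ _ _ hP hQ hR hS
      rw [hk] at this
      linarith
  · obtain ⟨p', x, hp', hx⟩ := mod_three p
    obtain ⟨q', y, hq', hy⟩ := mod_three q
    obtain ⟨r', z, hr', hz⟩ := mod_three r
    obtain ⟨s', w, hs', hw⟩ := mod_three s
    have hexp : p ^ 2 + q ^ 2 + r ^ 2 + s ^ 2 = 9 * (p' ^ 2 + q' ^ 2 + r' ^ 2 + s' ^ 2) +
        6 * (p' * x + q' * y + r' * z + s' * w) + (x ^ 2 + y ^ 2 + z ^ 2 + w ^ 2) := by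
      rw [hp', hq', hr', hs']; ring
    have hN : x ^ 2 + y ^ 2 + z ^ 2 + w ^ 2 = 3 := by
      have h03 : x ^ 2 + y ^ 2 + z ^ 2 + w ^ 2 = 3 ∨ x ^ 2 + y ^ 2 + z ^ 2 + w ^ 2 = 0 := by omega
      rcases h03 with h | h
      · exact h
      · exfalso
        have hx0 : x = 0 := by
          have : x ^ 2 = 0 := by omega
          simpa using this
        have hy0 : y = 0 := by
          have : y ^ 2 = 0 := by omega
          simpa using this
        have hz0 : z = 0 := by
          have : z ^ 2 = 0 := by omega
          simpa using this
        have hw0 : w = 0 := by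
          have : w ^ 2 = 0 := by omega
          simpa using this
        subst hx0 hy0 hz0 hw0
        apply hnd3
        simp only [mul_zero, add_zero] at hexp
        omega
    have hP : 3 * (ℓ - (p * p' + q * q' + r * r' + s * s')) =
        p * x - q * (-y) - r * (-z) - s * (-w) := by
      linear_combination -hk + p * hp' + q * hq' + r * hr' + s * hs'
    have hQ : 3 * (p * q' - q * p' + r * s' - s * r') =
        p * (-y) + q * x + r * (-w) - s * (-z) := by
      linear_combination -p * hq' + q * hp' - r * hs' + s * hr'
    have hR : 3 * (p * r' - q * s' - r * p' + s * q') =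
        p * (-z) - q * (-w) + r * x + s * (-y) := by
      linear_combination -p * hr' + q * hs' + r * hp' - s * hq'
    have hS : 3 * (p * s' + q * r' - r * q' - s * p') =
        p * (-w) + q * (-z) - r * (-y) + s * x := by
      linear_combination -p * hs' - q * hr' + r * hq' + s * hp'
    refine ⟨_, _, _, _, ?_, lam_mul_div ℓ a p q r s hL 3 _ _ _ _ hl3 _ _ _ _ hP hQ hR hS⟩
    have := norm_mul_div _ _ _ _ _ _ _ _ _ _ _ _ _ hP hQ hR hS
    rw [hk, neg_sq, neg_sq, neg_sq, hN] at this
    linarith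

open Matrix in
lemma exists_rot (ℓ : ℕ) [Fact ℓ.Prime] (h3 : 3 < ℓ) (a : Fin 3 → ZMod ℓ) (ha : a ≠ 0)
    (haa : a ⬝ᵥ a = 0) :
    ∃ (R : Matrix (Fin 3) (Fin 3) ℤ) (b : Fin 3 → ZMod ℓ), b ≠ 0 ∧
      R.transpose * R = ((ℓ : ℤ) ^ 2) • (1 : Matrix (Fin 3) (Fin 3) ℤ) ∧
      R * R.transpose = ((ℓ : ℤ) ^ 2) • (1 : Matrix (Fin 3) (Fin 3) ℤ) ∧
      ∀ i j, (R i j : ZMod ℓ) = a i * b j := by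
  have hp : ℓ.Prime := Fact.out
  have haa' : a 0 ^ 2 + a 1 ^ 2 + a 2 ^ 2 = 0 := by
    rw [← haa]; simp [dotProduct, Fin.sum_univ_three]; ring
  obtain ⟨p, q, r, s, hN, h0, h1, h2, h3'⟩ := exists_norm_ell ℓ h3 a ha haa'
  let R : Matrix (Fin 3) (Fin 3) ℤ :=
    !![p ^ 2 + q ^ 2 - r ^ 2 - s ^ 2, 2 * (q * r - p * s), 2 * (q * s + p * r);
       2 * (q * r + p * s), p ^ 2 - q ^ 2 + r ^ 2 - s ^ 2, 2 * (r * s - p * q);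
       2 * (q * s - p * r), 2 * (r * s + p * q), p ^ 2 - q ^ 2 - r ^ 2 + s ^ 2]
  have hc : ∀ i k j, a i * (R k j : ZMod ℓ) = a k * (R i j : ZMod ℓ) := by
    have e1 : ∀ j, a 0 * (R 1 j : ZMod ℓ) = a 1 * (R 0 j : ZMod ℓ) := by
      intro j
      fin_cases j <;> simp [R] <;> grind
    have e2 : ∀ j, a 0 * (R 2 j : ZMod ℓ) = a 2 * (R 0 j : ZMod ℓ) := by
      intro j
      fin_cases j <;> simp [R] <;> grind
    have e3 : ∀ j, a 1 * (R 2 j : ZMod ℓ) = a 2 * (R 1 j : ZMod ℓ) := by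
      intro j
      fin_cases j <;> simp [R] <;> grind
    intro i k j
    fin_cases i <;> fin_cases k
    · rfl
    · exact e1 j
    · exact e2 j
    · exact (e1 j).symm
    · rfl
    · exact e3 j
    · exact (e2 j).symm
    · exact (e3 j).symm
    · rfl
  obtain ⟨i0, hi0⟩ := Function.ne_iff.1 ha
  simp only [Pi.zero_apply] at hi0
  have hRb : ∀ i j, (R i j : ZMod ℓ) = a i * ((R i0 j : ZMod ℓ) / a i0) := by
    intro i j
    have := hc i0 i j
    field_simp
    linear_combination this
  refine ⟨R, fun j => (R i0 j : ZMod ℓ) / a i0, ?_, ?_, ?_, hRb⟩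
  · intro hb
    have hz : ∀ i j, (R i j : ZMod ℓ) = 0 := by
      intro i j
      rw [hRb i j, congrFun hb j]
      simp
    have z0 := hz 0 0
    have z1 := hz 1 1
    have z2 := hz 2 2
    simp only [R, Matrix.of_apply, Matrix.cons_val', Matrix.cons_val_zero, Matrix.cons_val_one,
      Matrix.cons_val, ZMod.intCast_zmod_eq_zero_iff_dvd] at z0 z1 z2
    have hpI : Prime (ℓ : ℤ) := Nat.prime_iff_prime_int.1 hp
    have key : ∀ x : ℤ, (ℓ : ℤ) ∣ 4 * x ^ 2 → (ℓ : ℤ) ∣ x := by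
      intro x hx
      rcases hpI.dvd_or_dvd hx with h | h
      · exfalso
        have := Int.le_of_dvd (by norm_num) h
        have h4 : ℓ = 4 := by omega
        rw [h4] at hp
        revert hp; norm_num
      · exact hpI.dvd_of_dvd_pow h
    have hl : (ℓ : ℤ) ∣ p ^ 2 + q ^ 2 + r ^ 2 + s ^ 2 := by rw [hN]
    obtain ⟨c0, z0⟩ := z0
    obtain ⟨c1, z1⟩ := z1
    obtain ⟨c2, z2⟩ := z2
    obtain ⟨p', rfl⟩ := key p ⟨c0 + c1 + c2 + 1, by linear_combination z0 + z1 + z2 + hN⟩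
    obtain ⟨q', rfl⟩ := key q ⟨c0 - c1 - c2 + 1, by linear_combination z0 - z1 - z2 + hN⟩
    obtain ⟨r', rfl⟩ := key r ⟨-c0 + c1 - c2 + 1, by linear_combination -z0 + z1 - z2 + hN⟩
    obtain ⟨s', rfl⟩ := key s ⟨-c0 - c1 + c2 + 1, by linear_combination -z0 - z1 + z2 + hN⟩
    have hl0 : (ℓ : ℤ) ≠ 0 := by omega
    have : (ℓ : ℤ) * (p' ^ 2 + q' ^ 2 + r' ^ 2 + s' ^ 2) = 1 := by
      apply mul_left_cancel₀ hl0
      linear_combination hN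
    have hd : (ℓ : ℤ) ∣ 1 := ⟨_, this.symm⟩
    have := Int.le_of_dvd (by norm_num) hd
    omega
  · rw [← hN]
    ext i j
    fin_cases i <;> fin_cases j <;>
      simp [R, Matrix.mul_apply, Fin.sum_univ_three] <;> ring
  · rw [← hN]
    ext i j
    fin_cases i <;> fin_cases j <;>
      simp [R, Matrix.mul_apply, Fin.sum_univ_three] <;> ring

/-- reduction modulo `ℓ` -/
def red (ℓ : ℕ) (v : Fin 3 → ℤ) : Fin 3 → ZMod ℓ := fun i => (v i : ZMod ℓ)

/-- integer vectors of norm `n` -/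
noncomputable def Sph (n : ℤ) : Finset (Fin 3 → ℤ) :=
  (Fintype.piFinset fun _ => Finset.Icc (-n) n).filter fun v => v ⬝ᵥ v = n

lemma mem_Sph (n : ℤ) (v : Fin 3 → ℤ) : v ∈ Sph n ↔ v ⬝ᵥ v = n := by
  simp only [Sph, Finset.mem_filter, Fintype.mem_piFinset, Finset.mem_Icc, and_iff_right_iff_imp]
  intro h i
  have h1 : v i * v i ≤ n := by
    rw [← h]
    exact Finset.single_le_sum (f := fun i => v i * v i) (fun i _ => mul_self_nonneg (v i))
      (Finset.mem_univ i)
  constructor <;> nlinarith [mul_self_nonneg (v i)]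

lemma card_Sph_three : (Sph 3).card = 8 := by
  decide +kernel

lemma Sph_three_coord (w : Fin 3 → ℤ) (hw : w ∈ Sph 3) : ∀ i, w i = 1 ∨ w i = -1 := by
  have h : ∀ w ∈ Sph 3, ∀ i, w i = 1 ∨ w i = -1 := by decide +kernel
  exact h w hw

/-- incidence between isotropic vectors mod `ℓ` and integer vectors -/
def Rel (ℓ : ℕ) (a : Fin 3 → ZMod ℓ) (v : Fin 3 → ℤ) : Prop :=
  (red ℓ v ≠ 0 ∧ ∃ k : ZMod ℓ, red ℓ v = k • a) ∨
    (∃ w : Fin 3 → ℤ, v = (ℓ : ℤ) • w ∧ red ℓ w ⬝ᵥ a = 0)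

lemma red_eq_zero_iff (ℓ : ℕ) (v : Fin 3 → ℤ) : red ℓ v = 0 ↔ ∃ w, v = (ℓ : ℤ) • w := by
  constructor
  · intro h
    have h' : ∀ i, (ℓ : ℤ) ∣ v i := fun i => by
      rw [← ZMod.intCast_zmod_eq_zero_iff_dvd]; exact congrFun h i
    choose w hw using h'
    exact ⟨w, funext hw⟩
  · rintro ⟨w, rfl⟩
    funext i
    simp [red]

lemma red_dot (ℓ : ℕ) (v w : Fin 3 → ℤ) : ((v ⬝ᵥ w : ℤ) : ZMod ℓ) = red ℓ v ⬝ᵥ red ℓ w := by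
  simp [red, dotProduct]

open Matrix in
lemma card_fiber (ℓ : ℕ) [Fact ℓ.Prime] (h3 : 3 < ℓ) (a : Fin 3 → ZMod ℓ) (ha : a ≠ 0)
    (haa : a ⬝ᵥ a = 0) [DecidablePred (Rel ℓ a)] :
    ((Sph (3 * (ℓ : ℤ) ^ 2)).filter (Rel ℓ a)).card = 8 := by
  obtain ⟨R, b, hb, hRR, hRR', hR⟩ := exists_rot ℓ h3 a ha haa
  have hl0 : (ℓ : ℤ) ≠ 0 := by omega
  have hp2 : (2 : ZMod ℓ) ≠ 0 := by
    have : ((2 : ℕ) : ZMod ℓ) ≠ 0 := by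
      rw [Ne, ZMod.natCast_eq_zero_iff]
      intro h
      have := Nat.le_of_dvd (by norm_num) h
      omega
    exact_mod_cast this
  have mulRR : ∀ w, Rᵀ *ᵥ (R *ᵥ w) = ((ℓ : ℤ) ^ 2) • w := by
    intro w
    rw [Matrix.mulVec_mulVec, hRR, Matrix.smul_mulVec, Matrix.one_mulVec]
  have mulRR' : ∀ w, R *ᵥ (Rᵀ *ᵥ w) = ((ℓ : ℤ) ^ 2) • w := by
    intro w
    rw [Matrix.mulVec_mulVec, hRR', Matrix.smul_mulVec, Matrix.one_mulVec]
  have adj : ∀ x y, (R *ᵥ x) ⬝ᵥ y = x ⬝ᵥ (Rᵀ *ᵥ y) := by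
    intro x y
    rw [Matrix.dotProduct_mulVec, Matrix.vecMul_transpose]
  have redR : ∀ w, red ℓ (R *ᵥ w) = (b ⬝ᵥ red ℓ w) • a := by
    intro w
    funext i
    simp only [red, Matrix.mulVec, dotProduct, Pi.smul_apply, smul_eq_mul, Int.cast_sum,
      Int.cast_mul, hR, Finset.sum_mul]
    exact Finset.sum_congr rfl fun j _ => by ring
  have redRt : ∀ v, red ℓ (Rᵀ *ᵥ v) = (a ⬝ᵥ red ℓ v) • b := by
    intro w
    funext i
    simp only [red, Matrix.mulVec, dotProduct, Pi.smul_apply, smul_eq_mul, Int.cast_sum,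
      Int.cast_mul, Matrix.transpose_apply, hR, Finset.sum_mul]
    exact Finset.sum_congr rfl fun j _ => by ring
  have normR : ∀ w, (R *ᵥ w) ⬝ᵥ (R *ᵥ w) = (ℓ : ℤ) ^ 2 * (w ⬝ᵥ w) := by
    intro w
    rw [adj, mulRR, dotProduct_smul, smul_eq_mul]
  rw [← card_Sph_three]
  symm
  refine Finset.card_bij (fun w _ => R *ᵥ w) ?_ ?_ ?_
  · intro w hw
    rw [mem_Sph] at hw
    rw [Finset.mem_filter, mem_Sph, normR, hw]
    refine ⟨by ring, ?_⟩
    by_cases h0 : red ℓ (R *ᵥ w) = 0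
    · right
      obtain ⟨u, hu⟩ := (red_eq_zero_iff ℓ _).1 h0
      refine ⟨u, hu, ?_⟩
      have h1 : Rᵀ *ᵥ u = (ℓ : ℤ) • w := by
        have := mulRR w
        rw [hu, Matrix.mulVec_smul, pow_two, mul_smul] at this
        exact smul_right_injective _ hl0 this
      have h2 : red ℓ (Rᵀ *ᵥ u) = 0 := (red_eq_zero_iff ℓ _).2 ⟨w, h1⟩
      rw [redRt] at h2
      rw [dotProduct_comm]
      exact (smul_eq_zero.1 h2).resolve_right hb
    · left
      exact ⟨h0, _, redR w⟩
  · intro w _ w' _ h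
    have := congrArg (fun x => Rᵀ *ᵥ x) h
    simp only [mulRR] at this
    exact smul_right_injective _ (pow_ne_zero 2 hl0) this
  · intro v hv
    rw [Finset.mem_filter, mem_Sph] at hv
    obtain ⟨hn, hrel⟩ := hv
    suffices h : ∃ w, Rᵀ *ᵥ v = ((ℓ : ℤ) ^ 2) • w by
      obtain ⟨w, hw⟩ := h
      have hv : R *ᵥ w = v := by
        have := mulRR' v
        rw [hw, Matrix.mulVec_smul] at this
        exact smul_right_injective _ (pow_ne_zero 2 hl0) this
      refine ⟨w, ?_, hv⟩
      rw [mem_Sph]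
      have := normR w
      rw [hv, hn] at this
      apply mul_left_cancel₀ (pow_ne_zero 2 hl0)
      rw [← this]; ring
    rcases hrel with ⟨hv0, k, hk⟩ | ⟨u, rfl, hu⟩
    · -- choose e with R e congruent to v
      obtain ⟨j, hj⟩ := Function.ne_iff.1 hb
      simp only [Pi.zero_apply] at hj
      have hk0 : k ≠ 0 := by
        rintro rfl
        exact hv0 (by rw [hk, zero_smul])
      obtain ⟨c, hc⟩ := ZMod.intCast_surjective (k / b j)
      let e : Fin 3 → ℤ := Pi.single j c
      have hrede : b ⬝ᵥ red ℓ e = k := by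
        have : red ℓ e = Pi.single j (k / b j) := by
          funext i
          by_cases hij : i = j
          · subst hij; simp [red, e, hc]
          · simp [red, e, hij]
        rw [this, dotProduct_single]
        field_simp
      have hRe : red ℓ (R *ᵥ e) = red ℓ v := by rw [redR, hrede, hk]
      have hdiff : red ℓ (v - R *ᵥ e) = 0 := by
        funext i
        have := congrFun hRe i
        simp only [red] at this
        simp [red, this]
      obtain ⟨x, hx⟩ := (red_eq_zero_iff ℓ _).1 hdiff
      have hvx : v = R *ᵥ e + (ℓ : ℤ) • x := by rw [← hx]; abel
      have hax : a ⬝ᵥ red ℓ x = 0 := by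
        have h1 : (ℓ : ℤ) * (2 * ((R *ᵥ e) ⬝ᵥ x)) = (ℓ : ℤ) * ((ℓ : ℤ) * (3 - e ⬝ᵥ e - x ⬝ᵥ x)) := by
          have h2 := hn
          rw [hvx] at h2
          simp only [add_dotProduct, dotProduct_add, normR, smul_dotProduct, dotProduct_smul,
            smul_eq_mul] at h2
          rw [dotProduct_comm x (R *ᵥ e)] at h2
          linear_combination h2
        have h3 := mul_left_cancel₀ hl0 h1
        have h4 := congrArg (Int.cast : ℤ → ZMod ℓ) h3
        push_cast at h4
        rw [red_dot, hRe, hk] at h4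
        simp only [CharP.cast_eq_zero, zero_mul, smul_dotProduct, smul_eq_mul, mul_eq_zero, hp2, hk0,
          false_or] at h4
        exact h4
      have h5 : red ℓ (Rᵀ *ᵥ x) = 0 := by rw [redRt, hax, zero_smul]
      obtain ⟨y, hy⟩ := (red_eq_zero_iff ℓ _).1 h5
      refine ⟨e + y, ?_⟩
      rw [hvx, Matrix.mulVec_add, mulRR, Matrix.mulVec_smul, hy, smul_add, smul_smul, pow_two]
    · have h5 : red ℓ (Rᵀ *ᵥ u) = 0 := by rw [redRt, dotProduct_comm, hu, zero_smul]
      obtain ⟨y, hy⟩ := (red_eq_zero_iff ℓ _).1 h5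
      exact ⟨y, by rw [Matrix.mulVec_smul, hy, smul_smul, pow_two]⟩

/-- nonzero isotropic vectors -/
def Iso (ℓ : ℕ) [Fact ℓ.Prime] : Finset (Fin 3 → ZMod ℓ) :=
  Finset.univ.filter fun a => a ≠ 0 ∧ a ⬝ᵥ a = 0

lemma two_ne (ℓ : ℕ) [Fact ℓ.Prime] (h3 : 3 < ℓ) : (2 : ZMod ℓ) ≠ 0 := by
  have : ((2 : ℕ) : ZMod ℓ) ≠ 0 := by
    rw [Ne, ZMod.natCast_eq_zero_iff]
    intro h
    have := Nat.le_of_dvd (by norm_num) h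
    omega
  exact_mod_cast this

lemma card_Iso (ℓ : ℕ) [Fact ℓ.Prime] (h3 : 3 < ℓ) : (Iso ℓ).card + 1 = ℓ ^ 2 := by
  have h2 := two_ne ℓ h3
  obtain ⟨g, h, hgh⟩ := ZMod.sq_add_sq ℓ (-1)
  have e1 : (Iso ℓ).card + 1 = (Finset.univ.filter fun a : Fin 3 → ZMod ℓ => a ⬝ᵥ a = 0).card := by
    rw [← Finset.card_insert_of_notMem (a := (0 : Fin 3 → ZMod ℓ)) (s := Iso ℓ) (by simp [Iso])]
    congr 1
    ext a
    simp only [Iso, Finset.mem_insert, Finset.mem_filter, Finset.mem_univ, true_and]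
    by_cases ha : a = 0
    · simp [ha]
    · simp [ha]
  rw [e1]
  have e2 : ℓ ^ 2 = (Finset.univ : Finset (ZMod ℓ × ZMod ℓ)).card := by
    simp [ZMod.card, pow_two]
  rw [e2]
  symm
  -- (u, t) : if u = 0 the point is (0, t, 0), otherwise (u, -t^2/(4u), t)
  let V : ZMod ℓ × ZMod ℓ → ZMod ℓ := fun x => if x.1 = 0 then x.2 else -x.2 ^ 2 / (4 * x.1)
  let W : ZMod ℓ × ZMod ℓ → ZMod ℓ := fun x => if x.1 = 0 then 0 else x.2
  have h4 : (4 : ZMod ℓ) ≠ 0 := by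
    have : (4 : ZMod ℓ) = 2 * 2 := by norm_num
    rw [this]; exact mul_ne_zero h2 h2
  have hVW : ∀ x, W x ^ 2 = -4 * x.1 * V x := by
    intro x
    by_cases hx : x.1 = 0
    · simp [V, W, hx]
    · simp only [V, W, hx, if_false]
      field_simp
  refine Finset.card_bij (fun x _ => ![(x.1 + V x) * g + W x * h, (x.1 + V x) * h - W x * g,
    x.1 - V x]) ?_ ?_ ?_
  · intro x _
    simp only [Finset.mem_filter, Finset.mem_univ, true_and, dotProduct, Fin.sum_univ_three]
    simp only [Matrix.cons_val_zero, Matrix.cons_val_one, Matrix.cons_val]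
    linear_combination ((x.1 + V x) ^ 2 + W x ^ 2) * hgh - hVW x
  · intro x _ y _ hxy
    have q0 := congrFun hxy 0
    have q1 := congrFun hxy 1
    have q2 := congrFun hxy 2
    simp only [Matrix.cons_val_zero, Matrix.cons_val_one, Matrix.cons_val] at q0 q1 q2
    have s1 : x.1 + V x = y.1 + V y := by
      linear_combination -g * q0 - h * q1 + ((x.1 + V x) - (y.1 + V y)) * hgh
    have s2 : W x = W y := by
      linear_combination -h * q0 + g * q1 + (W x - W y) * hgh
    have s3 : x.1 = y.1 := by
      apply mul_left_cancel₀ h2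
      linear_combination s1 + q2
    have s4 : V x = V y := by
      linear_combination s1 - s3
    apply Prod.ext s3
    by_cases hx : x.1 = 0
    · have hy : y.1 = 0 := by rw [← s3, hx]
      simpa [V, hx, hy] using s4
    · have hy : ¬ y.1 = 0 := by rw [← s3]; exact hx
      simpa [W, hx, hy] using s2
  · intro a ha
    simp only [Finset.mem_filter, Finset.mem_univ, true_and, dotProduct, Fin.sum_univ_three] at ha
    obtain ⟨S, hS⟩ : ∃ S, S = -(a 0 * g + a 1 * h) := ⟨_, rfl⟩
    obtain ⟨w, hw⟩ : ∃ w, w = -(a 0 * h - a 1 * g) := ⟨_, rfl⟩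
    obtain ⟨u, hu⟩ : ∃ u, u = (S + a 2) / 2 := ⟨_, rfl⟩
    obtain ⟨v, hv⟩ : ∃ v, v = (S - a 2) / 2 := ⟨_, rfl⟩
    have huv : u + v = S := by rw [hu, hv]; field_simp; ring
    have huv' : u - v = a 2 := by rw [hu, hv]; field_simp; ring
    have a0 : S * g + w * h = a 0 := by
      rw [hS, hw]; linear_combination (-a 0) * hgh
    have a1 : S * h - w * g = a 1 := by
      rw [hS, hw]; linear_combination (-a 1) * hgh
    have hc : w ^ 2 = -4 * u * v := by
      rw [← a0, ← a1, ← huv', ← huv] at ha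
      linear_combination -ha + ((u + v) ^ 2 + w ^ 2) * hgh
    suffices hs : ∃ x : ZMod ℓ × ZMod ℓ, x.1 = u ∧ V x = v ∧ W x = w by
      obtain ⟨x, x1, x2, x3⟩ := hs
      refine ⟨x, Finset.mem_univ _, ?_⟩
      rw [x1, x2, x3, huv, huv', a0, a1]
      funext i
      fin_cases i <;> rfl
    by_cases hu0 : u = 0
    · refine ⟨(u, v), rfl, ?_, ?_⟩
      · simp [V, hu0]
      · rw [hu0] at hc
        have : w = 0 := by simpa using hc
        simp [W, hu0, this]
    · refine ⟨(u, w), rfl, ?_, ?_⟩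
      · simp only [V, hu0, if_false]
        field_simp
        linear_combination -hc
      · simp [W, hu0]

lemma card_roots (ℓ : ℕ) [Fact ℓ.Prime] (h3 : 3 < ℓ) :
    ((Finset.univ.filter fun t : ZMod ℓ => t ^ 2 + t + 1 = 0).card : ℤ) =
      legendreSym ℓ (-3) + 1 := by
  have h2 := two_ne ℓ h3
  rw [← legendreSym.card_sqrts ℓ (by omega)]
  congr 1
  refine Finset.card_bij (fun t _ => 2 * t + 1) ?_ ?_ ?_
  · intro t ht
    simp only [Finset.mem_filter, Finset.mem_univ, true_and] at ht
    simp only [Set.mem_toFinset, Set.mem_setOf_eq]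
    push_cast
    linear_combination 4 * ht
  · intro t _ t' _ h
    apply mul_left_cancel₀ h2
    linear_combination h
  · intro s hs
    simp only [Set.mem_toFinset, Set.mem_setOf_eq] at hs
    push_cast at hs
    have e : 2 * ((s - 1) / 2) + 1 = s := by field_simp; ring
    refine ⟨(s - 1) / 2, ?_, e⟩
    simp only [Finset.mem_filter, Finset.mem_univ, true_and]
    apply mul_left_cancel₀ h2
    apply mul_left_cancel₀ h2
    generalize (s - 1) / 2 = t at e
    subst e
    linear_combination hs

lemma card_perp (ℓ : ℕ) [Fact ℓ.Prime] (h3 : 3 < ℓ) (w : Fin 3 → ℤ) (hw : w ∈ Sph 3) :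
    (((Iso ℓ).filter fun a => red ℓ w ⬝ᵥ a = 0).card : ℤ) =
      (ℓ - 1) * (legendreSym ℓ (-3) + 1) := by
  have h2 := two_ne ℓ h3
  have hsq : ∀ i, red ℓ w i * red ℓ w i = 1 := by
    intro i
    rcases Sph_three_coord w hw i with h | h <;> simp [red, h]
  obtain ⟨c, hc⟩ : ∃ c, c = red ℓ w := ⟨_, rfl⟩
  rw [← hc] at hsq ⊢
  have c0 := hsq 0
  have c1 := hsq 1
  have c2 := hsq 2
  have hu : ((Finset.univ.filter fun y : ZMod ℓ => y ≠ 0).card : ℤ) = ℓ - 1 := by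
    rw [Finset.filter_ne', Finset.card_erase_of_mem (Finset.mem_univ _), Finset.card_univ, ZMod.card]
    rw [Nat.cast_sub (by omega)]; simp
  rw [← card_roots ℓ h3, ← hu, ← Nat.cast_mul, ← Finset.card_product]
  congr 1
  symm
  refine Finset.card_bij (fun x _ => ![c 0 * (x.2 * x.1), c 1 * x.1, c 2 * (-(x.2 * x.1) - x.1)])
    ?_ ?_ ?_
  · rintro ⟨y, t⟩ hx
    simp only [Finset.mem_product, Finset.mem_filter, Finset.mem_univ, true_and] at hx
    obtain ⟨hy, ht⟩ := hx
    simp only [Iso, Finset.mem_filter, Finset.mem_univ, true_and, dotProduct, Fin.sum_univ_three]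
    simp only [Matrix.cons_val_zero, Matrix.cons_val_one, Matrix.cons_val]
    refine ⟨⟨?_, ?_⟩, ?_⟩
    · intro h0
      have := congrFun h0 1
      simp only [Matrix.cons_val_one, Matrix.cons_val_zero, Pi.zero_apply] at this
      apply hy
      linear_combination c 1 * this - y * c1
    · linear_combination (t * y) ^ 2 * c0 + y ^ 2 * c1 + (t * y + y) ^ 2 * c2 + 2 * y ^ 2 * ht
    · linear_combination (t * y) * c0 + y * c1 - (t * y + y) * c2
  · rintro ⟨y, t⟩ hx ⟨y', t'⟩ _ h
    simp only [Finset.mem_product, Finset.mem_filter, Finset.mem_univ, true_and] at hx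
    have q0 := congrFun h 0
    have q1 := congrFun h 1
    simp only [Matrix.cons_val_zero, Matrix.cons_val_one] at q0 q1
    have e1 : y = y' := by linear_combination c 1 * q1 - (y - y') * c1
    subst e1
    have e2 : t = t' := by
      apply mul_right_cancel₀ hx.1
      linear_combination c 0 * q0 - (t * y - t' * y) * c0
    rw [e2]
  · intro a ha
    simp only [Iso, Finset.mem_filter, Finset.mem_univ, true_and, dotProduct,
      Fin.sum_univ_three] at ha
    obtain ⟨⟨hne, hiso⟩, hperp⟩ := ha
    obtain ⟨x, hx⟩ : ∃ x, x = c 0 * a 0 := ⟨_, rfl⟩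
    obtain ⟨y, hy⟩ : ∃ y, y = c 1 * a 1 := ⟨_, rfl⟩
    have a0 : c 0 * x = a 0 := by rw [hx]; linear_combination a 0 * c0
    have a1 : c 1 * y = a 1 := by rw [hy]; linear_combination a 1 * c1
    have a2 : c 2 * (-x - y) = a 2 := by
      rw [hx, hy]; linear_combination a 2 * c2 - c 2 * hperp
    have hq : x ^ 2 + x * y + y ^ 2 = 0 := by
      apply mul_left_cancel₀ h2
      rw [← a0, ← a1, ← a2] at hiso
      linear_combination hiso - x ^ 2 * c0 - y ^ 2 * c1 - (x + y) ^ 2 * c2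
    have hy0 : y ≠ 0 := by
      rintro rfl
      have hx0 : x = 0 := by simpa using hq
      apply hne
      rw [hx0] at a0 a2
      funext i
      fin_cases i
      · simpa using a0.symm
      · simpa using a1.symm
      · simpa using a2.symm
    have hxy : x / y * y = x := by field_simp
    refine ⟨(y, x / y), ?_, ?_⟩
    · simp only [Finset.mem_product, Finset.mem_filter, Finset.mem_univ, true_and]
      refine ⟨hy0, ?_⟩
      field_simp
      linear_combination hq
    · simp only [hxy]
      rw [a0, a1, a2]
      funext i
      fin_cases i <;> rfl

lemma card_prim (ℓ : ℕ) [Fact ℓ.Prime] (v : Fin 3 → ℤ) (hv : v ∈ Sph (3 * (ℓ : ℤ) ^ 2))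
    (hv0 : red ℓ v ≠ 0) [DecidablePred fun a => Rel ℓ a v] :
    (((Iso ℓ).filter fun a => Rel ℓ a v).card : ℤ) = ℓ - 1 := by
  have hl : 1 ≤ ℓ := (Fact.out : ℓ.Prime).one_lt.le
  have hu : ((Finset.univ.filter fun y : ZMod ℓ => y ≠ 0).card : ℤ) = ℓ - 1 := by
    rw [Finset.filter_ne', Finset.card_erase_of_mem (Finset.mem_univ _), Finset.card_univ, ZMod.card]
    rw [Nat.cast_sub (by omega)]; simp
  rw [← hu]
  congr 1
  symm
  have hvv : red ℓ v ⬝ᵥ red ℓ v = 0 := by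
    rw [← red_dot, (mem_Sph _ _).1 hv]; simp
  refine Finset.card_bij (fun y _ => y • red ℓ v) ?_ ?_ ?_
  · intro y hy
    simp only [Finset.mem_filter, Finset.mem_univ, true_and] at hy
    simp only [Iso, Finset.mem_filter, Finset.mem_univ, true_and]
    refine ⟨⟨smul_ne_zero hy hv0, by simp [hvv]⟩, Or.inl ⟨hv0, y⁻¹, ?_⟩⟩
    rw [smul_smul, inv_mul_cancel₀ hy, one_smul]
  · intro y _ y' _ h
    exact smul_left_injective _ hv0 h
  · intro a ha
    rw [Finset.mem_filter] at ha
    rcases ha.2 with ⟨_, k, hk⟩ | ⟨w, hw, _⟩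
    · have hk0 : k ≠ 0 := by
        rintro rfl
        exact hv0 (by rw [hk, zero_smul])
      refine ⟨k⁻¹, by simpa using hk0, ?_⟩
      rw [hk, smul_smul, inv_mul_cancel₀ hk0, one_smul]
    · exact absurd ((red_eq_zero_iff ℓ v).2 ⟨w, hw⟩) hv0

lemma card_imprim (ℓ : ℕ) [Fact ℓ.Prime] (h3 : 3 < ℓ) (v : Fin 3 → ℤ)
    (hv : v ∈ Sph (3 * (ℓ : ℤ) ^ 2))
    (hv0 : red ℓ v = 0) [DecidablePred fun a => Rel ℓ a v] :
    (((Iso ℓ).filter fun a => Rel ℓ a v).card : ℤ) = (ℓ - 1) * (legendreSym ℓ (-3) + 1) := by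
  have hl0 : (ℓ : ℤ) ≠ 0 := by omega
  obtain ⟨w, rfl⟩ := (red_eq_zero_iff ℓ v).1 hv0
  have hw : w ∈ Sph 3 := by
    rw [mem_Sph] at hv ⊢
    simp only [smul_dotProduct, dotProduct_smul, smul_eq_mul] at hv
    apply mul_left_cancel₀ hl0
    apply mul_left_cancel₀ hl0
    linear_combination hv
  rw [← card_perp ℓ h3 w hw]
  congr 2
  ext a
  simp only [Finset.mem_filter, and_congr_right_iff]
  intro _
  constructor
  · rintro (⟨h, _⟩ | ⟨w', hw', h⟩)
    · exact absurd hv0 h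
    · rw [smul_right_injective _ hl0 hw']; exact h
  · intro h
    exact Or.inr ⟨w, rfl, h⟩

lemma card_imprim_set (ℓ : ℕ) [Fact ℓ.Prime] (h3 : 3 < ℓ) :
    ((Sph (3 * (ℓ : ℤ) ^ 2)).filter fun v => red ℓ v = 0).card = 8 := by
  have hl0 : (ℓ : ℤ) ≠ 0 := by omega
  rw [← card_Sph_three]
  symm
  refine Finset.card_bij (fun w _ => (ℓ : ℤ) • w) ?_ ?_ ?_
  · intro w hw
    rw [mem_Sph] at hw
    rw [Finset.mem_filter, mem_Sph]
    refine ⟨?_, (red_eq_zero_iff ℓ _).2 ⟨w, rfl⟩⟩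
    simp only [smul_dotProduct, dotProduct_smul, smul_eq_mul, hw]
    ring
  · intro w _ w' _ h
    exact smul_right_injective _ hl0 h
  · intro v hv
    rw [Finset.mem_filter, mem_Sph] at hv
    obtain ⟨w, rfl⟩ := (red_eq_zero_iff ℓ v).1 hv.2
    refine ⟨w, ?_, rfl⟩
    have hv1 := hv.1
    rw [mem_Sph]
    simp only [smul_dotProduct, dotProduct_smul, smul_eq_mul] at hv1
    apply mul_left_cancel₀ hl0
    apply mul_left_cancel₀ hl0
    linear_combination hv1

lemma card_main (ℓ : ℕ) [Fact ℓ.Prime] (h3 : 3 < ℓ) :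
    ((Sph (3 * (ℓ : ℤ) ^ 2)).card : ℤ) = 8 * ((ℓ : ℤ) + 1 - legendreSym ℓ (-3)) := by
  classical
  have hdc := Finset.sum_card_bipartiteAbove_eq_sum_card_bipartiteBelow
    (s := Iso ℓ) (t := Sph (3 * (ℓ : ℤ) ^ 2)) (Rel ℓ)
  unfold Finset.bipartiteAbove Finset.bipartiteBelow at hdc
  have hL : ∑ a ∈ Iso ℓ, ((Sph (3 * (ℓ : ℤ) ^ 2)).filter (Rel ℓ a)).card = (Iso ℓ).card * 8 := by
    rw [Finset.sum_const_nat]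
    intro a ha
    simp only [Iso, Finset.mem_filter, Finset.mem_univ, true_and] at ha
    exact card_fiber ℓ h3 a ha.1 ha.2
  have hL' := hL.symm.trans hdc
  have hZ := congrArg (Nat.cast : ℕ → ℤ) hL'
  push_cast at hZ
  rw [← Finset.sum_filter_add_sum_filter_not _ (fun v => red ℓ v = 0)] at hZ
  rw [Finset.sum_congr rfl (fun v hv => card_imprim ℓ h3 v (Finset.mem_filter.1 hv).1
    (Finset.mem_filter.1 hv).2)] at hZ
  rw [Finset.sum_congr (s₁ := (Sph (3 * (ℓ : ℤ) ^ 2)).filter fun v => ¬ red ℓ v = 0) rfl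
    (fun v hv => card_prim ℓ v (Finset.mem_filter.1 hv).1 (Finset.mem_filter.1 hv).2)] at hZ
  simp only [Finset.sum_const, nsmul_eq_mul] at hZ
  have hsplit := Finset.card_filter_add_card_filter_not (s := Sph (3 * (ℓ : ℤ) ^ 2))
    (fun v => red ℓ v = 0)
  rw [card_imprim_set ℓ h3] at hZ hsplit
  have hI := congrArg (Nat.cast : ℕ → ℤ) (card_Iso ℓ h3)
  have hsplit' := congrArg (Nat.cast : ℕ → ℤ) hsplit
  push_cast at hI hsplit' hZ
  have hl1 : (ℓ : ℤ) - 1 ≠ 0 := by omega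
  apply mul_left_cancel₀ hl1
  rw [← hsplit']
  linear_combination -hZ + 8 * hI

end ThreeSq

theorem sum_three_squares_count_three_ell_sq (ℓ : ℕ) (hℓ : ℓ.Prime) (h3 : 3 < ℓ) :
    (Set.ncard {t : ℤ × ℤ × ℤ |
        t.1 ^ 2 + t.2.1 ^ 2 + t.2.2 ^ 2 = 3 * (ℓ : ℤ) ^ 2} : ℤ) =
      8 * ((ℓ : ℤ) + 1 - @legendreSym ℓ ⟨hℓ⟩ (-3)) := by
  have : Fact ℓ.Prime := ⟨hℓ⟩
  rw [← ThreeSq.card_main ℓ h3, ← Set.ncard_coe_finset]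
  congr 1
  refine Set.ncard_congr (fun t _ => ![t.1, t.2.1, t.2.2]) ?_ ?_ ?_
  · intro t ht
    simp only [Set.mem_setOf_eq] at ht
    rw [Finset.mem_coe, ThreeSq.mem_Sph, ← ht]
    simp only [dotProduct, Fin.sum_univ_three, Matrix.cons_val_zero, Matrix.cons_val_one,
      Matrix.cons_val]
    ring
  · rintro ⟨x, y, z⟩ ⟨x', y', z'⟩ _ _ h
    have q0 := congrFun h 0
    have q1 := congrFun h 1
    have q2 := congrFun h 2
    simp only [Matrix.cons_val_zero, Matrix.cons_val_one, Matrix.cons_val] at q0 q1 q2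
    rw [q0, q1, q2]
  · intro v hv
    rw [Finset.mem_coe, ThreeSq.mem_Sph] at hv
    refine ⟨(v 0, v 1, v 2), ?_, ?_⟩
    · simp only [Set.mem_setOf_eq]
      rw [← hv]
      simp only [dotProduct, Fin.sum_univ_three]
      ring
    · funext i
      fin_cases i <;> rfl
end

section
/- Let m ≥ 6 be an integer with m ≡ 2 (mod 4). Then for every 2-adic integer n ∈ ℤ₂ there exists x ∈ ℤ₂ such that 2n = (m−2)x² − (m−4)x; that is, every 2-adic integer is a 2-adic generalized m-gonal number. -/
theorem two_adic_universality_of_two_mod_four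
    (m : ℤ) (hm : 6 ≤ m) (h4 : m % 4 = 2) (n : ℤ_[2]) :
    ∃ x : ℤ_[2], 2 * n = ((m : ℤ_[2]) - 2) * x ^ 2 - ((m : ℤ_[2]) - 4) * x := by
  obtain ⟨k, rfl⟩ : ∃ k, m = 4 * k + 2 := ⟨m / 4, by omega⟩
  have key : ∀ y : ℤ_[2], ‖(2 : ℤ_[2]) * y‖ < 1 := fun y => by
    rw [PadicInt.norm_lt_one_iff_dvd]
    exact ⟨y, by push_cast; ring⟩
  have unit : ∀ y : ℤ_[2], ‖2 * y + 1‖ = 1 := fun y => by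
    by_contra h
    have h1 := lt_of_le_of_ne (PadicInt.norm_le_one _) h
    rw [PadicInt.norm_lt_one_iff_dvd] at h1
    obtain ⟨c, hc⟩ := h1
    have h2 := key (c - y)
    have h3 : (2 : ℤ_[2]) * (c - y) = 1 := by
      push_cast at hc
      linear_combination -hc
    rw [h3] at h2
    simp at h2
  let F : Polynomial ℤ_[2] :=
    Polynomial.C (2 * (k : ℤ_[2])) * Polynomial.X ^ 2
      - Polynomial.C (2 * (k : ℤ_[2]) - 1) * Polynomial.X - Polynomial.C n
  have hF : ∀ z : ℤ_[2], F.aeval z = 2 * k * z ^ 2 - (2 * k - 1) * z - n := fun z => by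
    simp [F]
  have hF' : F.derivative.aeval n = 2 * (2 * k * n - k) + 1 := by
    simp [F]
    ring
  have hn : ‖F.aeval n‖ < ‖F.derivative.aeval n‖ ^ 2 := by
    rw [hF', unit, hF,
      show 2 * (k : ℤ_[2]) * n ^ 2 - (2 * k - 1) * n - n = 2 * (k * n ^ 2 - k * n) by ring]
    simpa using key (k * n ^ 2 - k * n)
  obtain ⟨z, hz, -⟩ := hensels_lemma hn
  rw [hF] at hz
  refine ⟨z, ?_⟩
  push_cast
  linear_combination (-2) * hz
end

section
/- Let m ≥ 3 be an odd integer. Then for every 2-adic integer n ∈ ℤ₂ there exists x ∈ ℤ₂ such that 2n = (m−2)x² − (m−4)x; that is, every 2-adic integer is a 2-adic generalized m-gonal number. -/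
theorem two_adic_universality_of_odd
    (m : ℤ) (hm : 3 ≤ m) (hodd : Odd m) (n : ℤ_[2]) :
    ∃ x : ℤ_[2], 2 * n = ((m : ℤ_[2]) - 2) * x ^ 2 - ((m : ℤ_[2]) - 4) * x := by
  have h1 : ‖((m : ℤ_[2]) - 4)‖ = 1 := by
    have h : ¬ ‖((m - 4 : ℤ) : ℤ_[2])‖ < 1 := by
      rw [PadicInt.norm_int_lt_one_iff_dvd]
      obtain ⟨k, hk⟩ := hodd
      push_cast
      omega
    have h2 := PadicInt.norm_le_one ((m - 4 : ℤ) : ℤ_[2])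
    have h3 := le_antisymm h2 (not_lt.mp h)
    push_cast at h3
    exact h3
  have h2 : ‖2 * n‖ < 1 := by
    rw [PadicInt.norm_lt_one_iff_dvd]
    exact ⟨n, by norm_num⟩
  let F : Polynomial ℤ_[2] := Polynomial.C ((m : ℤ_[2]) - 2) * Polynomial.X ^ 2
    - Polynomial.C ((m : ℤ_[2]) - 4) * Polynomial.X - Polynomial.C (2 * n)
  have e : ∀ x : ℤ_[2], F.aeval x
      = ((m : ℤ_[2]) - 2) * x ^ 2 - ((m : ℤ_[2]) - 4) * x - 2 * n := by
    intro x
    simp only [F, Polynomial.coe_aeval_eq_eval, Polynomial.eval_sub, Polynomial.eval_mul,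
      Polynomial.eval_C, Polynomial.eval_X, Polynomial.eval_pow]
  have d : F.derivative.aeval (0 : ℤ_[2]) = -((m : ℤ_[2]) - 4) := by
    simp only [F, Polynomial.coe_aeval_eq_eval, Polynomial.derivative_sub,
      Polynomial.derivative_C_mul, Polynomial.derivative_X_pow, Polynomial.derivative_X,
      Polynomial.derivative_C, Polynomial.eval_sub, Polynomial.eval_mul,
      Polynomial.eval_C, Polynomial.eval_X, Polynomial.eval_pow, Polynomial.eval_one,
      Polynomial.eval_zero]
    ring
  have hn : ‖F.aeval (0 : ℤ_[2])‖ < ‖F.derivative.aeval (0 : ℤ_[2])‖ ^ 2 := by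
    rw [e, d, norm_neg, h1]
    have : ((m : ℤ_[2]) - 2) * 0 ^ 2 - ((m : ℤ_[2]) - 4) * 0 - 2 * n = -(2 * n) := by ring
    rw [this, norm_neg, one_pow]
    exact h2
  obtain ⟨z, hz, -⟩ := hensels_lemma hn
  rw [e] at hz
  exact ⟨z, (sub_eq_zero.mp hz).symm⟩
end

section
/- Let m ≥ 6 be an integer with m ≡ 2 (mod 4). Then for every prime p and every natural number n, there exist x, y, z in the ring ℤ_p of p-adic integers such that ((m−2)x + (m−4)/2)² + ((m−2)y + (m−4)/2)² + ((m−2)z + (m−4)/2)² = 2(m−2)n + 3((m−4)/2)². In other words, every integer 2(m−2)n + 3((m−4)/2)² is represented locally at every prime by the lattice coset associated to P_m. -/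
/-- A quadratic Hensel lemma: `A X² + B X + C` has a root near a simple root mod `p`. -/
theorem quad_hensel (p : ℕ) [Fact p.Prime] (A B C a : ℤ_[p])
    (h1 : ‖A * a ^ 2 + B * a + C‖ < 1) (h2 : ‖2 * A * a + B‖ = 1) :
    ∃ z : ℤ_[p], A * z ^ 2 + B * z + C = 0 := by
  have hd : (Polynomial.aeval a) (Polynomial.derivative
      (Polynomial.C A * Polynomial.X ^ 2 + Polynomial.C B * Polynomial.X + Polynomial.C C))
      = 2 * A * a + B := by
    simp
    ring
  obtain ⟨z, hz, -⟩ := hensels_lemma (p := p) (a := a)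
    (F := Polynomial.C A * Polynomial.X ^ 2 + Polynomial.C B * Polynomial.X + Polynomial.C C)
    (by rw [hd, h2]; simpa using h1)
  exact ⟨z, by simpa using hz⟩

theorem local_representation_even_case
    (m : ℤ) (hm : 6 ≤ m) (h4 : m % 4 = 2) :
    ∀ (p : ℕ) [Fact p.Prime] (n : ℕ), ∃ x y z : ℤ_[p],
      (((m - 2 : ℤ) : ℤ_[p]) * x + (((m - 4) / 2 : ℤ) : ℤ_[p])) ^ 2 +
      (((m - 2 : ℤ) : ℤ_[p]) * y + (((m - 4) / 2 : ℤ) : ℤ_[p])) ^ 2 +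
      (((m - 2 : ℤ) : ℤ_[p]) * z + (((m - 4) / 2 : ℤ) : ℤ_[p])) ^ 2 =
        ((2 * (m - 2) * (n : ℤ) + 3 * ((m - 4) / 2) ^ 2 : ℤ) : ℤ_[p]) := by
  intro p hp n
  obtain ⟨k, hk⟩ : ∃ k : ℤ, m = 4 * k + 2 := ⟨m / 4, by omega⟩
  have e1 : m - 2 = 4 * k := by omega
  have e2 : (m - 4) / 2 = 2 * k - 1 := by omega
  rw [e1, e2]
  have hpr : Prime (p : ℤ) := Nat.prime_iff_prime_int.mp hp.1
  have unit_of : ∀ t : ℤ, ¬ (p : ℤ) ∣ t → ‖(t : ℤ_[p])‖ = 1 := fun t ht =>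
    le_antisymm (PadicInt.norm_le_one _)
      (not_lt.mp fun h => ht (PadicInt.norm_int_lt_one_iff_dvd t |>.mp h))
  by_cases hd : (p : ℤ) ∣ 2 * k
  · obtain ⟨x, hx⟩ := quad_hensel p ((2 * k : ℤ) : ℤ_[p]) ((2 * k - 1 : ℤ) : ℤ_[p])
      ((-n : ℤ) : ℤ_[p]) ((-n : ℤ) : ℤ_[p])
      (by
        have := (PadicInt.norm_int_lt_one_iff_dvd (p := p) (2 * k * (n ^ 2 - n))).mpr
          (hd.mul_right _)
        convert this using 2
        push_cast
        ring)
      (by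
        have := unit_of (2 * k * (-2 * n + 1) - 1) (fun h => by
          have h' := (Int.dvd_sub (hd.mul_right (-2 * (n : ℤ) + 1)) h)
          rw [sub_sub_cancel] at h'
          exact hpr.not_dvd_one h')
        convert this using 2
        push_cast
        ring)
    refine ⟨x, 0, 0, ?_⟩
    push_cast at hx ⊢
    linear_combination (8 * (k : ℤ_[p])) * hx
  · have h2 : ¬ (p : ℤ) ∣ 2 := fun h => hd (h.mul_right _)
    have hM : ¬ (p : ℤ) ∣ 4 * k := fun h => by
      rw [show (4 : ℤ) * k = 2 * (2 * k) by ring] at h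
      exact (hpr.dvd_or_dvd h).elim h2 hd
    obtain ⟨w, hw⟩ := (PadicInt.isUnit_iff.mpr (unit_of _ hM)).exists_right_inv
    obtain ⟨N, hN⟩ : ∃ N : ℤ, N = 2 * (4 * k) * (n : ℤ) + 3 * (2 * k - 1) ^ 2 := ⟨_, rfl⟩
    rw [← hN]
    obtain ⟨a, b, -, -, hab⟩ := Nat.sq_add_sq_zmodEq p (N - 1)
    obtain ⟨x, hx⟩ := quad_hensel p 1 0 (((a : ℤ) ^ 2 + (b : ℤ) ^ 2 - N : ℤ) : ℤ_[p]) 1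
      (by
        have := (PadicInt.norm_int_lt_one_iff_dvd (p := p) _).mpr hab.symm.dvd
        convert this using 2
        push_cast
        ring)
      (by
        have := unit_of 2 h2
        convert this using 2
        push_cast
        ring)
    have key : ∀ u : ℤ_[p], ((4 * k : ℤ) : ℤ_[p]) * (w * (u - ((2 * k - 1 : ℤ) : ℤ_[p])))
        + ((2 * k - 1 : ℤ) : ℤ_[p]) = u := fun u => by
      rw [← mul_assoc, hw]
      ring
    refine ⟨w * (x - ((2 * k - 1 : ℤ) : ℤ_[p])), w * ((a : ℤ_[p]) - ((2 * k - 1 : ℤ) : ℤ_[p])),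
      w * ((b : ℤ_[p]) - ((2 * k - 1 : ℤ) : ℤ_[p])), ?_⟩
    rw [key, key, key]
    push_cast at hx
    linear_combination hx
end
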